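/- arXiv:1203.1393 — 4 statements merged into one kernel-verified Lean document; each statement's English description precedes it below -/
import Mathlib

section
/- If the Riemann zeta function has a zero ξ with 1/2 < Re(ξ) < 1, then there exist a compact set K contained in D := {s ∈ ℂ : 1/2 < Re(s) < 1} with connected complement in ℂ and an ε > 0 such that liminf_{T→∞} (1/T)·μ{τ ∈ [0,T] : sup_{s∈K} |log ζ(s+iτ) − log ζ(s)| < ε} = 0. -/
open MeasureTheory Filter Complex
open scoped ENNReal

/-- The open strip `D = {s : 1/2 < Re s < 1}`. -/
def strip : Set ℂ := {s : ℂ | 1/2 < s.re ∧ s.re < 1}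

/-- Lower density of a set of real numbers:
`liminf_{T→∞} (1/T)·μ(S ∩ [0,T])`. -/
noncomputable def lowerDens (S : Set ℝ) : ℝ :=
  liminf (fun T : ℝ => (volume (S ∩ Set.Icc 0 T)).toReal / T) atTop

/-- `sup_{s ∈ K} |f s|`, valued in `ℝ≥0∞`. -/
noncomputable def supNorm (K : Set ℂ) (f : ℂ → ℂ) : ℝ≥0∞ :=
  ⨆ s ∈ K, (‖f s‖₊ : ℝ≥0∞)

open Topology in
theorem zeta_aux (ξ : ℂ) (hξ : riemannZeta ξ = 0) (u : ℕ → ℂ)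
    (hu : Tendsto u atTop (𝓝 ξ)) (hne : ∀ n, u n ≠ ξ) (τ : ℝ) (h1 : ξ + τ * Complex.I ≠ 1)
    (hx1 : ξ ≠ 1)
    (h : ∀ n, ‖Complex.log (riemannZeta (u n + τ * Complex.I))
          - Complex.log (riemannZeta (u n))‖ ≤ 1) :
    riemannZeta (ξ + τ * Complex.I) = 0 := by
  by_contra hw
  have hfin : (Metric.closedBall ξ 1 ∩ riemannZetaZeros).Finite :=
    (isCompact_closedBall ξ 1).inter_riemannZetaZeros_finite
  have hnz : ∀ᶠ n in atTop, riemannZeta (u n) ≠ 0 := by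
    have hc : ((Metric.closedBall ξ 1 ∩ riemannZetaZeros) \ {ξ})ᶜ ∈ 𝓝 ξ :=
      (hfin.subset Set.sdiff_subset).isClosed.isOpen_compl.mem_nhds (by simp)
    filter_upwards [hu hc, hu (Metric.closedBall_mem_nhds ξ one_pos)] with n h1 h2 h3
    exact h1 ⟨⟨h2, h3⟩, hne n⟩
  have hz : Tendsto (fun n => ‖riemannZeta (u n)‖) atTop (𝓝[>] 0) := by
    refine tendsto_nhdsWithin_iff.2 ⟨?_, ?_⟩
    · have := ((differentiableAt_riemannZeta hx1).continuousAt.tendsto.comp hu).norm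
      simpa [hξ] using this
    · filter_upwards [hnz] with n hn
      simpa using hn
  have hL : Tendsto (fun n => Real.log ‖riemannZeta (u n)‖) atTop atBot :=
    Real.tendsto_log_nhdsGT_zero.comp hz
  have hu' : Tendsto (fun n => u n + τ * Complex.I) atTop (𝓝 (ξ + τ * Complex.I)) :=
    hu.add_const _
  have hM : Tendsto (fun n => Real.log ‖riemannZeta (u n + τ * Complex.I)‖) atTop
      (𝓝 (Real.log ‖riemannZeta (ξ + τ * Complex.I)‖)) :=
    (((differentiableAt_riemannZeta h1).continuousAt.tendsto.comp hu').norm).log (by simpa using hw)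
  have hB : Tendsto (fun n => Real.log ‖riemannZeta (u n + τ * Complex.I)‖) atTop atBot := by
    refine tendsto_atBot_mono (fun n => ?_) (tendsto_atBot_add_const_right _ 1 hL)
    have := (Complex.re_le_norm _).trans (h n)
    rw [Complex.sub_re, Complex.log_re, Complex.log_re] at this
    linarith
  exact not_tendsto_nhds_of_tendsto_atBot hB _ hM

theorem zeta_zero_in_strip_implies_zero_density (ξ : ℂ) (hξ : riemannZeta ξ = 0)
    (hξD : ξ ∈ strip) :
    ∃ K : Set ℂ, IsCompact K ∧ K ⊆ strip ∧ IsConnected Kᶜ ∧ ∃ ε : ℝ, 0 < ε ∧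
      lowerDens {τ : ℝ |
        supNorm K (fun s => Complex.log (riemannZeta (s + τ * Complex.I))
          - Complex.log (riemannZeta s)) < ENNReal.ofReal ε} = 0 := by
  obtain ⟨ha, hb⟩ := hξD
  set u : ℕ → ℂ := fun n => ξ + (((1 - ξ.re) / 2 * (1 / ((n : ℝ) + 1)) : ℝ) : ℂ) with hudef
  have hpos : ∀ n : ℕ, 0 < (1 - ξ.re) / 2 * (1 / ((n : ℝ) + 1)) := fun n => by
    have : 0 < 1 - ξ.re := by linarith
    positivity
  have hu : Tendsto u atTop (nhds ξ) := by
    have h0 := (tendsto_one_div_add_atTop_nhds_zero_nat (𝕜 := ℝ)).const_mul ((1 - ξ.re) / 2)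
    have h1 := ((Complex.continuous_ofReal.tendsto _).comp h0).const_add ξ
    simpa [hudef, Function.comp_def] using h1
  have hne : ∀ n, u n ≠ ξ := fun n h => by
    have h2 : ((((1 - ξ.re) / 2 * (1 / ((n : ℝ) + 1)) : ℝ) : ℂ)) = 0 := by
      simpa only [hudef, add_eq_left] using h
    exact (hpos n).ne' (Complex.ofReal_eq_zero.1 h2)
  refine ⟨insert ξ (Set.range u), hu.isCompact_insert_range, ?_, ?_, 1, one_pos, ?_⟩
  · rintro s (rfl | ⟨n, rfl⟩)
    · exact ⟨ha, hb⟩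
    · have h1 := hpos n
      have h2 : (1 - ξ.re) / 2 * (1 / ((n : ℝ) + 1)) ≤ (1 - ξ.re) / 2 := by
        apply mul_le_of_le_one_right (by linarith)
        rw [div_le_one (by positivity)]
        linarith [Nat.cast_nonneg (α := ℝ) n]
      have h3 : (u n).re = ξ.re + (1 - ξ.re) / 2 * (1 / ((n : ℝ) + 1)) := by
        simp only [hudef, Complex.add_re, Complex.ofReal_re]
      constructor <;> rw [h3] <;> linarith
  · exact ((Set.countable_range u).insert ξ).isConnected_compl_of_one_lt_rank (by simp)
  · have hsub : ∀ T : ℝ, volume ({τ : ℝ |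
        supNorm (insert ξ (Set.range u)) (fun s => Complex.log (riemannZeta (s + τ * Complex.I))
          - Complex.log (riemannZeta s)) < ENNReal.ofReal 1} ∩ Set.Icc 0 T) = 0 := by
      intro T
      have hc : IsCompact ((fun τ : ℝ => ξ + τ * Complex.I) '' Set.Icc 0 T) :=
        isCompact_Icc.image (by fun_prop)
      have hf := hc.inter_riemannZetaZeros_finite
      have hinj : Function.Injective (fun τ : ℝ => ξ + τ * Complex.I) := fun a b hab => by
        simpa using hab
      refine Set.Finite.measure_zero ((hf.preimage hinj.injOn).subset ?_) _
      rintro τ ⟨hτ, hT⟩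
      refine ⟨⟨τ, hT, rfl⟩, ?_⟩
      refine zeta_aux ξ hξ u hu hne τ ?_ ?_ ?_
      · intro h
        have := congrArg Complex.re h
        simp at this
        linarith
      · rintro rfl
        simp at hb
      · intro n
        have h1 : (‖Complex.log (riemannZeta (u n + τ * Complex.I))
          - Complex.log (riemannZeta (u n))‖₊ : ℝ≥0∞) ≤ 1 := by
          refine le_trans ?_ (le_of_lt (by simpa only [ENNReal.ofReal_one, Set.mem_setOf_eq] using hτ))
          exact le_iSup₂ (f := fun s (_ : s ∈ insert ξ (Set.range u)) =>
            (‖Complex.log (riemannZeta (s + τ * Complex.I))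
              - Complex.log (riemannZeta s)‖₊ : ℝ≥0∞)) (u n)
            (Set.mem_insert_of_mem _ ⟨n, rfl⟩)
        exact_mod_cast h1
    unfold lowerDens
    simp only [hsub, ENNReal.toReal_zero, zero_div]
    exact Filter.liminf_const 0
end

section
/- Let a and b be nonzero integers with gcd(a,b) = 1 and |a − b| ≠ 1, and set d := a/b. Then for every compact set K contained in the open strip D := {s ∈ ℂ : 1/2 < Re(s) < 1} and every ε > 0, one has liminf_{T→∞} (1/T)·μ{τ ∈ [0,T] : sup_{s∈K} |ζ(s+iτ) − ζ(s+idτ)| < ε} > 0. -/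
open MeasureTheory Filter Complex
open scoped ENNReal

lemma gauss_ft (T : ℝ) (hT : 0 < T) (x : ℝ) :
    ∫ u : ℝ, (Real.exp (-(u/T)^2) : ℂ) * cexp (-(I * u * x)) =
      ((T * √Real.pi * Real.exp (-(T * x)^2/4) : ℝ) : ℂ) := by
  have hb : 0 < (((1/T^2 : ℝ)) : ℂ).re := by rw [Complex.ofReal_re]; positivity
  have h := fourierIntegral_gaussian hb (-x : ℂ)
  have h2 : ((Real.pi : ℂ) / ((1/T^2 : ℝ) : ℂ)) ^ (1/2 : ℂ) = ((T * √Real.pi : ℝ) : ℂ) := by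
    have : ((Real.pi : ℂ) / ((1/T^2 : ℝ) : ℂ)) = ((Real.pi * T^2 : ℝ) : ℂ) := by
      push_cast; field_simp
    rw [this]
    have h12 : (1/2 : ℂ) = ((1/2 : ℝ) : ℂ) := by push_cast; ring
    rw [h12, ← Complex.ofReal_cpow (by positivity), ← Real.sqrt_eq_rpow,
      Real.sqrt_mul Real.pi_pos.le, Real.sqrt_sq hT.le, mul_comm]
  rw [h2] at h
  rw [Complex.ofReal_mul, Complex.ofReal_exp]
  have hT' : (T:ℂ) ≠ 0 := by exact_mod_cast hT.ne'
  convert h using 2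
  · ext u
    rw [mul_comm, Complex.ofReal_exp]
    congr 2
    · ring
    · push_cast; field_simp
  · congr 1; push_cast; field_simp

lemma gauss_schur {X : Type*} [MeasurableSpace X] (m : Measure X) [SFinite m]
    (f : X → ℝ) (hf : Measurable f) (g : X → ℂ) (hg : Integrable g m)
    (hg2 : Integrable (fun x => ‖g x‖^2) m) (T : ℝ) (hT : 0 < T) (C : ℝ) (hC0 : 0 ≤ C)
    (hC : ∀ x, ∫⁻ y, ENNReal.ofReal (Real.exp (-(T * (f x - f y))^2/4)) ∂m ≤ ENNReal.ofReal C) :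
    ∫ u in (-T)..T, ‖∫ x, g x * cexp (-(I * u * f x)) ∂m‖^2 ≤
      Real.exp 1 * (T * √Real.pi * C * ∫ x, ‖g x‖^2 ∂m) := by
  set h : ℝ → ℂ := fun u => ∫ x, g x * cexp (-(I * u * f x)) ∂m with hh
  have hcont : Continuous h := by
    refine continuous_of_dominated (bound := fun x => ‖g x‖) ?_ ?_ hg.norm ?_
    · intro u
      exact hg.aestronglyMeasurable.mul (by fun_prop)
    · intro u
      refine Eventually.of_forall fun x => ?_
      rw [norm_mul, show -(I * u * f x) = ((-(u * f x) : ℝ) : ℂ) * I by push_cast; ring,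
        Complex.norm_exp_ofReal_mul_I, mul_one]
    · refine Eventually.of_forall fun x => ?_
      fun_prop
  have hbound : ∀ u, ‖h u‖ ≤ ∫ x, ‖g x‖ ∂m := by
    intro u
    refine (norm_integral_le_integral_norm _).trans (le_of_eq ?_)
    congr 1; ext x
    rw [norm_mul, show -(I * u * f x) = ((-(u * f x) : ℝ) : ℂ) * I by push_cast; ring,
        Complex.norm_exp_ofReal_mul_I, mul_one]
  have hgi : Integrable (fun u : ℝ => Real.exp (-(u/T)^2)) := by
    have := integrable_exp_neg_mul_sq (b := 1/T^2) (by positivity)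
    convert this using 3
    field_simp
  have hint : Integrable (fun u : ℝ => Real.exp (-(u/T)^2) * ‖h u‖^2) := by
    refine hgi.mul_bdd (c := (∫ x, ‖g x‖ ∂m)^2) (by fun_prop) ?_
    refine Eventually.of_forall fun u => ?_
    rw [Real.norm_of_nonneg (by positivity)]
    exact pow_le_pow_left₀ (norm_nonneg _) (hbound u) 2
  -- step 1: Gaussian majorant
  have step1 : ∫ u in (-T)..T, ‖h u‖^2 ≤ Real.exp 1 * ∫ u : ℝ, Real.exp (-(u/T)^2) * ‖h u‖^2 := by
    rw [intervalIntegral.integral_of_le (by linarith), ← integral_const_mul]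
    calc ∫ u in Set.Ioc (-T) T, ‖h u‖^2 
        ≤ ∫ u in Set.Ioc (-T) T, Real.exp 1 * (Real.exp (-(u/T)^2) * ‖h u‖^2) := by
          refine setIntegral_mono_on ?_ (hint.const_mul _).integrableOn measurableSet_Ioc ?_
          · exact ((hcont.norm.pow 2).integrableOn_Icc).mono_set Set.Ioc_subset_Icc_self
          · intro u hu
            rw [← mul_assoc, ← Real.exp_add]
            have : (u/T)^2 ≤ 1 := by
              rw [sq_le_one_iff_abs_le_one, abs_div, abs_of_pos hT, div_le_one hT, abs_le]
              exact ⟨hu.1.le, hu.2⟩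
            have h1 : 1 ≤ Real.exp (1 + -(u/T)^2) := Real.one_le_exp (by linarith)
            nlinarith [sq_nonneg ‖h u‖]
      _ ≤ _ := by
          refine setIntegral_le_integral (hint.const_mul _) ?_
          exact Eventually.of_forall fun u => by positivity
  refine step1.trans ?_
  refine mul_le_mul_of_nonneg_left ?_ (Real.exp_pos _).le
  -- step 2: expand
  have step2 : ((∫ u : ℝ, Real.exp (-(u/T)^2) * ‖h u‖^2 : ℝ) : ℂ) =
      ∫ z : X × X, (g z.1 * (starRingEnd ℂ) (g z.2)) *
        ((T * √Real.pi * Real.exp (-(T * (f z.1 - f z.2))^2/4) : ℝ) : ℂ) ∂(m.prod m) := by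
    rw [← integral_complex_ofReal]
    have e1 : ∀ u : ℝ, ((Real.exp (-(u/T)^2) * ‖h u‖^2 : ℝ) : ℂ) =
        ∫ z : X × X, (Real.exp (-(u/T)^2) : ℂ) * ((g z.1 * (starRingEnd ℂ) (g z.2)) * cexp (-(I * u * ((f z.1 - f z.2 : ℝ) : ℂ)))) ∂(m.prod m) := by
      intro u
      rw [integral_const_mul]
      push_cast
      congr 1
      rw [← Complex.mul_conj', hh]
      simp only
      rw [← integral_conj, ← integral_prod_mul]
      congr 1; ext z
      have : (starRingEnd ℂ) (cexp (-(I * u * f z.2))) = cexp (I * u * f z.2) := by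
        rw [← Complex.exp_conj]; simp
      rw [map_mul, this, show -(I * u * (f z.1 - f z.2 : ℂ)) = -(I * u * f z.1) + I * u * f z.2 by ring, Complex.exp_add]
      ring
    simp_rw [e1]
    rw [integral_integral_swap]
    · congr 1; ext z
      have : ∀ u : ℝ, (Real.exp (-(u/T)^2) : ℂ) * ((g z.1 * (starRingEnd ℂ) (g z.2)) * cexp (-(I * u * ((f z.1 - f z.2 : ℝ) : ℂ))))
        = (g z.1 * (starRingEnd ℂ) (g z.2)) * ((Real.exp (-(u/T)^2) : ℂ) * cexp (-(I * u * ((f z.1 - f z.2 : ℝ) : ℂ)))) := fun u => by ring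
      simp_rw [this]
      rw [integral_const_mul, gauss_ft T hT]
    · have i1 : Integrable (fun z : X × X => g z.1 * (starRingEnd ℂ) (g z.2)) (m.prod m) :=
        hg.mul_prod (by simpa using (Complex.conjLIE.toContinuousLinearEquiv.toContinuousLinearMap.integrable_comp hg))
      have i2 : Integrable (fun p : ℝ × (X × X) => ((Real.exp (-(p.1/T)^2) : ℝ) : ℂ) * (g p.2.1 * (starRingEnd ℂ) (g p.2.2))) (volume.prod (m.prod m)) :=
        hgi.ofReal.mul_prod i1
      have i3 := i2.mul_bdd (g := fun p : ℝ × (X × X) => cexp (-(I * p.1 * ((f p.2.1 - f p.2.2 : ℝ) : ℂ)))) (c := 1)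
        (by 
          have : Measurable (fun p : ℝ × (X × X) => cexp (-(I * p.1 * ((f p.2.1 - f p.2.2 : ℝ) : ℂ)))) := by fun_prop
          exact this.aestronglyMeasurable) (Eventually.of_forall fun p => by
            rw [show -(I * p.1 * ((f p.2.1 - f p.2.2 : ℝ) : ℂ)) = ((-(p.1 * (f p.2.1 - f p.2.2)) : ℝ) : ℂ) * I by push_cast; ring,
        Complex.norm_exp_ofReal_mul_I])
      refine i3.congr (Eventually.of_forall fun p => ?_)
      simp [Function.uncurry, mul_assoc]
  have pos : 0 ≤ ∫ u : ℝ, Real.exp (-(u/T)^2) * ‖h u‖^2 := integral_nonneg fun u => by positivity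
  have step3 : ENNReal.ofReal (∫ u : ℝ, Real.exp (-(u/T)^2) * ‖h u‖^2) ≤
      ENNReal.ofReal (T * √Real.pi * C * ∫ x, ‖g x‖^2 ∂m) := by
    have : (∫ u : ℝ, Real.exp (-(u/T)^2) * ‖h u‖^2) = ‖((∫ u : ℝ, Real.exp (-(u/T)^2) * ‖h u‖^2 : ℝ) : ℂ)‖ := by
      rw [Complex.norm_real, Real.norm_of_nonneg pos]
    rw [this, step2, ofReal_norm]
    refine (enorm_integral_le_lintegral_enorm _).trans ?_
    set k : X → X → ℝ≥0∞ := fun x y => ENNReal.ofReal (Real.exp (-(T * (f x - f y))^2/4)) with hk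
    have hkm : Measurable (fun z : X × X => k z.1 z.2) := by
      simp only [hk]; fun_prop
    have hksymm : ∀ x y, k x y = k y x := by
      intro x y; simp only [hk]; congr 3; ring
    set A : X → ℝ≥0∞ := fun x => ENNReal.ofReal (‖g x‖^2/2) with hA
    have hAm : AEMeasurable A m := by
      simp only [hA]; exact ((hg2.aemeasurable).div_const 2).ennreal_ofReal
    have bd : ∀ z : X × X, ‖g z.1 * (starRingEnd ℂ) (g z.2) * ((T * √Real.pi * Real.exp (-(T * (f z.1 - f z.2))^2/4) : ℝ) : ℂ)‖ₑ
        ≤ ENNReal.ofReal (T * √Real.pi) * (A z.1 * k z.1 z.2 + A z.2 * k z.1 z.2) := by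
      intro z
      rw [← ofReal_norm]
      simp only [hA, hk]
      rw [← ENNReal.ofReal_mul (by positivity), ← ENNReal.ofReal_mul (by positivity), ← ENNReal.ofReal_add (by positivity) (by positivity),
        ← ENNReal.ofReal_mul (by positivity)]
      refine ENNReal.ofReal_le_ofReal ?_
      rw [norm_mul, norm_mul, RCLike.norm_conj, Complex.norm_real, Real.norm_of_nonneg (by positivity)]
      have h1 : ‖g z.1‖ * ‖g z.2‖ ≤ ‖g z.1‖^2/2 + ‖g z.2‖^2/2 := by nlinarith [sq_nonneg (‖g z.1‖ - ‖g z.2‖)]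
      have h2 : 0 ≤ T * √Real.pi * Real.exp (-(T * (f z.1 - f z.2))^2/4) := by positivity
      nlinarith [mul_le_mul_of_nonneg_right h1 h2]
    have m1 : AEMeasurable (fun z : X × X => A z.1 * k z.1 z.2) (m.prod m) := hAm.comp_fst.mul hkm.aemeasurable
    have m2 : AEMeasurable (fun z : X × X => A z.2 * k z.1 z.2) (m.prod m) := hAm.comp_snd.mul hkm.aemeasurable
    have B1 : ∫⁻ z : X × X, A z.1 * k z.1 z.2 ∂(m.prod m) ≤ ENNReal.ofReal C * ∫⁻ x, A x ∂m := by
      rw [lintegral_prod _ m1, ← lintegral_const_mul'' _ hAm]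
      refine lintegral_mono fun x => ?_
      simp only
      rw [lintegral_const_mul _ (by fun_prop), mul_comm]
      gcongr
      exact hC x
    have B2 : ∫⁻ z : X × X, A z.2 * k z.1 z.2 ∂(m.prod m) ≤ ENNReal.ofReal C * ∫⁻ x, A x ∂m := by
      rw [lintegral_prod_symm _ m2, ← lintegral_const_mul'' _ hAm]
      refine lintegral_mono fun y => ?_
      simp only
      rw [lintegral_const_mul _ (by fun_prop), mul_comm]
      gcongr
      simp_rw [hksymm _ y]
      exact hC y
    calc _ ≤ ∫⁻ z : X × X, ENNReal.ofReal (T * √Real.pi) * (A z.1 * k z.1 z.2 + A z.2 * k z.1 z.2) ∂(m.prod m) := lintegral_mono bd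
      _ = ENNReal.ofReal (T * √Real.pi) * (∫⁻ z : X × X, A z.1 * k z.1 z.2 ∂(m.prod m) + ∫⁻ z : X × X, A z.2 * k z.1 z.2 ∂(m.prod m)) := by
          rw [lintegral_const_mul' _ _ ENNReal.ofReal_ne_top, lintegral_add_left' m1]
      _ ≤ ENNReal.ofReal (T * √Real.pi) * (ENNReal.ofReal C * ∫⁻ x, A x ∂m + ENNReal.ofReal C * ∫⁻ x, A x ∂m) := by gcongr
      _ = _ := by
          have : ∫⁻ x, A x ∂m = ENNReal.ofReal (∫ x, ‖g x‖^2/2 ∂m) := by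
            rw [ofReal_integral_eq_lintegral_ofReal (hg2.div_const 2) (Eventually.of_forall fun x => by positivity)]
          have p : 0 ≤ ∫ x, ‖g x‖^2/2 ∂m := integral_nonneg fun x => by positivity
          rw [this, ← ENNReal.ofReal_mul hC0, ← ENNReal.ofReal_add (by positivity) (by positivity), ← ENNReal.ofReal_mul (by positivity)]
          congr 1
          rw [integral_div]; ring
  have hnn : 0 ≤ T * √Real.pi * C * ∫ x, ‖g x‖^2 ∂m := by
    have : 0 ≤ ∫ x, ‖g x‖^2 ∂m := integral_nonneg fun x => by positivity
    positivity
  exact (ENNReal.ofReal_le_ofReal_iff hnn).1 step3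


/-- truncated fractional part -/
noncomputable def fr (N : ℝ) : ℝ → ℂ := (Set.Ioi N).indicator (fun x => ((Int.fract x : ℝ) : ℂ))

lemma fr_norm_le (N x : ℝ) : ‖fr N x‖ ≤ 1 := by
  unfold fr Set.indicator
  split_ifs
  · rw [Complex.norm_real, Real.norm_of_nonneg (Int.fract_nonneg x)]
    exact (Int.fract_lt_one x).le
  · simp

lemma fr_meas (N : ℝ) : Measurable (fr N) := by
  unfold fr
  exact (Complex.measurable_ofReal.comp measurable_fract).indicator measurableSet_Ioi

lemma fr_locInt (N : ℝ) : LocallyIntegrable (fr N) := by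
  have : LocallyIntegrable (fun _ : ℝ => (1:ℝ)) := locallyIntegrable_const 1
  exact this.mono (fr_meas N).aestronglyMeasurable (Eventually.of_forall fun x => by simpa using fr_norm_le N x)

lemma fr_top (N : ℝ) : fr N =O[atTop] (fun x : ℝ => x ^ (-(0:ℝ))) := by
  simp only [neg_zero, Real.rpow_zero]
  refine Asymptotics.IsBigO.of_bound 1 (Eventually.of_forall fun x => by simpa using fr_norm_le N x)

lemma fr_bot (N : ℝ) (hN : 0 < N) (b : ℝ) : fr N =O[nhdsWithin 0 (Set.Ioi 0)] (fun x : ℝ => x ^ (-b)) := by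
  refine Asymptotics.IsBigO.of_bound 1 ?_
  have : ∀ᶠ x : ℝ in nhdsWithin 0 (Set.Ioi 0), x < N :=
    nhdsWithin_le_nhds (eventually_lt_nhds hN)
  filter_upwards [this] with x hx
  have : fr N x = 0 := by
    unfold fr; rw [Set.indicator_of_notMem]; simp [hx.le]
  rw [this]; simp

lemma fr_mellinConv (N : ℝ) (hN : 0 < N) (s : ℂ) (hs : 0 < s.re) : MellinConvergent (fr N) (-s) :=
  mellinConvergent_of_isBigO_rpow (a := 0) (b := -s.re - 1) ((fr_locInt N).locallyIntegrableOn _) (fr_top N) (by simpa)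
    (fr_bot N hN _) (by simp)

lemma fr_mellinDiff (N : ℝ) (hN : 0 < N) (s : ℂ) (hs : 0 < s.re) :
    DifferentiableAt ℂ (fun s => mellin (fr N) (-s)) s := by
  have := mellin_differentiableAt_of_isBigO_rpow (a := 0) (b := -s.re - 1) (s := -s) ((fr_locInt N).locallyIntegrableOn _) (fr_top N) (by simpa)
    (fr_bot N hN _) (by simp)
  exact this.comp s differentiableAt_id.neg

lemma fr_mellin_eq (N : ℝ) (hN : 0 < N) (s : ℂ) :
    mellin (fr N) (-s) = ∫ t in Set.Ioi N, ((Int.fract t : ℝ) : ℂ) * (t:ℂ) ^ (-(s+1)) := by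
  unfold mellin
  have : ∀ t : ℝ, (t:ℂ) ^ (-s - 1) • fr N t = (Set.Ioi N).indicator (fun t : ℝ => ((Int.fract t : ℝ) : ℂ) * (t:ℂ) ^ (-(s+1))) t := by
    intro t
    unfold fr Set.indicator
    split_ifs
    · rw [smul_eq_mul, mul_comm]; congr 2; ring
    · simp
  simp_rw [this]
  rw [setIntegral_indicator measurableSet_Ioi]
  congr 2
  ext x; simp only [Set.mem_inter_iff, Set.mem_Ioi]
  constructor
  · exact fun h => h.2
  · exact fun h => ⟨hN.trans h, h⟩

lemma fr_intOn (N : ℝ) (hN : 0 < N) (s : ℂ) (hs : 0 < s.re) :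
    IntegrableOn (fun t : ℝ => ((Int.fract t : ℝ) : ℂ) * (t:ℂ) ^ (-(s+1))) (Set.Ioi N) := by
  have := (fr_mellinConv N hN s hs).mono_set (Set.Ioi_subset_Ioi hN.le)
  refine this.congr_fun ?_ measurableSet_Ioi
  intro t ht
  simp only [fr, Set.indicator_of_mem ht]
  rw [smul_eq_mul, mul_comm]; congr 2; ring

lemma zeta_re_gt_one (s : ℂ) (hs : 1 < s.re) :
    riemannZeta s = 1 + 1/(s-1) - s * mellin (fr 1) (-s) := by
  have h1 := LSeries_eq_mul_integral (fun _ => (1:ℂ)) (r := 1) (by norm_num) hs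
    ((LSeriesSummable_one_iff (s := s)).2 hs) (by
      refine Asymptotics.IsBigO.of_bound 1 (Eventually.of_forall fun n => ?_)
      simp)
  have h2 : LSeries (fun _ => (1:ℂ)) s = riemannZeta s := LSeries_one_eq_riemannZeta hs
  rw [h2] at h1
  rw [h1, fr_mellin_eq 1 one_pos]
  have hs1 : s - 1 ≠ 0 := by
    intro h; have := congrArg re h; simp at this; linarith
  have i1 : IntegrableOn (fun t : ℝ => (t:ℂ) ^ (-s)) (Set.Ioi 1) :=
    integrableOn_Ioi_cpow_of_lt (by simpa using hs) one_pos
  have e : ∫ t in Set.Ioi (1:ℝ), (t:ℂ) ^ (-s) = 1/(s-1) := by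
    rw [integral_Ioi_cpow_of_lt (by simpa using hs) one_pos]
    simp
    rw [show -s + 1 = -(s-1) by ring, neg_div_neg_eq, one_div]
  have key : ∫ t in Set.Ioi (1:ℝ), (∑ k ∈ Finset.Icc 1 ⌊t⌋₊, (1:ℂ)) * (t:ℂ) ^ (-(s+1)) =
      1/(s-1) - ∫ t in Set.Ioi (1:ℝ), ((Int.fract t : ℝ) : ℂ) * (t:ℂ) ^ (-(s+1)) := by
    rw [← e, ← integral_sub i1 (fr_intOn 1 one_pos s (by linarith))]
    refine setIntegral_congr_fun measurableSet_Ioi ?_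
    intro t ht
    have ht0 : (0:ℝ) < t := one_pos.trans ht
    have h3 : (t:ℂ) ^ (-s) = (t:ℂ) * (t:ℂ) ^ (-(s+1)) := by
      have : (t:ℂ) ≠ 0 := by exact_mod_cast ht0.ne'
      rw [show -s = 1 + -(s+1) by ring, Complex.cpow_add _ _ this, Complex.cpow_one]
    simp only [h3]
    rw [← sub_mul]
    congr 1
    have h4 : Int.fract t = t - (⌊t⌋₊ : ℝ) := by
      rw [Int.fract, natCast_floor_eq_intCast_floor ht0.le]
    rw [h4]; simp
  rw [key]
  field_simp
  ring

lemma zeta_strip (s : ℂ) (hs : 0 < s.re) (hs1 : s.re < 1) :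
    riemannZeta s = 1 + 1/(s-1) - s * mellin (fr 1) (-s) := by
  set A : Set ℂ := {s | 1 < s.re}
  set B : Set ℂ := {s | 0 < s.re} ∩ {s | 0 < s.im}
  set C : Set ℂ := {s | 0 < s.re} ∩ {s | s.re < 1}
  set V := (A ∪ B) ∪ C
  have cA : Convex ℝ A := convex_halfSpace_re_gt 1
  have cB : Convex ℝ B := (convex_halfSpace_re_gt 0).inter (convex_halfSpace_im_gt 0)
  have cC : Convex ℝ C := (convex_halfSpace_re_gt 0).inter (convex_halfSpace_re_lt 1)
  have oA : IsOpen A := isOpen_lt continuous_const continuous_re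
  have oB : IsOpen B := (isOpen_lt continuous_const continuous_re).inter (isOpen_lt continuous_const continuous_im)
  have oC : IsOpen C := (isOpen_lt continuous_const continuous_re).inter (isOpen_lt continuous_re continuous_const)
  have oV : IsOpen V := (oA.union oB).union oC
  have pV : IsPreconnected V := by
    refine IsPreconnected.union (⟨1/2, 1⟩ : ℂ) (Or.inr ?_) ?_ (IsPreconnected.union (⟨2, 1⟩ : ℂ) ?_ ?_ cA.isPreconnected cB.isPreconnected) cC.isPreconnected
    · constructor <;> simp
    · constructor <;> simp <;> norm_num
    · simp [A]
    · constructor <;> simp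
  have hV : ∀ z ∈ V, 0 < z.re ∧ z ≠ 1 := by
    rintro z ((h | h) | h)
    · exact ⟨by simp [A] at h; linarith, by rintro rfl; simp [A] at h⟩
    · exact ⟨h.1, by rintro rfl; simp [B] at h⟩
    · exact ⟨h.1, by rintro rfl; simp [C] at h⟩
  have d1 : DifferentiableOn ℂ riemannZeta V := fun z hz =>
    (differentiableAt_riemannZeta (hV z hz).2).differentiableWithinAt
  have d2 : DifferentiableOn ℂ (fun s => 1 + 1/(s-1) - s * mellin (fr 1) (-s)) V := by
    intro z hz
    refine DifferentiableAt.differentiableWithinAt ?_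
    have := fr_mellinDiff 1 one_pos z (hV z hz).1
    have hz1 : z - 1 ≠ 0 := sub_ne_zero.2 (hV z hz).2
    refine DifferentiableAt.sub ?_ (differentiableAt_id.mul this)
    fun_prop (disch := assumption)
  have h2 : (2:ℂ) ∈ V := Or.inl (Or.inl (by simp [A]))
  have := (d1.analyticOnNhd oV).eqOn_of_preconnected_of_eventuallyEq (d2.analyticOnNhd oV) pV h2 (by
    filter_upwards [oA.mem_nhds (show (2:ℂ) ∈ A by simp [A])] with z hz
    exact zeta_re_gt_one z hz)
  exact this (Or.inr ⟨hs, hs1⟩)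

lemma zeta_trunc (s : ℂ) (hs : 0 < s.re) (hs1 : s.re < 1) (N : ℕ) (hN : 1 ≤ N) :
    riemannZeta s = ∑ n ∈ Finset.Icc 1 N, (n:ℂ)^(-s) + (N:ℂ)^(1-s)/(s-1) - s * mellin (fr N) (-s) := by
  have hsm : s - 1 ≠ 0 := by
    intro h; have := congrArg re h; simp at this; linarith
  have hs0 : s ≠ 0 := by rintro rfl; simp at hs
  induction N, hN using Nat.le_induction with
  | base => rw [zeta_strip s hs hs1]; simp
  | succ N hN ih =>
    rw [ih, Finset.sum_Icc_succ_top (by omega)]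
    have hN0 : (0:ℝ) < N := by exact_mod_cast hN
    have split : mellin (fr N) (-s) = (∫ t in (N:ℝ)..((N+1:ℕ):ℝ), ((t - N : ℝ) : ℂ) * (t:ℂ) ^ (-(s+1))) + mellin (fr ((N+1:ℕ):ℝ)) (-s) := by
      rw [fr_mellin_eq _ hN0, fr_mellin_eq _ (by positivity)]
      have hle : (N:ℝ) ≤ ((N+1:ℕ):ℝ) := by push_cast; linarith
      rw [← Set.Ioc_union_Ioi_eq_Ioi hle, setIntegral_union (Set.Ioc_disjoint_Ioi le_rfl) measurableSet_Ioi
        ((fr_intOn N hN0 s hs).mono_set Set.Ioc_subset_Ioi_self) (fr_intOn _ (by positivity) s hs)]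
      rw [intervalIntegral.integral_of_le hle]
      congr 1
      rw [integral_Ioc_eq_integral_Ioo, integral_Ioc_eq_integral_Ioo]
      refine setIntegral_congr_fun measurableSet_Ioo ?_
      intro t ht
      have : Int.fract t = t - N := by
        rw [Int.fract_eq_iff]
        refine ⟨by linarith [ht.1], by have := ht.2; push_cast at this; linarith, N, by simp⟩
      simp only [this]
    have i0 : (0:ℝ) ∉ Set.uIcc (N:ℝ) ((N+1:ℕ):ℝ) := by
      rw [Set.uIcc_of_le (by push_cast; linarith)]; simp [hN0]
      intro h; omega
    have comp : ∫ t in (N:ℝ)..((N+1:ℕ):ℝ), ((t - N : ℝ) : ℂ) * (t:ℂ) ^ (-(s+1)) =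
        (((N+1:ℕ):ℂ)^(1-s) - (N:ℂ)^(1-s))/(1-s) - N * ((((N+1:ℕ):ℂ)^(-s) - (N:ℂ)^(-s))/(-s)) := by
      have e1 : ∀ t ∈ Set.uIcc (N:ℝ) ((N+1:ℕ):ℝ), ((t - N : ℝ) : ℂ) * (t:ℂ) ^ (-(s+1)) = (t:ℂ)^(-s) - N * (t:ℂ)^(-(s+1)) := by
        intro t ht
        have : (t:ℂ) ≠ 0 := by
          have : t ≠ 0 := by rintro rfl; exact i0 ht
          exact_mod_cast this
        rw [show -s = 1 + -(s+1) by ring, Complex.cpow_add _ _ this, Complex.cpow_one]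
        push_cast; ring
      rw [intervalIntegral.integral_congr e1, intervalIntegral.integral_sub, intervalIntegral.integral_const_mul,
        integral_cpow, integral_cpow]
      · simp only [ofReal_natCast]
        rw [show -s + 1 = 1 - s by ring, show -(s+1)+1 = -s by ring]
      · right; refine ⟨?_, i0⟩; intro h; apply hs0; linear_combination -h
      · right; refine ⟨?_, i0⟩; intro h; apply hsm; linear_combination -h
      · exact intervalIntegral.intervalIntegrable_cpow (Or.inr i0)
      · exact (intervalIntegral.intervalIntegrable_cpow (Or.inr i0)).const_mul _
    rw [split, comp]
    have hNc : (N:ℂ) ≠ 0 := by exact_mod_cast hN0.ne'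
    have hNc1 : ((N+1:ℕ):ℂ) ≠ 0 := by exact_mod_cast (Nat.succ_ne_zero N)
    rw [Complex.cpow_sub _ _ hNc, Complex.cpow_sub _ _ hNc1, Complex.cpow_neg, Complex.cpow_neg, Complex.cpow_one, Complex.cpow_one]
    have q1 : (N:ℂ)^s ≠ 0 := by simp [Complex.cpow_eq_zero_iff, hNc]
    have q2 : ((N+1:ℕ):ℂ)^s ≠ 0 := by rw [Ne, Complex.cpow_eq_zero_iff]; tauto
    have hsm' : 1 - s ≠ 0 := by rw [← neg_sub]; exact neg_ne_zero.2 hsm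
    rw [show s - 1 = -(1 - s) by ring]
    generalize ((N+1:ℕ):ℂ)^s = y at *
    push_cast
    field_simp
    ring


lemma mellin_ms (N : ℕ) (hN : 1 ≤ N) (σ T : ℝ) (hσ : 1/2 ≤ σ) (hT : 0 < T) :
    ∫ u in (-T)..T, ‖mellin (fr N) (-(σ + u * I))‖^2 ≤ Real.exp 1 * (2 * Real.pi) * (N:ℝ)^(-2*σ) := by
  have hN0 : (0:ℝ) < N := by exact_mod_cast hN
  set G : ℝ → ℂ := fun v => (Real.exp (σ * v) : ℂ) * fr N (Real.exp (-v)) with hG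
  have hGz : ∀ v, -Real.log N < v → G v = 0 := by
    intro v hv
    have : fr N (Real.exp (-v)) = 0 := by
      unfold fr; rw [Set.indicator_of_notMem]
      simp only [Set.mem_Ioi, not_lt]
      rw [← Real.exp_log hN0]; exact Real.exp_le_exp.2 (by linarith)
    simp [hG, this]
  have hGn : ∀ v, ‖G v‖ ≤ (Set.Iic (-Real.log N)).indicator (fun v => Real.exp (σ*v)) v := by
    intro v
    by_cases hv : v ≤ -Real.log N
    · rw [Set.indicator_of_mem (by simpa using hv), hG]
      simp only
      rw [norm_mul, Complex.norm_real, Real.norm_of_nonneg (Real.exp_pos _).le]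
      exact mul_le_of_le_one_right (Real.exp_pos _).le (fr_norm_le _ _)
    · rw [Set.indicator_of_notMem (by simpa using hv), hGz v (not_le.1 hv)]; simp
  have hGm : Measurable G := by
    have := fr_meas N
    simp only [hG]; fun_prop
  have hGi : Integrable G := by
    refine Integrable.mono' ((integrable_indicator_iff measurableSet_Iic).2 (integrableOn_exp_mul_Iic (by linarith : 0 < σ) _)) hGm.aestronglyMeasurable (Eventually.of_forall hGn)
  have hG2n : ∀ v, ‖G v‖^2 ≤ (Set.Iic (-Real.log N)).indicator (fun v => Real.exp ((2*σ)*v)) v := by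
    intro v
    refine (pow_le_pow_left₀ (norm_nonneg _) (hGn v) 2).trans (le_of_eq ?_)
    unfold Set.indicator
    split_ifs
    · rw [← Real.exp_nat_mul]; congr 1; push_cast; ring
    · simp
  have hi2 : Integrable ((Set.Iic (-Real.log N)).indicator (fun v => Real.exp ((2*σ)*v))) :=
    (integrable_indicator_iff measurableSet_Iic).2 (integrableOn_exp_mul_Iic (by linarith : 0 < 2*σ) _)
  have hG2 : Integrable (fun v => ‖G v‖^2) := by
    refine Integrable.mono' hi2 (by fun_prop) (Eventually.of_forall fun v => ?_)
    rw [Real.norm_of_nonneg (by positivity)]; exact hG2n v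
  have hGI : ∫ v, ‖G v‖^2 ≤ (N:ℝ)^(-2*σ) := by
    refine (integral_mono hG2 hi2 hG2n).trans ?_
    rw [integral_indicator measurableSet_Iic, integral_exp_mul_Iic (by linarith)]
    have : Real.exp (2*σ*(-Real.log N)) = (N:ℝ)^(-2*σ) := by
      rw [Real.rpow_def_of_pos hN0]; congr 1; ring
    rw [this]
    exact div_le_self (by positivity) (by linarith)
  have key := gauss_schur volume (fun v : ℝ => -v) (by fun_prop) G hGi hG2 T hT (2 * √Real.pi / T) (by positivity) (by
    intro x
    rw [← ofReal_integral_eq_lintegral_ofReal]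
    · refine ENNReal.ofReal_le_ofReal (le_of_eq ?_)
      have e := integral_gaussian (T^2/4)
      have : ∀ y, Real.exp (-(T * (-x - -y))^2/4) = (fun z => Real.exp (-(T^2/4) * z^2)) (y - x) := by
        intro y; simp only; congr 1; ring
      simp_rw [this]
      rw [integral_sub_right_eq_self (fun z => Real.exp (-(T^2/4) * z^2)), e]
      rw [show Real.pi / (T^2/4) = Real.pi * (2/T)^2 by field_simp; ring, Real.sqrt_mul Real.pi_pos.le, Real.sqrt_sq (by positivity)]
      ring
    · have := (integrable_exp_neg_mul_sq (b := T^2/4) (by positivity)).comp_sub_right x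
      refine this.congr (Eventually.of_forall fun y => ?_)
      simp only; congr 1; ring
    · exact Eventually.of_forall fun y => (Real.exp_pos _).le)
  have e : ∀ u : ℝ, mellin (fr N) (-(σ + u * I)) = ∫ x, G x * cexp (-(I * u * ((-x : ℝ) : ℂ))) := by
    intro u
    rw [mellin_eq_fourier, Real.fourier_eq']
    congr 1; ext v
    have h1 : (-(σ + u * I) : ℂ).re = -σ := by simp
    have h2 : (-(σ + u * I) : ℂ).im = -u := by simp
    rw [h1, h2, smul_eq_mul, hG]
    simp only [RCLike.inner_apply, conj_trivial, Complex.real_smul]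
    rw [mul_comm]
    congr 2
    · simp
    · push_cast; field_simp
  simp_rw [e]
  refine key.trans ?_
  rw [mul_assoc (Real.exp 1)]
  refine mul_le_mul_of_nonneg_left ?_ (Real.exp_pos _).le
  rw [show T * √Real.pi * (2 * √Real.pi / T) = 2 * Real.pi by
    rw [show T * √Real.pi * (2 * √Real.pi / T) = 2 * (√Real.pi * √Real.pi) by field_simp, Real.mul_self_sqrt Real.pi_pos.le]]
  exact mul_le_mul_of_nonneg_left hGI (by positivity)

lemma cpow_split (n : ℕ) (hn : 1 ≤ n) (σ u : ℝ) :
    (n:ℂ)^(-(σ + u * I)) = (((n:ℝ)^(-σ) : ℝ) : ℂ) * cexp (-(I * u * (Real.log n : ℝ))) := by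
  have hn0 : (n:ℂ) ≠ 0 := by exact_mod_cast (by omega : n ≠ 0)
  rw [show -(σ + u * I) = -(σ:ℂ) + -(I * u) by ring, Complex.cpow_add _ _ hn0]
  congr 1
  · rw [Complex.ofReal_cpow (by positivity)]; simp
  · rw [Complex.cpow_def_of_ne_zero hn0, Complex.natCast_log]; congr 1; ring

lemma poly_ms (M N : ℕ) (σ T : ℝ) (hT : 0 < T) :
    ∫ u in (-T)..T, ‖∑ n ∈ Finset.Ioc M N, (n:ℂ)^(-(σ + u * I))‖^2 ≤
      Real.exp 1 * (T * √Real.pi * (1 + N * Real.exp (-(T/N)^2/4)) * ∑ n ∈ Finset.Ioc M N, (n:ℝ)^(-2*σ)) := by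
  letI : MeasurableSpace (Finset.Ioc M N) := ⊤
  haveI : MeasurableSingletonClass (Finset.Ioc M N) := ⟨fun _ => trivial⟩
  have hx : ∀ x : Finset.Ioc M N, 1 ≤ (x:ℕ) ∧ (x:ℕ) ≤ N := fun x => by
    have := Finset.mem_Ioc.1 x.2; omega
  have key := gauss_schur (Measure.count : Measure (Finset.Ioc M N)) (fun n => Real.log (n:ℕ)) (measurable_from_top)
    (fun n => ((((n:ℕ):ℝ)^(-σ) : ℝ) : ℂ)) (Integrable.of_finite) (Integrable.of_finite) T hT (1 + N * Real.exp (-(T/N)^2/4)) (by positivity) (by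
      intro x
      rw [lintegral_count, tsum_fintype]
      rw [← ENNReal.ofReal_sum_of_nonneg (fun _ _ => (Real.exp_pos _).le)]
      refine ENNReal.ofReal_le_ofReal ?_
      rw [← Finset.add_sum_erase _ _ (Finset.mem_univ x)]
      refine add_le_add (by simp) ?_
      have hb : ∀ y ∈ Finset.univ.erase x, Real.exp (-(T * (Real.log (x:ℕ) - Real.log (y:ℕ)))^2/4) ≤ Real.exp (-(T/N)^2/4) := by
        intro y hy
        have hne : (y:ℕ) ≠ x := fun h => Finset.ne_of_mem_erase hy (Subtype.ext h)
        refine Real.exp_le_exp.2 ?_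
        have hl : (1/(N:ℝ))^2 ≤ (Real.log (x:ℕ) - Real.log (y:ℕ))^2 := by
          have aux : ∀ p q : ℕ, 1 ≤ p → p < q → q ≤ N → (1/(N:ℝ)) ≤ Real.log q - Real.log p := by
            intro p q hp hpq hq
            have hp0 : (0:ℝ) < p := by exact_mod_cast hp
            have hq0 : (0:ℝ) < q := by exact_mod_cast (by omega : 0 < q)
            have h1 := Real.log_le_sub_one_of_pos (div_pos hp0 hq0)
            rw [Real.log_div hp0.ne' hq0.ne'] at h1
            have h2 : (p:ℝ) + 1 ≤ q := by exact_mod_cast hpq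
            have h3 : (p:ℝ)/q ≤ 1 - 1/q := by
              rw [le_sub_iff_add_le, ← add_div, div_le_one hq0]; exact h2
            have h4 : 1/(N:ℝ) ≤ 1/q := one_div_le_one_div_of_le hq0 (by exact_mod_cast hq)
            linarith
          rw [sq_le_sq, abs_of_nonneg (by positivity : (0:ℝ) ≤ 1/N)]
          rcases lt_or_gt_of_ne hne with h | h
          · exact (aux _ _ (hx y).1 h (hx x).2).trans (le_abs_self _)
          · rw [abs_sub_comm]; exact (aux _ _ (hx x).1 h (hx y).2).trans (le_abs_self _)
        have : (T/N)^2 ≤ (T * (Real.log (x:ℕ) - Real.log (y:ℕ)))^2 := by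
          rw [div_eq_mul_one_div, mul_pow, mul_pow]
          exact mul_le_mul_of_nonneg_left hl (by positivity)
        linarith
      refine (Finset.sum_le_sum hb).trans ?_
      rw [Finset.sum_const, nsmul_eq_mul]
      refine mul_le_mul_of_nonneg_right ?_ (Real.exp_pos _).le
      have : (Finset.univ.erase x).card ≤ N := by
        refine (Finset.card_erase_le).trans ?_
        simp
      exact_mod_cast this)
  simp only [integral_count, tsum_fintype] at key
  have e1 : ∀ u : ℝ, ∑ n ∈ Finset.Ioc M N, (n:ℂ)^(-(σ + u * I)) = ∑ x : Finset.Ioc M N, ((((x:ℕ):ℝ)^(-σ) : ℝ) : ℂ) * cexp (-(I * u * (Real.log (x:ℕ) : ℝ))) := by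
    intro u
    rw [← Finset.sum_coe_sort]
    refine Finset.sum_congr rfl fun x _ => cpow_split _ (hx x).1 _ _
  have e2 : ∑ n ∈ Finset.Ioc M N, (n:ℝ)^(-2*σ) = ∑ x : Finset.Ioc M N, ‖((((x:ℕ):ℝ)^(-σ) : ℝ) : ℂ)‖^2 := by
    rw [← Finset.sum_coe_sort]
    refine Finset.sum_congr rfl fun x _ => ?_
    rw [Complex.norm_real, Real.norm_of_nonneg (by positivity), ← Real.rpow_natCast, ← Real.rpow_mul (by positivity)]
    congr 1; push_cast; ring
  simp_rw [e1, e2]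
  exact key

lemma pole_ms (N : ℕ) (hN : 1 ≤ N) (σ σ₂ T : ℝ) (hσ : 0 < σ) (hσ2 : σ ≤ σ₂) (h2 : σ₂ < 1) (hT : 0 < T) :
    ∫ u in (-T)..T, ‖(N:ℂ)^(1-(σ + u * I))/((σ + u * I) - 1)‖^2 ≤ (N:ℝ)^(2-2*σ) * ((1-σ₂)^2)⁻¹ * Real.pi := by
  have hN0 : (0:ℝ) < N := by exact_mod_cast hN
  have hb : ∀ u : ℝ, ‖(N:ℂ)^(1-(σ + u * I))/((σ + u * I) - 1)‖^2 ≤ (N:ℝ)^(2-2*σ) * ((1-σ₂)^2)⁻¹ * (1+u^2)⁻¹ := by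
    intro u
    rw [norm_div, div_pow]
    have h1 : ‖(N:ℂ)^(1-(σ + u * I))‖^2 = (N:ℝ)^(2-2*σ) := by
      rw [Complex.norm_natCast_cpow_of_pos hN, ← Real.rpow_natCast, ← Real.rpow_mul (by positivity)]
      congr 1; simp; ring
    have h3 : ‖(σ + u * I) - 1‖^2 = (1-σ)^2 + u^2 := by
      rw [← Complex.normSq_eq_norm_sq, Complex.normSq_apply]; simp; ring
    rw [h1, h3, mul_assoc, ← mul_inv, div_eq_mul_inv]
    refine mul_le_mul_of_nonneg_left ?_ (by positivity)
    have hp : 0 < (1-σ₂)^2 * (1+u^2) := by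
      have : 0 < 1 - σ₂ := by linarith
      positivity
    refine inv_anti₀ hp ?_
    have i1 : (1-σ₂)^2 ≤ (1-σ)^2 := by nlinarith
    have i2 : (1-σ₂)^2 ≤ 1 := by nlinarith
    nlinarith [sq_nonneg u]
  have hne : ∀ u : ℝ, ((σ + u * I) - 1 : ℂ) ≠ 0 := by
    intro u h; have := congrArg re h; simp at this; linarith
  have hNc : (N:ℂ) ≠ 0 := by exact_mod_cast hN0.ne'
  calc _ ≤ ∫ u in (-T)..T, (N:ℝ)^(2-2*σ) * ((1-σ₂)^2)⁻¹ * (1+u^2)⁻¹ := by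
        refine intervalIntegral.integral_mono_on (by linarith) ?_ ?_ (fun u _ => hb u)
        · refine Continuous.intervalIntegrable ?_ _ _
          refine Continuous.pow (Continuous.norm (Continuous.div ?_ (by fun_prop) hne)) 2
          exact Continuous.const_cpow (by fun_prop) (Or.inl hNc)
        · refine Continuous.intervalIntegrable ?_ _ _
          refine Continuous.mul continuous_const (Continuous.inv₀ (by fun_prop) ?_)
          intro u; positivity
    _ ≤ _ := by
      rw [intervalIntegral.integral_const_mul, integral_inv_one_add_sq]
      refine mul_le_mul_of_nonneg_left ?_ (by positivity)
      rw [Real.arctan_neg]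
      have := Real.arctan_lt_pi_div_two T
      linarith


lemma zeta_ms_bound (M N : ℕ) (hMN : M ≤ N) (hN : 1 ≤ N) (σ σ₁ σ₂ T : ℝ) (h1 : 1/2 < σ₁) (hσ1 : σ₁ ≤ σ) (hσ2 : σ ≤ σ₂)
    (h2 : σ₂ < 1) (hT : 0 < T) :
    ∫ u in (-T)..T, ‖riemannZeta (σ + u * I) - ∑ n ∈ Finset.Icc 1 M, (n:ℂ)^(-(σ + u * I))‖^2 ≤
      3 * (Real.exp 1 * (T * √Real.pi * (1 + N * Real.exp (-(T/N)^2/4)) * ∑ n ∈ Finset.Ioc M N, (n:ℝ)^(-2*σ₁)) +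
       (N:ℝ)^(2-2*σ₁) * ((1-σ₂)^2)⁻¹ * Real.pi +
       (1+T^2) * (Real.exp 1 * (2 * Real.pi) * (N:ℝ)^(-2*σ₁))) := by
  have hN0 : (0:ℝ) < N := by exact_mod_cast hN
  have hN1 : (1:ℝ) ≤ N := by exact_mod_cast hN
  have hNc : (N:ℂ) ≠ 0 := by exact_mod_cast hN0.ne'
  have hne : ∀ u : ℝ, ((σ + u * I) - 1 : ℂ) ≠ 0 := by
    intro u h; have := congrArg re h; simp at this; linarith
  set a : ℝ → ℂ := fun u => ∑ n ∈ Finset.Ioc M N, (n:ℂ)^(-(σ + u * I))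
  set b : ℝ → ℂ := fun u => (N:ℂ)^(1-(σ + u * I))/((σ + u * I) - 1)
  set c : ℝ → ℂ := fun u => mellin (fr N) (-(σ + u * I))
  have hpc : ∀ n : ℕ, 1 ≤ n → Continuous fun u : ℝ => (n:ℂ)^(-(σ + u * I)) := by
    intro n hn
    exact Continuous.const_cpow (by fun_prop) (Or.inl (by exact_mod_cast (by omega : n ≠ 0)))
  have ca : Continuous a := continuous_finsetSum _ fun n hn => hpc n (by have := Finset.mem_Ioc.1 hn; omega)
  have cb : Continuous b := by
    refine Continuous.div ?_ (by fun_prop) hne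
    exact Continuous.const_cpow (by fun_prop) (Or.inl hNc)
  have cc : Continuous c := by
    rw [continuous_iff_continuousAt]
    intro u
    have := (fr_mellinDiff N hN0 (σ + u * I) (by simp; linarith)).continuousAt
    exact ContinuousAt.comp (f := fun u : ℝ => (σ + u * I : ℂ)) (g := fun s => mellin (fr N) (-s)) this (by fun_prop)
  have e : ∀ u : ℝ, riemannZeta (σ + u * I) - ∑ n ∈ Finset.Icc 1 M, (n:ℂ)^(-(σ + u * I)) = a u + b u - (σ + u * I) * c u := by
    intro u
    rw [zeta_trunc (σ + u * I) (by simp; linarith) (by simp; linarith) N hN]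
    have : ∑ n ∈ Finset.Icc 1 N, (n:ℂ)^(-(σ + u * I)) = ∑ n ∈ Finset.Icc 1 M, (n:ℂ)^(-(σ + u * I)) + a u := by
      rw [← Finset.sum_union]
      · congr 1; ext n; simp; omega
      · rw [Finset.disjoint_left]; intro n; simp; omega
    rw [this]; ring
  simp_rw [e]
  have bd : ∀ u ∈ Set.Icc (-T) T, ‖a u + b u - (σ + u * I) * c u‖^2 ≤ 3 * (‖a u‖^2 + ‖b u‖^2 + (1+T^2) * ‖c u‖^2) := by
    intro u hu
    have t1 : ‖a u + b u - (σ + u * I) * c u‖ ≤ ‖a u‖ + ‖b u‖ + ‖(σ + u * I : ℂ)‖ * ‖c u‖ := by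
      rw [← norm_mul]
      exact (norm_sub_le _ _).trans (by gcongr; exact norm_add_le _ _)
    have t2 : ‖(σ + u * I : ℂ)‖^2 ≤ 1 + T^2 := by
      rw [← Complex.normSq_eq_norm_sq, Complex.normSq_apply]; simp
      nlinarith [hu.1, hu.2]
    have t3 : (‖(σ + u * I : ℂ)‖ * ‖c u‖)^2 ≤ (1+T^2) * ‖c u‖^2 := by
      rw [mul_pow]; gcongr
    have t4 := pow_le_pow_left₀ (norm_nonneg _) t1 2
    nlinarith [sq_nonneg (‖a u‖ - ‖b u‖), sq_nonneg (‖a u‖ - ‖(σ + u * I : ℂ)‖ * ‖c u‖), sq_nonneg (‖b u‖ - ‖(σ + u * I : ℂ)‖ * ‖c u‖)]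
  have ia : IntervalIntegrable (fun u => ‖a u‖^2) volume (-T) T := (ca.norm.pow 2).intervalIntegrable _ _
  have ib : IntervalIntegrable (fun u => ‖b u‖^2) volume (-T) T := (cb.norm.pow 2).intervalIntegrable _ _
  have ic : IntervalIntegrable (fun u => (1+T^2) * ‖c u‖^2) volume (-T) T := ((cc.norm.pow 2).const_mul (1+T^2)).intervalIntegrable _ _
  calc _ ≤ ∫ u in (-T)..T, 3 * (‖a u‖^2 + ‖b u‖^2 + (1+T^2) * ‖c u‖^2) := by
        refine intervalIntegral.integral_mono_on (by linarith) ?_ (((ia.add ib).add ic).const_mul 3) bd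
        refine Continuous.intervalIntegrable ?_ _ _
        have : Continuous fun u : ℝ => (σ + u * I : ℂ) := by fun_prop
        exact (((ca.add cb).sub (this.mul cc)).norm.pow 2)
    _ = 3 * ((∫ u in (-T)..T, ‖a u‖^2) + (∫ u in (-T)..T, ‖b u‖^2) + (1+T^2) * ∫ u in (-T)..T, ‖c u‖^2) := by
        rw [intervalIntegral.integral_const_mul, intervalIntegral.integral_add (ia.add ib) ic, intervalIntegral.integral_add ia ib,
          intervalIntegral.integral_const_mul]
    _ ≤ _ := by
        have q1 := poly_ms M N σ T hT
        have q2 := pole_ms N hN σ σ₂ T (by linarith) hσ2 h2 hT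
        have q3 := mellin_ms N hN σ T (by linarith) hT
        refine mul_le_mul_of_nonneg_left (add_le_add (add_le_add (q1.trans ?_) (q2.trans ?_)) (mul_le_mul_of_nonneg_left (q3.trans ?_) (by positivity))) (by norm_num)
        · have r : ∑ n ∈ Finset.Ioc M N, (n:ℝ)^(-2*σ) ≤ ∑ n ∈ Finset.Ioc M N, (n:ℝ)^(-2*σ₁) := by
            refine Finset.sum_le_sum fun n hn => Real.rpow_le_rpow_of_exponent_le ?_ (by linarith)
            have := Finset.mem_Ioc.1 hn; exact_mod_cast (by omega : 1 ≤ n)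
          refine mul_le_mul_of_nonneg_left (mul_le_mul_of_nonneg_left r ?_) (by positivity)
          positivity
        · have : 0 < 1 - σ₂ := by linarith
          have r : (N:ℝ)^(2-2*σ) ≤ (N:ℝ)^(2-2*σ₁) := Real.rpow_le_rpow_of_exponent_le hN1 (by linarith)
          refine mul_le_mul_of_nonneg_right (mul_le_mul_of_nonneg_right r (by positivity)) Real.pi_pos.le
        · have r : (N:ℝ)^(-2*σ) ≤ (N:ℝ)^(-2*σ₁) := Real.rpow_le_rpow_of_exponent_le hN1 (by linarith)
          refine mul_le_mul_of_nonneg_left r (by positivity)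

lemma zeta_ms (σ₁ σ₂ : ℝ) (h1 : 1/2 < σ₁) (h2 : σ₂ < 1) (η : ℝ) (hη : 0 < η) :
    ∃ M₀ : ℕ, ∀ M ≥ M₀, ∀ᶠ T : ℝ in atTop, ∀ σ ∈ Set.Icc σ₁ σ₂,
      ∫ u in (-T)..T, ‖riemannZeta (σ + u * I) - ∑ n ∈ Finset.Icc 1 M, (n:ℂ)^(-(σ + u * I))‖^2 ≤ η * T := by
  by_cases h12 : σ₁ ≤ σ₂
  swap
  · refine ⟨0, fun M _ => Eventually.of_forall fun T σ hσ => absurd (hσ.1.trans hσ.2) h12⟩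
  have hs1 : σ₁ < 1 := by linarith
  set κ := Real.exp 1 * √Real.pi with hκ
  have hκ0 : 0 < κ := by have := Real.pi_pos; positivity
  have hsum : Summable (fun n : ℕ => (n:ℝ)^(-2*σ₁)) := Real.summable_nat_rpow.2 (by linarith)
  obtain ⟨s0, hs0⟩ := summable_iff_vanishing_norm.1 hsum (η/(18*κ)) (by positivity)
  obtain ⟨M₀, hM₀⟩ : ∃ M₀, ∀ n ∈ s0, n ≤ M₀ := ⟨s0.sup id, fun n hn => Finset.le_sup (f := id) hn⟩
  refine ⟨M₀, fun M hM => ?_⟩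
  have htail : ∀ N, ∑ n ∈ Finset.Ioc M N, (n:ℝ)^(-2*σ₁) ≤ η/(18*κ) := by
    intro N
    refine (le_abs_self _).trans (hs0 (Finset.Ioc M N) ?_).le
    rw [Finset.disjoint_left]; intro n hn hn2
    have := hM₀ n hn2; have := Finset.mem_Ioc.1 hn; omega
  obtain ⟨θ, hθ1, hθ2⟩ : ∃ θ, 1/(2*σ₁) < θ ∧ θ < 1 := exists_between (by rw [div_lt_one (by linarith)]; linarith)
  have hθ0 : 0 < θ := lt_trans (by positivity) hθ1
  have hθs : 1 < 2 * σ₁ * θ := by rw [div_lt_iff₀ (by linarith)] at hθ1; linarith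
  set N : ℝ → ℕ := fun T => ⌈T^θ⌉₊ with hNdef
  -- bounds on N
  have hNl : ∀ T : ℝ, T^θ ≤ N T := fun T => Nat.le_ceil _
  have hNu : ∀ T : ℝ, 1 ≤ T → (N T:ℝ) ≤ 2 * T^θ := fun T hT => by
    have a1 : 1 ≤ T^θ := Real.one_le_rpow hT hθ0.le
    have a2 := Nat.ceil_lt_add_one (by linarith : 0 ≤ T^θ)
    simp only [hNdef]; linarith
  -- limit facts
  have L1 : ∀ᶠ T : ℝ in atTop, (N T : ℝ) * Real.exp (-(T/N T)^2/4) ≤ 1 := by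
    have hd : 0 < 2 - 2*θ := by linarith
    have t1 : Tendsto (fun T : ℝ => T^(2-2*θ)) atTop atTop := tendsto_rpow_atTop hd
    have t2 := (tendsto_rpow_mul_exp_neg_mul_atTop_nhds_zero (θ/(2-2*θ)) (1/16) (by norm_num)).comp t1
    have t3 := t2.eventually (gt_mem_nhds (show (0:ℝ) < 1/2 by norm_num))
    filter_upwards [t3, eventually_ge_atTop 1] with T h3 hT
    have hT0 : 0 < T := by linarith
    simp only [Function.comp] at h3
    rw [← Real.rpow_mul hT0.le, mul_div_cancel₀ _ hd.ne'] at h3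
    have hNp : (0:ℝ) < N T := lt_of_lt_of_le (by positivity) (hNl T)
    have h4 : T^(2-2*θ)/4 ≤ (T/N T)^2 := by
      have : T / (2*T^θ) ≤ T/N T := div_le_div_of_nonneg_left hT0.le hNp (hNu T hT)
      have h5 : T / (2*T^θ) = T^(1-θ)/2 := by
        rw [Real.rpow_sub hT0, Real.rpow_one]; field_simp
      rw [h5] at this
      have h6 := pow_le_pow_left₀ (by positivity) this 2
      refine le_trans (le_of_eq ?_) h6
      rw [div_pow, ← Real.rpow_natCast, ← Real.rpow_mul hT0.le]
      congr 1
      · congr 1; push_cast; ring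
      · norm_num
    calc (N T : ℝ) * Real.exp (-(T/N T)^2/4) ≤ 2 * T^θ * Real.exp (-(1/16) * T^(2-2*θ)) := by
          gcongr
          · exact hNu T hT
          · linarith
      _ ≤ 1 := by linarith
  have L2 : ∀ᶠ T : ℝ in atTop, (N T : ℝ)^(2-2*σ₁) * ((1-σ₂)^2)⁻¹ * Real.pi ≤ η/9 * T := by
    have hd : 0 < 1 - θ*(2-2*σ₁) := by nlinarith
    have t1 : Tendsto (fun T : ℝ => T^(1 - θ*(2-2*σ₁))) atTop atTop := tendsto_rpow_atTop hd
    filter_upwards [t1.eventually_ge_atTop (2^(2-2*σ₁) * ((1-σ₂)^2)⁻¹ * Real.pi / (η/9)), eventually_ge_atTop 1] with T h3 hT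
    have hT0 : 0 < T := by linarith
    rw [div_le_iff₀ (by positivity)] at h3
    have e1 : T = T^(1 - θ*(2-2*σ₁)) * T^(θ*(2-2*σ₁)) := by
      rw [← Real.rpow_add hT0]; simp
    have hNp : (0:ℝ) < N T := lt_of_lt_of_le (by positivity) (hNl T)
    calc (N T : ℝ)^(2-2*σ₁) * ((1-σ₂)^2)⁻¹ * Real.pi ≤ (2 * T^θ)^(2-2*σ₁) * ((1-σ₂)^2)⁻¹ * Real.pi := by
          have r : (N T : ℝ)^(2-2*σ₁) ≤ (2 * T^θ)^(2-2*σ₁) := Real.rpow_le_rpow hNp.le (hNu T hT) (by linarith)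
          refine mul_le_mul_of_nonneg_right (mul_le_mul_of_nonneg_right r (by positivity)) Real.pi_pos.le
      _ = (2^(2-2*σ₁) * ((1-σ₂)^2)⁻¹ * Real.pi) * T^(θ*(2-2*σ₁)) := by
          rw [Real.mul_rpow (by norm_num) (by positivity), ← Real.rpow_mul hT0.le]; ring
      _ ≤ (T^(1 - θ*(2-2*σ₁)) * (η/9)) * T^(θ*(2-2*σ₁)) := by gcongr
      _ = η/9 * (T^(1 - θ*(2-2*σ₁)) * T^(θ*(2-2*σ₁))) := by ring
      _ = _ := by rw [← e1]
  have L3 : ∀ᶠ T : ℝ in atTop, (1+T^2) * (Real.exp 1 * (2 * Real.pi) * (N T:ℝ)^(-2*σ₁)) ≤ η/9 * T := by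
    have hd : 0 < 2 * σ₁ * θ - 1 := by linarith
    have t1 : Tendsto (fun T : ℝ => T^(2 * σ₁ * θ - 1)) atTop atTop := tendsto_rpow_atTop hd
    filter_upwards [t1.eventually_ge_atTop (2 * (Real.exp 1 * (2 * Real.pi)) / (η/9)), eventually_ge_atTop 1] with T h3 hT
    have hT0 : 0 < T := by linarith
    rw [div_le_iff₀ (by positivity)] at h3
    have hNp : (0:ℝ) < N T := lt_of_lt_of_le (by positivity) (hNl T)
    have b1 : (N T:ℝ)^(-2*σ₁) ≤ (T^θ)^(-2*σ₁) := Real.rpow_le_rpow_of_nonpos (by positivity) (hNl T) (by linarith)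
    have e1 : T^2 * (T^θ)^(-2*σ₁) * T^(2*σ₁*θ - 1) = T := by
      rw [← Real.rpow_mul hT0.le, ← Real.rpow_natCast, ← Real.rpow_add hT0, ← Real.rpow_add hT0]
      conv_rhs => rw [← Real.rpow_one T]
      congr 1; push_cast; ring
    calc (1+T^2) * (Real.exp 1 * (2 * Real.pi) * (N T:ℝ)^(-2*σ₁)) ≤ (2 * T^2) * (Real.exp 1 * (2 * Real.pi) * (T^θ)^(-2*σ₁)) := by
          gcongr; nlinarith
      _ = (T^2 * (T^θ)^(-2*σ₁)) * (2 * (Real.exp 1 * (2 * Real.pi))) := by ring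
      _ ≤ (T^2 * (T^θ)^(-2*σ₁)) * (T^(2 * σ₁ * θ - 1) * (η/9)) := by gcongr
      _ = η/9 * (T^2 * (T^θ)^(-2*σ₁) * T^(2*σ₁*θ - 1)) := by ring
      _ = _ := by rw [e1]
  have L4 : ∀ᶠ T : ℝ in atTop, (M:ℝ) ≤ T^θ := (tendsto_rpow_atTop hθ0).eventually_ge_atTop _
  filter_upwards [L1, L2, L3, L4, eventually_ge_atTop 1] with T l1 l2 l3 l4 hT σ hσ
  have hT0 : 0 < T := by linarith
  have hMN : M ≤ N T := by exact_mod_cast l4.trans (hNl T)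
  have hN1 : 1 ≤ N T := by
    have : (0:ℝ) < N T := lt_of_lt_of_le (by positivity) (hNl T)
    exact_mod_cast this
  refine (zeta_ms_bound M (N T) hMN hN1 σ σ₁ σ₂ T h1 hσ.1 hσ.2 h2 hT0).trans ?_
  have l5 : Real.exp 1 * (T * √Real.pi * (1 + N T * Real.exp (-(T/N T)^2/4)) * ∑ n ∈ Finset.Ioc M (N T), (n:ℝ)^(-2*σ₁)) ≤ η/9 * T := by
    calc _ ≤ Real.exp 1 * (T * √Real.pi * (1 + 1) * (η/(18*κ))) := by
          gcongr
          · exact htail _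
      _ = _ := by
          rw [show Real.exp 1 * (T * √Real.pi * (1 + 1) * (η/(18*κ))) = κ * T * 2 * (η/(18*κ)) by rw [hκ]; ring]
          field_simp; ring
  linarith


lemma osc_int (x : ℝ) (T : ℝ) : ‖(∫ t in (0:ℝ)..T, cexp (-(I * t * x))) - (if x = 0 then (T:ℂ) else 0)‖ ≤ 2 / |x| := by
  by_cases hx : x = 0
  · simp [hx]
  · have hc : (-(I * x) : ℂ) ≠ 0 := by simp [hx]
    have := integral_exp_mul_complex (a := 0) (b := T) hc
    have e : (fun t : ℝ => cexp (-(I * t * x))) = fun t : ℝ => cexp (-(I * x) * t) := by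
      funext t; congr 1; ring
    rw [e, this, if_neg hx, sub_zero, norm_div]
    have h1 : ‖(-(I * x) : ℂ)‖ = |x| := by simp
    rw [h1]
    gcongr
    refine (norm_sub_le _ _).trans ?_
    have n1 : ‖cexp (-(I * x) * T)‖ = 1 := by rw [Complex.norm_exp]; simp
    have n2 : ‖cexp (-(I * x) * (0:ℝ))‖ = 1 := by rw [Complex.norm_exp]; simp
    rw [n1, n2]; norm_num

lemma parseval {ι : Type*} (s : Finset ι) (lam : ι → ℝ) (hinj : Set.InjOn lam s) :
    ∃ C : ℝ, 0 ≤ C ∧ ∀ c : ι → ℂ, ∀ T : ℝ,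
      |(∫ t in (0:ℝ)..T, ‖∑ i ∈ s, c i * cexp (-(I * t * lam i))‖^2) - T * ∑ i ∈ s, ‖c i‖^2| ≤ C * (∑ i ∈ s, ‖c i‖)^2 := by
  classical
  refine ⟨∑ i ∈ s, ∑ j ∈ s, 2 / |lam i - lam j|, by positivity, fun c T => ?_⟩
  set C := ∑ i ∈ s, ∑ j ∈ s, 2 / |lam i - lam j|
  have e1 : ∀ t : ℝ, ((‖∑ i ∈ s, c i * cexp (-(I * t * lam i))‖^2 : ℝ) : ℂ) =
      ∑ i ∈ s, ∑ j ∈ s, (c i * (starRingEnd ℂ) (c j)) * cexp (-(I * t * (lam i - lam j : ℝ))) := by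
    intro t
    rw [← Complex.normSq_eq_norm_sq, Complex.normSq_eq_conj_mul_self, mul_comm, map_sum, Finset.sum_mul_sum]
    refine Finset.sum_congr rfl fun i _ => Finset.sum_congr rfl fun j _ => ?_
    rw [map_mul, ← Complex.exp_conj]
    simp only [map_neg, map_mul, conj_I, conj_ofReal]
    rw [mul_mul_mul_comm, ← Complex.exp_add]
    congr 2; push_cast; ring
  have e2 : ((∫ t in (0:ℝ)..T, ‖∑ i ∈ s, c i * cexp (-(I * t * lam i))‖^2 : ℝ) : ℂ) =
      ∑ i ∈ s, ∑ j ∈ s, (c i * (starRingEnd ℂ) (c j)) * ∫ t in (0:ℝ)..T, cexp (-(I * t * (lam i - lam j : ℝ))) := by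
    rw [← intervalIntegral.integral_ofReal]
    simp_rw [e1]
    rw [intervalIntegral.integral_finsetSum]
    · refine Finset.sum_congr rfl fun i _ => ?_
      rw [intervalIntegral.integral_finsetSum]
      · refine Finset.sum_congr rfl fun j _ => ?_
        rw [intervalIntegral.integral_const_mul]
      · intro j _
        exact Continuous.intervalIntegrable (by fun_prop) _ _
    · intro i _
      exact Continuous.intervalIntegrable (by fun_prop) _ _
  have e3 : ((T * ∑ i ∈ s, ‖c i‖^2 : ℝ) : ℂ) = ∑ i ∈ s, ∑ j ∈ s, (c i * (starRingEnd ℂ) (c j)) * (if lam i - lam j = 0 then (T:ℂ) else 0) := by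
    push_cast
    rw [Finset.mul_sum]
    refine Finset.sum_congr rfl fun i hi => ?_
    rw [Finset.sum_eq_single i]
    · simp only [sub_self, if_true]
      rw [Complex.mul_conj, Complex.normSq_eq_norm_sq]; push_cast; ring
    · intro j hj hji
      rw [if_neg, mul_zero]
      intro h; exact hji (hinj hj hi (by linarith))
    · exact fun h => absurd hi h
  have e4 : ((((∫ t in (0:ℝ)..T, ‖∑ i ∈ s, c i * cexp (-(I * t * lam i))‖^2) - T * ∑ i ∈ s, ‖c i‖^2 : ℝ)) : ℂ) =
     ∑ i ∈ s, ∑ j ∈ s, (c i * (starRingEnd ℂ) (c j)) * ((∫ t in (0:ℝ)..T, cexp (-(I * t * (lam i - lam j : ℝ)))) - (if lam i - lam j = 0 then (T:ℂ) else 0)) := by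
    rw [ofReal_sub, e2, e3, ← Finset.sum_sub_distrib]
    refine Finset.sum_congr rfl fun i _ => ?_
    rw [← Finset.sum_sub_distrib]
    refine Finset.sum_congr rfl fun j _ => ?_
    ring
  rw [← Real.norm_eq_abs, ← Complex.norm_real, e4]
  calc _ ≤ ∑ i ∈ s, ∑ j ∈ s, (‖c i‖ * ‖c j‖) * C := by
        refine (norm_sum_le _ _).trans (Finset.sum_le_sum fun i hi => (norm_sum_le _ _).trans (Finset.sum_le_sum fun j hj => ?_))
        rw [norm_mul, norm_mul, RCLike.norm_conj]
        refine mul_le_mul_of_nonneg_left ((osc_int _ _).trans ?_) (by positivity)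
        refine le_trans ?_ (Finset.single_le_sum (f := fun i => ∑ j ∈ s, 2 / |lam i - lam j|) (fun i _ => by positivity) hi)
        exact Finset.single_le_sum (f := fun j => 2 / |lam i - lam j|) (fun i _ => by positivity) hj
    _ = C * (∑ i ∈ s, ‖c i‖)^2 := by
        rw [sq, Finset.sum_mul_sum, Finset.mul_sum]
        refine Finset.sum_congr rfl fun i _ => ?_
        rw [Finset.mul_sum]
        exact Finset.sum_congr rfl fun j _ => by ring


noncomputable def pr (k : ℕ) : ℕ := Nat.nth Nat.Prime k
lemma pr_prime (k : ℕ) : (pr k).Prime := Nat.prime_nth_prime k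
lemma pr_inj {j k : ℕ} (h : pr j = pr k) : j = k := Nat.nth_injective Nat.infinite_setOf_prime h
lemma pr_mono : StrictMono pr := Nat.nth_strictMono Nat.infinite_setOf_prime
lemma pr_surj (p : ℕ) (hp : p.Prime) : ∃ k, pr k = p := ⟨Nat.count Nat.Prime p, Nat.nth_count hp⟩

def rough (n r : ℕ) : Prop := ∀ k < n, ¬ pr k ∣ r

open Classical in
noncomputable def RF (n M : ℕ) : Finset ℕ := (Finset.Icc 1 M).filter (rough n)
noncomputable def RA (n M : ℕ) (w : ℂ) : ℂ := ∑ r ∈ RF n M, (r:ℂ)^(-w)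
noncomputable def RQ (n : ℕ) (w : ℂ) : ℂ := ∏ k ∈ Finset.range n, (1 - (pr k:ℂ)^(-w))

lemma mem_RF {n M r : ℕ} : r ∈ RF n M ↔ (1 ≤ r ∧ r ≤ M) ∧ rough n r := by
  classical
  simp [RF]

open Classical in
noncomputable def RE (n M : ℕ) : Finset ℕ := (RF n M).filter (fun r => M < pr n * r)

lemma rough_mul (n r : ℕ) : rough n (pr n * r) ↔ rough n r := by
  constructor
  · intro h k hk hd; exact h k hk (hd.mul_left _)
  · intro h k hk hd
    rcases (pr_prime k).dvd_mul.1 hd with h1 | h1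
    · exact hk.ne (pr_inj ((Nat.prime_dvd_prime_iff_eq (pr_prime k) (pr_prime n)).1 h1))
    · exact h k hk h1

lemma rough_succ (n r : ℕ) : rough (n+1) r ↔ rough n r ∧ ¬ pr n ∣ r := by
  constructor
  · intro h; exact ⟨fun k hk => h k (by omega), h n (by omega)⟩
  · rintro ⟨h1, h2⟩ k hk
    rcases Nat.lt_succ_iff_lt_or_eq.1 hk with h | rfl
    · exact h1 k h
    · exact h2

lemma rough_step (n M : ℕ) (w : ℂ) : RA n M w * (1 - (pr n:ℂ)^(-w)) = RA (n+1) M w - ∑ r ∈ RE n M, ((pr n * r : ℕ):ℂ)^(-w) := by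
  classical
  have hp := pr_prime n
  have s1 : RA n M w = RA (n+1) M w + ∑ r ∈ (RF n M).filter (fun r => pr n ∣ r), (r:ℂ)^(-w) := by
    rw [RA, ← Finset.sum_filter_add_sum_filter_not (RF n M) (fun r => pr n ∣ r), add_comm, RA]
    congr 2
    ext r; simp only [Finset.mem_filter, mem_RF, rough_succ]; tauto
  have s2 : RA n M w * (pr n:ℂ)^(-w) = ∑ r ∈ RF n M, ((pr n * r : ℕ):ℂ)^(-w) := by
    rw [RA, Finset.sum_mul]
    refine Finset.sum_congr rfl fun r hr => ?_
    push_cast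
    rw [mul_comm, Complex.natCast_mul_natCast_cpow]
  have s3 : ∑ r ∈ RF n M, ((pr n * r : ℕ):ℂ)^(-w) = ∑ r ∈ RE n M, ((pr n * r : ℕ):ℂ)^(-w) + ∑ r ∈ (RF n M).filter (fun r => pr n ∣ r), (r:ℂ)^(-w) := by
    rw [← Finset.sum_filter_add_sum_filter_not (RF n M) (fun r => M < pr n * r)]
    congr 1
    refine Finset.sum_bij (fun r _ => pr n * r) ?_ ?_ ?_ ?_
    · intro r hr
      simp only [Finset.mem_filter, mem_RF, rough_mul, not_lt] at hr ⊢
      exact ⟨⟨⟨Nat.mul_pos hp.pos hr.1.1.1, hr.2⟩, hr.1.2⟩, dvd_mul_right _ _⟩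
    · intro r _ r' _ h; exact Nat.eq_of_mul_eq_mul_left hp.pos h
    · intro r hr
      simp only [Finset.mem_filter, mem_RF] at hr
      obtain ⟨⟨⟨h1, h2⟩, h3⟩, q, rfl⟩ := hr
      have hq : 1 ≤ q := by rcases Nat.eq_zero_or_pos q with h | h
                            · simp [h] at h1
                            · exact h
      refine ⟨q, ?_, rfl⟩
      simp only [Finset.mem_filter, mem_RF, not_lt]
      exact ⟨⟨⟨hq, (Nat.le_mul_of_pos_left q hp.pos).trans h2⟩, (rough_mul n q).1 h3⟩, h2⟩
    · intro r _; rfl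
  rw [mul_sub, mul_one, s2, s3, s1]; ring

lemma nat_cpow_cont (n : ℕ) (hn : 1 ≤ n) (σ : ℝ) : Continuous fun u : ℝ => (n:ℂ)^(-(σ + u * I)) :=
  Continuous.const_cpow (by fun_prop) (Or.inl (by exact_mod_cast (by omega : n ≠ 0)))

lemma zeta_cont (σ : ℝ) (hσ : σ < 1) : Continuous fun u : ℝ => riemannZeta (σ + u * I) := by
  rw [continuous_iff_continuousAt]
  intro u
  have : (σ + u * I : ℂ) ≠ 1 := by
    intro h; have := congrArg re h; simp at this; linarith
  exact ContinuousAt.comp (f := fun u : ℝ => (σ + u * I : ℂ)) (differentiableAt_riemannZeta this).continuousAt (by fun_prop)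

lemma RQ_cont (n : ℕ) (σ : ℝ) : Continuous fun u : ℝ => RQ n (σ + u * I) := by
  unfold RQ
  exact continuous_finsetProd _ fun k _ => continuous_const.sub (nat_cpow_cont _ (pr_prime k).one_le σ)

lemma RA_cont (n M : ℕ) (σ : ℝ) : Continuous fun u : ℝ => RA n M (σ + u * I) := by
  unfold RA
  exact continuous_finsetSum _ fun k hk => (nat_cpow_cont _ (mem_RF.1 hk).1.1 σ)

lemma norm_cpow_le_one (n : ℕ) (hn : 1 ≤ n) (w : ℂ) (hw : 0 ≤ w.re) : ‖(n:ℂ)^(-w)‖ ≤ 1 := by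
  rw [Complex.norm_natCast_cpow_of_pos (by omega)]
  exact Real.rpow_le_one_of_one_le_of_nonpos (by exact_mod_cast hn) (by simpa using hw)

lemma tail_small (σ₁ : ℝ) (h1 : 1/2 < σ₁) (η : ℝ) (hη : 0 < η) :
    ∃ M₀ : ℕ, ∀ s : Finset ℕ, (∀ r ∈ s, M₀ < r) → ∑ r ∈ s, (r:ℝ)^(-2*σ₁) ≤ η := by
  have hsum : Summable (fun n : ℕ => (n:ℝ)^(-2*σ₁)) := Real.summable_nat_rpow.2 (by linarith)
  obtain ⟨s0, hs0⟩ := summable_iff_vanishing_norm.1 hsum η hη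
  refine ⟨s0.sup id, fun s hs => (le_abs_self _).trans (hs0 s ?_).le⟩
  rw [Finset.disjoint_left]; intro n hn hn2
  have := hs n hn
  have h3 : n ≤ s0.sup id := Finset.le_sup (f := id) hn2
  omega

/-- two-sided mean square for a finite family of distinct integers -/
lemma dir_ms (s : Finset ℕ) (hs : ∀ r ∈ s, 1 ≤ r) (σ₁ : ℝ) (h1 : 0 ≤ σ₁) (η : ℝ) (hη : 0 < η) :
    ∀ᶠ T : ℝ in atTop, ∀ σ ≥ σ₁, ∫ u in (-T)..T, ‖∑ r ∈ s, (r:ℂ)^(-(σ + u * I))‖^2 ≤ (2 * ∑ r ∈ s, (r:ℝ)^(-2*σ₁) + η) * T := by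
  have hinj : Set.InjOn (fun r : ℕ => Real.log r) s := by
    intro r hr r' hr' h
    have := Real.log_injOn_pos (Set.mem_Ioi.2 (by exact_mod_cast hs r hr)) (Set.mem_Ioi.2 (by exact_mod_cast hs r' hr')) h
    exact_mod_cast this
  obtain ⟨C, hC0, hC⟩ := parseval s (fun r : ℕ => Real.log r) hinj
  filter_upwards [eventually_ge_atTop (2 * C * (s.card:ℝ)^2 / η), eventually_ge_atTop 0] with T hT hT0 σ hσ
  rw [div_le_iff₀ hη] at hT
  have e : ∀ u : ℝ, ∑ r ∈ s, (r:ℂ)^(-(σ + u * I)) = ∑ r ∈ s, (((r:ℝ)^(-σ) : ℝ) : ℂ) * cexp (-(I * u * (Real.log r : ℝ))) :=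
    fun u => Finset.sum_congr rfl fun r hr => cpow_split r (hs r hr) σ u
  simp_rw [e]
  have p1 := hC (fun r => (((r:ℝ)^(-σ) : ℝ) : ℂ)) T
  have p2 := hC (fun r => (((r:ℝ)^(-σ) : ℝ) : ℂ)) (-T)
  have ci : ∀ a b : ℝ, IntervalIntegrable (fun u : ℝ => ‖∑ r ∈ s, (((r:ℝ)^(-σ) : ℝ) : ℂ) * cexp (-(I * u * (Real.log r : ℝ)))‖^2) volume a b :=
    fun a b => Continuous.intervalIntegrable (by fun_prop) _ _
  rw [← intervalIntegral.integral_add_adjacent_intervals (ci (-T) 0) (ci 0 T), intervalIntegral.integral_symm 0 (-T)]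
  have q1 := (abs_le.1 p1).2
  have q2 := (abs_le.1 p2).1
  have d1 : ∑ r ∈ s, ‖(((r:ℝ)^(-σ) : ℝ) : ℂ)‖ ≤ s.card := by
    rw [Finset.card_eq_sum_ones]; push_cast
    refine Finset.sum_le_sum fun r hr => ?_
    rw [Complex.norm_real, Real.norm_eq_abs, abs_of_nonneg (by positivity)]
    exact Real.rpow_le_one_of_one_le_of_nonpos (by exact_mod_cast hs r hr) (by linarith)
  have d2 : ∑ r ∈ s, ‖(((r:ℝ)^(-σ) : ℝ) : ℂ)‖^2 ≤ ∑ r ∈ s, (r:ℝ)^(-2*σ₁) := by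
    refine Finset.sum_le_sum fun r hr => ?_
    have : (0:ℝ) < r := by exact_mod_cast hs r hr
    rw [Complex.norm_real, Real.norm_eq_abs, sq_abs, ← Real.rpow_natCast, ← Real.rpow_mul this.le]
    exact Real.rpow_le_rpow_of_exponent_le (by exact_mod_cast hs r hr) (by push_cast; linarith)
  have d3 : C * (∑ r ∈ s, ‖(((r:ℝ)^(-σ) : ℝ) : ℂ)‖)^2 ≤ C * (s.card:ℝ)^2 := by gcongr
  have d4 := mul_le_mul_of_nonneg_left d2 hT0
  linarith

lemma rough_ms (σ₁ σ₂ : ℝ) (h1 : 1/2 < σ₁) (h2 : σ₂ < 1) (n : ℕ) : ∀ η : ℝ, 0 < η →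
    ∃ M₀ : ℕ, ∀ M ≥ M₀, ∀ᶠ T : ℝ in atTop, ∀ σ ∈ Set.Icc σ₁ σ₂,
      ∫ u in (-T)..T, ‖riemannZeta (σ + u * I) * RQ n (σ + u * I) - RA n M (σ + u * I)‖^2 ≤ η * T := by
  induction n with
  | zero =>
    intro η hη
    obtain ⟨M₀, h⟩ := zeta_ms σ₁ σ₂ h1 h2 η hη
    refine ⟨M₀, fun M hM => ?_⟩
    have : RF 0 M = Finset.Icc 1 M := by ext r; simp [mem_RF, rough]
    simpa [RQ, RA, this] using h M hM
  | succ n ih =>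
    intro η hη
    obtain ⟨M₁, hM₁⟩ := ih (η/16) (by positivity)
    obtain ⟨M₂, hM₂⟩ := tail_small σ₁ h1 (η/16) (by positivity)
    have hp := pr_prime n
    refine ⟨max M₁ M₂, fun M hM => ?_⟩
    classical
    set s := (RE n M).image (fun r => pr n * r) with hs
    have hs1 : ∀ r ∈ s, M < r := by
      intro r hr
      obtain ⟨q, hq, rfl⟩ := Finset.mem_image.1 hr
      exact (Finset.mem_filter.1 hq).2
    have hsum : ∀ w : ℂ, ∑ r ∈ RE n M, ((pr n * r : ℕ):ℂ)^(-w) = ∑ r ∈ s, (r:ℂ)^(-w) := by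
      intro w; rw [hs, Finset.sum_image]
      intro r _ r' _ h; exact Nat.eq_of_mul_eq_mul_left hp.pos h
    filter_upwards [hM₁ M (le_trans (le_max_left _ _) hM), dir_ms s (fun r hr => by have := hs1 r hr; omega) σ₁ (by linarith) (η/8) (by positivity), eventually_ge_atTop 0] with T t1 t2 hT σ hσ
    have t1 := t1 σ hσ
    have t2 := t2 σ hσ.1
    have t3 := hM₂ s (fun r hr => lt_of_le_of_lt (le_trans (le_max_right _ _) hM) (hs1 r hr))
    have c1 : Continuous fun u : ℝ => riemannZeta (σ + u * I) * RQ n (σ + u * I) - RA n M (σ + u * I) :=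
      ((zeta_cont σ (by linarith [hσ.2])).mul (RQ_cont n σ)).sub (RA_cont n M σ)
    have c1' : Continuous fun u : ℝ => riemannZeta (σ + u * I) * RQ (n+1) (σ + u * I) - RA (n+1) M (σ + u * I) :=
      ((zeta_cont σ (by linarith [hσ.2])).mul (RQ_cont _ σ)).sub (RA_cont _ M σ)
    have c2 : Continuous fun u : ℝ => ∑ r ∈ s, (r:ℂ)^(-(σ + u * I)) :=
      continuous_finsetSum _ fun r hr => nat_cpow_cont r (by have := hs1 r hr; omega) σ
    have i1 : IntervalIntegrable (fun u : ℝ => 8 * ‖riemannZeta (σ + u * I) * RQ n (σ + u * I) - RA n M (σ + u * I)‖^2) volume (-T) T :=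
      (((c1.norm.pow 2)).const_mul 8).intervalIntegrable _ _
    have i2 : IntervalIntegrable (fun u : ℝ => 2 * ‖∑ r ∈ s, (r:ℂ)^(-(σ + u * I))‖^2) volume (-T) T :=
      (((c2.norm.pow 2)).const_mul 2).intervalIntegrable _ _
    calc _ ≤ ∫ u in (-T)..T, (8 * ‖riemannZeta (σ + u * I) * RQ n (σ + u * I) - RA n M (σ + u * I)‖^2 + 2 * ‖∑ r ∈ s, (r:ℂ)^(-(σ + u * I))‖^2) := by
          refine intervalIntegral.integral_mono_on (by linarith) ((c1'.norm.pow 2).intervalIntegrable _ _) (i1.add i2) ?_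
          intro u _
          have st := rough_step n M (σ + u * I)
          rw [hsum] at st
          have e : riemannZeta (σ + u * I) * RQ (n+1) (σ + u * I) - RA (n+1) M (σ + u * I) =
             (riemannZeta (σ + u * I) * RQ n (σ + u * I) - RA n M (σ + u * I)) * (1 - (pr n:ℂ)^(-(σ + u * I))) - ∑ r ∈ s, (r:ℂ)^(-(σ + u * I)) := by
            rw [sub_mul, st, RQ, Finset.prod_range_succ, ← RQ]; ring
          rw [e]
          have b1 : ‖(1 - (pr n:ℂ)^(-(σ + u * I)))‖ ≤ 2 := by
            refine (norm_sub_le _ _).trans ?_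
            have := norm_cpow_le_one (pr n) hp.one_le (σ + u * I) (by simp; linarith [hσ.1])
            simp only [norm_one]; linarith
          have b2 := norm_sub_le ((riemannZeta (σ + u * I) * RQ n (σ + u * I) - RA n M (σ + u * I)) * (1 - (pr n:ℂ)^(-(σ + u * I)))) (∑ r ∈ s, (r:ℂ)^(-(σ + u * I)))
          rw [norm_mul] at b2
          have b3 : ‖riemannZeta (σ + u * I) * RQ n (σ + u * I) - RA n M (σ + u * I)‖ * ‖(1 - (pr n:ℂ)^(-(σ + u * I)))‖ ≤ ‖riemannZeta (σ + u * I) * RQ n (σ + u * I) - RA n M (σ + u * I)‖ * 2 := by gcongr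
          have b4 := pow_le_pow_left₀ (norm_nonneg _) (b2.trans (add_le_add_left b3 _)) 2
          nlinarith [sq_nonneg (‖riemannZeta (σ + u * I) * RQ n (σ + u * I) - RA n M (σ + u * I)‖ * 2 - ‖∑ r ∈ s, (r:ℂ)^(-(σ + u * I))‖)]
      _ = 8 * (∫ u in (-T)..T, ‖riemannZeta (σ + u * I) * RQ n (σ + u * I) - RA n M (σ + u * I)‖^2) + 2 * ∫ u in (-T)..T, ‖∑ r ∈ s, (r:ℂ)^(-(σ + u * I))‖^2 := by
          rw [intervalIntegral.integral_add i1 i2, intervalIntegral.integral_const_mul, intervalIntegral.integral_const_mul]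
      _ ≤ η * T := by
          nlinarith [mul_le_mul_of_nonneg_right t3 hT]


noncomputable def smX {n : ℕ} (e : Fin n → ℕ) : ℕ := ∏ k : Fin n, (pr k)^(e k)

lemma smX_pos {n : ℕ} (e : Fin n → ℕ) : 0 < smX e := Finset.prod_pos fun k _ => pow_pos (pr_prime k).pos _

lemma smX_coprime {n : ℕ} (e : Fin n → ℕ) (r : ℕ) (hr : rough n r) : Nat.Coprime (smX e) r :=
  Nat.Coprime.prod_left fun k _ => Nat.Coprime.pow_left _ ((Nat.Prime.coprime_iff_not_dvd (pr_prime k)).2 (hr k k.2))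

lemma rough_pow {n r : ℕ} (hr : rough n r) (N : ℕ) : rough n (r^N) :=
  fun k hk h => hr k hk ((pr_prime k).dvd_of_dvd_pow h)

lemma smX_inj {n : ℕ} {e e' : Fin n → ℕ} (h : smX e = smX e') : e = e' := by
  funext j
  have key : ∀ f : Fin n → ℕ, (smX f).factorization (pr j) = f j := by
    intro f
    rw [smX, Nat.factorization_prod (g := fun k : Fin n => pr k ^ f k) (fun k _ => (pow_pos (pr_prime k).pos _).ne')]
    rw [Finset.sum_apply']
    rw [Finset.sum_eq_single j]
    · simp [Nat.Prime.factorization_pow (pr_prime j)]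
    · intro k _ hk
      rw [Nat.Prime.factorization_pow (pr_prime k), Finsupp.single_apply, if_neg]
      intro h; exact hk (Fin.ext (pr_inj h))
    · simp
  rw [← key e, ← key e', h]

lemma sm_unique {n : ℕ} {e e' : Fin n → ℕ} {Y Y' : ℕ} (hY : rough n Y) (hY' : rough n Y') (h : smX e * Y = smX e' * Y') : e = e' ∧ Y = Y' := by
  have d1 : smX e ∣ smX e' := (smX_coprime e Y' hY').dvd_of_dvd_mul_right (Dvd.intro _ h)
  have d2 : smX e' ∣ smX e := (smX_coprime e' Y hY).dvd_of_dvd_mul_right (Dvd.intro _ h.symm)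
  have h3 := Nat.dvd_antisymm d1 d2
  refine ⟨smX_inj h3, ?_⟩
  rw [h3] at h
  exact Nat.eq_of_mul_eq_mul_left (smX_pos e') h

noncomputable def frq {n : ℕ} (c0 : ℤ) (x : (Fin n → ℕ) × ℕ) : ℝ := (∑ k : Fin n, (x.1 k : ℝ) * Real.log (pr k)) + c0 * Real.log x.2

lemma log_smX {n : ℕ} (e : Fin n → ℕ) : Real.log (smX e) = ∑ k : Fin n, (e k : ℝ) * Real.log (pr k) := by
  rw [smX]; push_cast
  rw [Real.log_prod (fun k _ => by have := (pr_prime k).pos; positivity)]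
  simp

lemma frq_inj {n : ℕ} (c0 : ℤ) (hc : c0 ≠ 0) {x y : (Fin n → ℕ) × ℕ} (hx : 1 ≤ x.2 ∧ rough n x.2) (hy : 1 ≤ y.2 ∧ rough n y.2)
    (h : frq c0 x = frq c0 y) : x = y := by
  unfold frq at h
  rw [← log_smX, ← log_smX] at h
  have X0 : (0:ℝ) < smX x.1 := by exact_mod_cast smX_pos _
  have Y0 : (0:ℝ) < smX y.1 := by exact_mod_cast smX_pos _
  have r0 : (0:ℝ) < x.2 := by exact_mod_cast hx.1
  have s0 : (0:ℝ) < y.2 := by exact_mod_cast hy.1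
  obtain ⟨N, rfl | rfl⟩ := Int.eq_nat_or_neg c0
  · have hN : N ≠ 0 := by simpa using hc
    push_cast at h
    rw [← Real.log_pow, ← Real.log_pow, ← Real.log_mul X0.ne' (by positivity), ← Real.log_mul Y0.ne' (by positivity)] at h
    have h2 := Real.log_injOn_pos (Set.mem_Ioi.2 (by positivity)) (Set.mem_Ioi.2 (by positivity)) h
    have h3 : smX x.1 * x.2^N = smX y.1 * y.2^N := by exact_mod_cast h2
    obtain ⟨h4, h5⟩ := sm_unique (rough_pow hx.2 N) (rough_pow hy.2 N) h3
    exact Prod.ext h4 (Nat.pow_left_injective hN h5)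
  · have hN : N ≠ 0 := by simpa using hc
    push_cast at h
    have h : Real.log (smX x.1) + N * Real.log y.2 = Real.log (smX y.1) + N * Real.log x.2 := by linarith
    rw [← Real.log_pow, ← Real.log_pow, ← Real.log_mul X0.ne' (by positivity), ← Real.log_mul Y0.ne' (by positivity)] at h
    have h2 := Real.log_injOn_pos (Set.mem_Ioi.2 (by positivity)) (Set.mem_Ioi.2 (by positivity)) h
    have h3 : smX x.1 * y.2^N = smX y.1 * x.2^N := by exact_mod_cast h2
    obtain ⟨h4, h5⟩ := sm_unique (rough_pow hy.2 N) (rough_pow hx.2 N) h3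
    exact Prod.ext h4 (Nat.pow_left_injective hN h5.symm)

/-- `p_k^{-it}` -/
noncomputable def PP (k : ℕ) (t : ℝ) : ℂ := cexp (-(I * t * (Real.log (pr k) : ℝ)))

lemma weight_ms (n : ℕ) (E : Fin n → Finset ℕ) (c : Fin n → ℕ → ℂ) (c0 : ℤ) (hc0 : c0 ≠ 0) (R : Finset ℕ)
    (hR : ∀ r ∈ R, 1 ≤ r ∧ rough n r) :
    ∃ C : ℝ, 0 ≤ C ∧ ∀ d : ℕ → ℂ, ∀ T : ℝ,
      |(∫ t in (0:ℝ)..T, ‖∏ k : Fin n, ∑ j ∈ E k, c k j * PP k t ^ j‖^2 * ‖∑ r ∈ R, d r * cexp (-(I * (c0 * t) * (Real.log r : ℝ)))‖^2)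
        - T * ((∏ k : Fin n, ∑ j ∈ E k, ‖c k j‖^2) * ∑ r ∈ R, ‖d r‖^2)| ≤ C * (∑ r ∈ R, ‖d r‖)^2 := by
  classical
  obtain ⟨C, hC0, hC⟩ := parseval (Fintype.piFinset E ×ˢ R) (frq c0) (by
    intro x hx y hy h
    rw [Finset.mem_coe, Finset.mem_product] at hx hy
    exact frq_inj c0 hc0 (hR _ hx.2) (hR _ hy.2) h)
  refine ⟨C * (∏ k : Fin n, ∑ j ∈ E k, ‖c k j‖)^2, by positivity, fun d T => ?_⟩
  have := hC (fun x => (∏ k : Fin n, c k (x.1 k)) * d x.2) T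
  have e1 : ∀ t : ℝ, ∑ x ∈ Fintype.piFinset E ×ˢ R, (∏ k : Fin n, c k (x.1 k)) * d x.2 * cexp (-(I * t * frq c0 x)) =
      (∏ k : Fin n, ∑ j ∈ E k, c k j * PP k t ^ j) * ∑ r ∈ R, d r * cexp (-(I * (c0 * t) * (Real.log r : ℝ))) := by
    intro t
    rw [Finset.prod_univ_sum, Finset.sum_mul_sum, Finset.sum_product]
    refine Finset.sum_congr rfl fun e _ => Finset.sum_congr rfl fun r _ => ?_
    rw [Finset.prod_mul_distrib]
    have : cexp (-(I * t * frq c0 (e, r))) = (∏ k : Fin n, PP k t ^ e k) * cexp (-(I * (c0 * t) * (Real.log r : ℝ))) := by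
      unfold PP frq
      simp_rw [← Complex.exp_nat_mul]
      rw [← Complex.exp_sum, ← Complex.exp_add]
      congr 1
      push_cast
      rw [mul_add, neg_add, Finset.mul_sum, ← Finset.sum_neg_distrib]
      congr 1
      · exact Finset.sum_congr rfl fun k _ => by ring
      · ring
    rw [this]; ring
  have e2 : ∑ x ∈ Fintype.piFinset E ×ˢ R, ‖(∏ k : Fin n, c k (x.1 k)) * d x.2‖^2 = (∏ k : Fin n, ∑ j ∈ E k, ‖c k j‖^2) * ∑ r ∈ R, ‖d r‖^2 := by
    rw [Finset.prod_univ_sum, Finset.sum_mul_sum, Finset.sum_product]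
    refine Finset.sum_congr rfl fun e _ => Finset.sum_congr rfl fun r _ => ?_
    rw [norm_mul, mul_pow, norm_prod, Finset.prod_pow]
  have e3 : ∑ x ∈ Fintype.piFinset E ×ˢ R, ‖(∏ k : Fin n, c k (x.1 k)) * d x.2‖ = (∏ k : Fin n, ∑ j ∈ E k, ‖c k j‖) * ∑ r ∈ R, ‖d r‖ := by
    rw [Finset.prod_univ_sum, Finset.sum_mul_sum, Finset.sum_product]
    refine Finset.sum_congr rfl fun e _ => Finset.sum_congr rfl fun r _ => ?_
    rw [norm_mul, norm_prod]
  simp_rw [e1] at this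
  rw [e2, e3, mul_pow] at this
  simp_rw [norm_mul, mul_pow] at this
  rw [mul_assoc C]
  exact this


noncomputable def SS (n L : ℕ) (θ : ℕ → ℂ) (t : ℝ) : ℂ := ∏ k : Fin n, ∑ j ∈ Finset.range L, θ k ^ j * PP k t ^ j

lemma PP_norm (k : ℕ) (t : ℝ) : ‖PP k t‖ = 1 := by
  rw [PP, show -(I * t * (Real.log (pr k) : ℝ)) = ((-(t * Real.log (pr k)) : ℝ) : ℂ) * I by push_cast; ring, Complex.norm_exp_ofReal_mul_I]

lemma PP_cont (k : ℕ) : Continuous (PP k) := by unfold PP; fun_prop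

lemma SS_cont (n L : ℕ) (θ : ℕ → ℂ) : Continuous (SS n L θ) := by
  unfold SS
  exact continuous_finsetProd _ fun k _ => continuous_finsetSum _ fun j _ => continuous_const.mul ((PP_cont k).pow j)

lemma SS_le (n L : ℕ) (θ : ℕ → ℂ) (hθ : ∀ k, ‖θ k‖ = 1) (t : ℝ) : ‖SS n L θ t‖^2 ≤ ((L:ℝ)^n)^2 := by
  refine pow_le_pow_left₀ (norm_nonneg _) ?_ 2
  rw [SS, norm_prod]
  calc _ ≤ ∏ k : Fin n, (L:ℝ) := by
        refine Finset.prod_le_prod (fun _ _ => norm_nonneg _) fun k _ => ?_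
        refine (norm_sum_le _ _).trans ?_
        simp [hθ, PP_norm]
    _ = _ := by simp

lemma SS_mean (n L : ℕ) (hL : 1 ≤ L) (θ : ℕ → ℂ) (hθ : ∀ k, ‖θ k‖ = 1) :
    ∀ᶠ T : ℝ in atTop, (L:ℝ)^n / 2 * T ≤ ∫ t in (0:ℝ)..T, ‖SS n L θ t‖^2 := by
  obtain ⟨C, hC0, hC⟩ := weight_ms n (fun _ => Finset.range L) (fun k j => θ k ^ j) 1 one_ne_zero {1} (by
    intro r hr; rw [Finset.mem_singleton] at hr; subst hr
    exact ⟨le_rfl, fun k _ h => (pr_prime k).one_lt.ne' (Nat.dvd_one.1 h)⟩)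
  have hLp : (1:ℝ) ≤ (L:ℝ)^n := one_le_pow₀ (by exact_mod_cast hL)
  filter_upwards [eventually_ge_atTop (2 * C)] with T hT
  have h := hC (fun _ => 1) T
  simp [hθ, -norm_prod] at h
  have h2 := (abs_le.1 h).1
  unfold SS
  nlinarith

lemma SS_X (n L : ℕ) (hL : 1 ≤ L) (θ : ℕ → ℂ) (hθ : ∀ k, ‖θ k‖ = 1) (k : Fin n) :
    ∀ᶠ T : ℝ in atTop, ∫ t in (0:ℝ)..T, ‖SS n L θ t‖^2 * ‖θ k * PP k t - 1‖^2 ≤ 3 / L * (L:ℝ)^n * T := by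
  have hL0 : L ≠ 0 := by omega
  have hLr : (0:ℝ) < L := by exact_mod_cast hL
  obtain ⟨C, hC0, hC⟩ := weight_ms n (fun k' => if k' = k then {0, L} else Finset.range L)
     (fun k' j => if k' = k then (if j = 0 then -1 else θ k ^ L) else θ k' ^ j) 1 one_ne_zero {1} (by
    intro r hr; rw [Finset.mem_singleton] at hr; subst hr
    exact ⟨le_rfl, fun k _ h => (pr_prime k).one_lt.ne' (Nat.dvd_one.1 h)⟩)
  have hn : n = (n - 1) + 1 := by have := k.2; omega
  have hLp : (1:ℝ) ≤ (L:ℝ)^(n-1) := one_le_pow₀ (by exact_mod_cast hL)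
  filter_upwards [eventually_ge_atTop C] with T hT
  have h := hC (fun _ => 1) T
  have e1 : ∀ t : ℝ, ‖∏ k' : Fin n, ∑ j ∈ (if k' = k then {0, L} else Finset.range L), (if k' = k then (if j = 0 then -1 else θ k ^ L) else θ k' ^ j) * PP k' t ^ j‖^2
      = ‖SS n L θ t‖^2 * ‖θ k * PP k t - 1‖^2 := by
    intro t
    rw [← mul_pow, ← norm_mul]
    congr 2
    rw [SS, ← Finset.mul_prod_erase _ _ (Finset.mem_univ k), ← Finset.mul_prod_erase _ _ (Finset.mem_univ k)]
    have : ∏ k' ∈ Finset.univ.erase k, ∑ j ∈ (if k' = k then {0, L} else Finset.range L), (if k' = k then (if j = 0 then -1 else θ k ^ L) else θ k' ^ j) * PP k' t ^ j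
       = ∏ k' ∈ Finset.univ.erase k, ∑ j ∈ Finset.range L, θ k' ^ j * PP k' t ^ j := by
      refine Finset.prod_congr rfl fun k' hk' => ?_
      simp [Finset.ne_of_mem_erase hk']
    rw [this]
    simp only [if_true]
    rw [Finset.sum_pair (Ne.symm hL0)]
    simp only [if_true, if_neg hL0]
    have g := geom_sum_mul (θ k * PP k t) L
    simp_rw [mul_pow] at g
    rw [mul_right_comm, g]; ring
  have e2 : ∏ k' : Fin n, ∑ j ∈ (if k' = k then {0, L} else Finset.range L), ‖(if k' = k then (if j = 0 then -1 else θ k ^ L) else θ k' ^ j)‖^2 = 2 * (L:ℝ)^(n-1) := by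
    rw [← Finset.mul_prod_erase _ _ (Finset.mem_univ k)]
    have : ∏ k' ∈ Finset.univ.erase k, ∑ j ∈ (if k' = k then {0, L} else Finset.range L), ‖(if k' = k then (if j = 0 then -1 else θ k ^ L) else θ k' ^ j)‖^2
       = ∏ k' ∈ Finset.univ.erase k, (L:ℝ) := by
      refine Finset.prod_congr rfl fun k' hk' => ?_
      simp [Finset.ne_of_mem_erase hk', hθ]
    rw [this]
    simp only [if_true]
    rw [Finset.sum_pair (Ne.symm hL0)]
    simp only [if_true, if_neg hL0]
    simp [hθ]; norm_num
  simp_rw [e1] at h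
  rw [e2] at h
  simp at h
  have h2 := (abs_le.1 h).2
  have e3 : 3 / L * (L:ℝ)^n * T = 3 * (L:ℝ)^(n-1) * T := by
    rw [hn, pow_succ]; simp only [Nat.add_sub_cancel]; field_simp
  rw [e3]
  nlinarith

lemma cpow_split' (r : ℕ) (hr : 1 ≤ r) (s : ℂ) (x : ℝ) : (r:ℂ)^(-(s + x * I)) = (r:ℂ)^(-s) * cexp (-(I * x * (Real.log r : ℝ))) := by
  have : (r:ℂ) ≠ 0 := by exact_mod_cast (by omega : r ≠ 0)
  rw [neg_add, Complex.cpow_add _ _ this, Complex.cpow_def_of_ne_zero this (-(x * I)), Complex.natCast_log]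
  congr 2; ring

lemma one_mem_RF (n M : ℕ) (hM : 1 ≤ M) : 1 ∈ RF n M :=
  mem_RF.2 ⟨⟨le_rfl, hM⟩, fun k _ h => (pr_prime k).one_lt.ne' (Nat.dvd_one.1 h)⟩

lemma SS_A (n L M : ℕ) (hM : 1 ≤ M) (hL : 1 ≤ L) (θ : ℕ → ℂ) (hθ : ∀ k, ‖θ k‖ = 1) (c0 : ℤ) (hc0 : c0 ≠ 0) (σ₁ : ℝ) (h1 : 0 ≤ σ₁) (κ : ℝ) (hκ : 0 < κ)
    (hb : ∑ r ∈ (RF n M).erase 1, (r:ℝ)^(-2*σ₁) ≤ κ / 2) :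
    ∀ᶠ T : ℝ in atTop, ∀ s : ℂ, σ₁ ≤ s.re → ∫ t in (0:ℝ)..T, ‖SS n L θ t‖^2 * ‖RA n M (s + ((c0 * t : ℝ):ℂ) * I) - 1‖^2 ≤ κ * (L:ℝ)^n * T := by
  set R := (RF n M).erase 1 with hR
  have hR1 : ∀ r ∈ R, 1 ≤ r ∧ rough n r := fun r hr => by
    have := mem_RF.1 (Finset.mem_of_mem_erase hr)
    exact ⟨this.1.1, this.2⟩
  obtain ⟨C, hC0, hC⟩ := weight_ms n (fun _ => Finset.range L) (fun k j => θ k ^ j) c0 hc0 R hR1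
  have hLp : (1:ℝ) ≤ (L:ℝ)^n := one_le_pow₀ (by exact_mod_cast hL)
  filter_upwards [eventually_ge_atTop (C * (R.card:ℝ)^2 / (κ/2)), eventually_ge_atTop 0] with T hT hT0 s hs
  rw [div_le_iff₀ (by positivity)] at hT
  have e : ∀ t : ℝ, RA n M (s + ((c0 * t : ℝ):ℂ) * I) - 1 = ∑ r ∈ R, (r:ℂ)^(-s) * cexp (-(I * (c0 * t) * (Real.log r : ℝ))) := by
    intro t
    rw [RA, ← Finset.add_sum_erase _ _ (one_mem_RF n M hM)]
    simp only [Nat.cast_one, Complex.one_cpow, add_sub_cancel_left]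
    refine Finset.sum_congr rfl fun r hr => ?_
    rw [cpow_split' r (hR1 r hr).1]; push_cast; rfl
  have h := hC (fun r => (r:ℂ)^(-s)) T
  simp_rw [e]
  have d1 : ∑ r ∈ R, ‖(r:ℂ)^(-s)‖ ≤ R.card := by
    rw [Finset.card_eq_sum_ones]; push_cast
    exact Finset.sum_le_sum fun r hr => norm_cpow_le_one r (hR1 r hr).1 s (by linarith)
  have d2 : ∑ r ∈ R, ‖(r:ℂ)^(-s)‖^2 ≤ κ/2 := by
    refine le_trans (Finset.sum_le_sum fun r hr => ?_) hb
    have : (0:ℝ) < r := by exact_mod_cast (hR1 r hr).1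
    rw [Complex.norm_natCast_cpow_of_pos (hR1 r hr).1, ← Real.rpow_natCast, ← Real.rpow_mul this.le]
    exact Real.rpow_le_rpow_of_exponent_le (by exact_mod_cast (hR1 r hr).1) (by simp; linarith)
  have d3 : C * (∑ r ∈ R, ‖(r:ℂ)^(-s)‖)^2 ≤ C * (R.card:ℝ)^2 := by gcongr
  have e4 : ∏ k : Fin n, ∑ j ∈ Finset.range L, ‖θ k ^ j‖^2 = (L:ℝ)^n := by simp [hθ]
  rw [e4] at h
  have h2 := (abs_le.1 h).2
  have d4 : T * ((L:ℝ)^n * ∑ r ∈ R, ‖(r:ℂ)^(-s)‖^2) ≤ T * ((L:ℝ)^n * (κ/2)) := by gcongr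
  have d5 : T * (κ/2) * 1 ≤ T * (κ/2) * (L:ℝ)^n := by gcongr
  unfold SS
  linarith


lemma subst_bound (f : ℝ → ℝ) (hf : Continuous f) (h0 : ∀ x, 0 ≤ f x) (c0 : ℤ) (hc0 : c0 ≠ 0) (y Y T : ℝ) (hy : |y| ≤ Y) (hT : 0 ≤ T) :
    ∫ t in (0:ℝ)..T, f (y + c0 * t) ≤ ∫ u in (-(|(c0:ℝ)| * T + Y))..(|(c0:ℝ)| * T + Y), f u := by
  obtain ⟨y1, y2⟩ := abs_le.1 hy
  have hc : (c0:ℝ) ≠ 0 := by exact_mod_cast hc0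
  have hi : ∀ a b, IntervalIntegrable f volume a b := fun a b => hf.intervalIntegrable _ _
  rw [intervalIntegral.integral_comp_add_mul f hc y, smul_eq_mul, mul_zero, add_zero]
  rcases lt_or_gt_of_ne hc0 with h | h
  · have h1 : (c0:ℝ) ≤ -1 := by exact_mod_cast (by omega : c0 ≤ -1)
    rw [abs_of_neg (by linarith), intervalIntegral.integral_symm]
    have hle : y + c0 * T ≤ y := by nlinarith
    have p : 0 ≤ ∫ u in (y + c0 * T)..y, f u := intervalIntegral.integral_nonneg hle fun u _ => h0 u
    have m : ∫ u in (y + c0 * T)..y, f u ≤ ∫ u in (-(-(c0:ℝ) * T + Y))..(-(c0:ℝ) * T + Y), f u :=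
      intervalIntegral.integral_mono_interval (by nlinarith) hle (by nlinarith) (Eventually.of_forall h0) (hi _ _)
    refine le_trans ?_ m
    have : (c0:ℝ)⁻¹ * -(∫ u in (y + c0 * T)..y, f u) = (-(c0:ℝ))⁻¹ * (∫ u in (y + c0 * T)..y, f u) := by rw [inv_neg]; ring
    rw [this]
    exact mul_le_of_le_one_left p (inv_le_one_of_one_le₀ (by linarith))
  · have h1 : (1:ℝ) ≤ c0 := by exact_mod_cast (by omega : 1 ≤ c0)
    rw [abs_of_pos (by linarith)]
    have hle : y ≤ y + c0 * T := by nlinarith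
    have p : 0 ≤ ∫ u in y..(y + c0 * T), f u := intervalIntegral.integral_nonneg hle fun u _ => h0 u
    have m : ∫ u in y..(y + c0 * T), f u ≤ ∫ u in (-((c0:ℝ) * T + Y))..((c0:ℝ) * T + Y), f u :=
      intervalIntegral.integral_mono_interval (by nlinarith) hle (by nlinarith) (Eventually.of_forall h0) (hi _ _)
    refine le_trans ?_ m
    exact mul_le_of_le_one_left p (inv_le_one_of_one_le₀ (by linarith))

lemma rough_ge (n r : ℕ) (hr : rough n r) (h1 : 1 ≤ r) (h2 : r ≠ 1) : n ≤ r := by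
  have hp := Nat.minFac_prime h2
  obtain ⟨j, hj⟩ := pr_surj _ hp
  have : n ≤ j := by
    by_contra h
    exact hr j (by omega) (hj ▸ Nat.minFac_dvd r)
  calc n ≤ j := this
    _ ≤ pr j := pr_mono.le_apply
    _ ≤ r := hj ▸ Nat.minFac_le h1

lemma tail_ms (σ₁ σ₂ Y : ℝ) (h1 : 1/2 < σ₁) (h2 : σ₂ < 1) (c0 : ℤ) (hc0 : c0 ≠ 0) (κ : ℝ) (hκ : 0 < κ) :
    ∃ n₀ : ℕ, ∀ n ≥ n₀, ∀ L : ℕ, 1 ≤ L → ∀ θ : ℕ → ℂ, (∀ k, ‖θ k‖ = 1) → ∀ᶠ T : ℝ in atTop, ∀ s : ℂ, σ₁ ≤ s.re → s.re ≤ σ₂ → |s.im| ≤ Y →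
      ∫ t in (0:ℝ)..T, ‖SS n L θ t‖^2 * ‖riemannZeta (s + ((c0 * t : ℝ):ℂ) * I) * RQ n (s + ((c0 * t : ℝ):ℂ) * I) - 1‖^2 ≤ κ * (L:ℝ)^n * T := by
  obtain ⟨M₀, hM₀⟩ := tail_small σ₁ h1 (κ/8) (by positivity)
  refine ⟨M₀ + 1, fun n hn L hL θ hθ => ?_⟩
  have hL0 : (0:ℝ) < L := by exact_mod_cast hL
  have hcp : (1:ℝ) ≤ |(c0:ℝ)| := by exact_mod_cast Int.one_le_abs hc0
  set D := ((L:ℝ)^n)^2 with hD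
  have hD0 : 0 < D := by positivity
  obtain ⟨M₁, hM₁⟩ := rough_ms σ₁ σ₂ h1 h2 n (κ * (L:ℝ)^n / (8 * D * |(c0:ℝ)|)) (by positivity)
  set M := M₁ + 1
  have q1 := hM₁ M (by omega)
  have q2 := SS_A n L M (by omega) hL θ hθ c0 hc0 σ₁ (by linarith) (κ/4) (by positivity) (by
    refine (hM₀ _ fun r hr => ?_).trans (by linarith)
    have h3 := mem_RF.1 (Finset.mem_of_mem_erase hr)
    have := rough_ge n r h3.2 h3.1.1 (Finset.ne_of_mem_erase hr)
    omega)
  have t1 : Tendsto (fun T : ℝ => |(c0:ℝ)| * T + Y) atTop atTop :=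
    tendsto_atTop_add_const_right _ _ (tendsto_id.const_mul_atTop (by linarith))
  filter_upwards [t1.eventually q1, q2, eventually_ge_atTop 0, eventually_ge_atTop Y] with T r1 r2 hT hTY s hs1 hs2 hs3
  have r1 := r1 s.re ⟨hs1, hs2⟩
  have r2 := r2 s hs1
  set F : ℝ → ℂ := fun u => riemannZeta (s.re + u * I) * RQ n (s.re + u * I) - RA n M (s.re + u * I) with hF
  have cF : Continuous F := ((zeta_cont s.re (by linarith)).mul (RQ_cont n s.re)).sub (RA_cont n M s.re)
  have r3 := subst_bound (fun u => ‖F u‖^2) (cF.norm.pow 2) (fun _ => by positivity) c0 hc0 s.im Y T hs3 hT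
  have ew : ∀ t : ℝ, s + ((c0 * t : ℝ):ℂ) * I = s.re + ((s.im + c0 * t : ℝ):ℂ) * I := by
    intro t
    conv_lhs => rw [← Complex.re_add_im s]
    push_cast; ring
  simp_rw [ew] at r2 ⊢
  have cl : Continuous fun t : ℝ => s.im + c0 * t := by fun_prop
  have c1 : Continuous fun t : ℝ => F (s.im + c0 * t) := cF.comp cl
  have c2 : Continuous fun t : ℝ => RA n M (s.re + ((s.im + c0 * t : ℝ):ℂ) * I) - 1 := ((RA_cont n M s.re).comp cl).sub continuous_const
  have c3 : Continuous fun t : ℝ => riemannZeta (s.re + ((s.im + c0 * t : ℝ):ℂ) * I) * RQ n (s.re + ((s.im + c0 * t : ℝ):ℂ) * I) - 1 :=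
    (((zeta_cont s.re (by linarith)).comp cl).mul ((RQ_cont n s.re).comp cl)).sub continuous_const
  have cS := ((SS_cont n L θ).norm.pow 2)
  have i1 : IntervalIntegrable (fun t : ℝ => 2 * D * ‖F (s.im + c0 * t)‖^2) volume 0 T := ((c1.norm.pow 2).const_mul _).intervalIntegrable _ _
  have i2 : IntervalIntegrable (fun t : ℝ => 2 * (‖SS n L θ t‖^2 * ‖RA n M (s.re + ((s.im + c0 * t : ℝ):ℂ) * I) - 1‖^2)) volume 0 T :=
    ((cS.mul (c2.norm.pow 2)).const_mul _).intervalIntegrable _ _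
  calc _ ≤ ∫ t in (0:ℝ)..T, (2 * D * ‖F (s.im + c0 * t)‖^2 + 2 * (‖SS n L θ t‖^2 * ‖RA n M (s.re + ((s.im + c0 * t : ℝ):ℂ) * I) - 1‖^2)) := by
        refine intervalIntegral.integral_mono_on hT ((cS.mul (c3.norm.pow 2)).intervalIntegrable _ _) (i1.add i2) ?_
        intro t _
        have hS := SS_le n L θ hθ t
        have e : riemannZeta (s.re + ((s.im + c0 * t : ℝ):ℂ) * I) * RQ n (s.re + ((s.im + c0 * t : ℝ):ℂ) * I) - 1 = F (s.im + c0 * t) + (RA n M (s.re + ((s.im + c0 * t : ℝ):ℂ) * I) - 1) := by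
          simp only [hF]; ring
        rw [e]
        set x := F (s.im + c0 * t)
        set y := RA n M (s.re + ((s.im + c0 * t : ℝ):ℂ) * I) - 1
        have b4 : ‖x + y‖^2 ≤ 2 * ‖x‖^2 + 2 * ‖y‖^2 := by
          have := pow_le_pow_left₀ (norm_nonneg _) (norm_add_le x y) 2
          nlinarith [sq_nonneg (‖x‖ - ‖y‖)]
        have b5 := mul_le_mul_of_nonneg_left b4 (sq_nonneg ‖SS n L θ t‖)
        have b6 := mul_le_mul_of_nonneg_right hS (sq_nonneg ‖x‖)
        linarith
    _ = 2 * D * (∫ t in (0:ℝ)..T, ‖F (s.im + c0 * t)‖^2) + 2 * ∫ t in (0:ℝ)..T, ‖SS n L θ t‖^2 * ‖RA n M (s.re + ((s.im + c0 * t : ℝ):ℂ) * I) - 1‖^2 := by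
        rw [intervalIntegral.integral_add i1 i2, intervalIntegral.integral_const_mul, intervalIntegral.integral_const_mul]
    _ ≤ 2 * D * (κ * (L:ℝ)^n / (8 * D * |(c0:ℝ)|) * (2 * |(c0:ℝ)| * T)) + 2 * (κ/4 * (L:ℝ)^n * T) := by
        have : |(c0:ℝ)| * T + Y ≤ 2 * |(c0:ℝ)| * T := by nlinarith
        have u1 := mul_le_mul_of_nonneg_left this (show 0 ≤ κ * (L:ℝ)^n / (8 * D * |(c0:ℝ)|) by positivity)
        have u2 := mul_le_mul_of_nonneg_left ((r3.trans r1).trans u1) (show 0 ≤ 2 * D by positivity)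
        linarith
    _ = _ := by
        field_simp; ring


lemma inv_bound (z : ℂ) (hz : ‖z‖ ≤ 3/4) : ‖(1 - z)⁻¹‖ ≤ Real.exp (z.re + 2 * ‖z‖^2) := by
  have hz1 : ‖z‖ < 1 := by linarith
  have h := Complex.norm_log_one_sub_inv_sub_self_le hz1
  have hne : (1 - z)⁻¹ ≠ 0 := by
    refine inv_ne_zero (sub_ne_zero.2 ?_); rintro rfl; norm_num at hz
  rw [← Complex.exp_log hne, Complex.norm_exp]
  apply Real.exp_le_exp.2
  have h2 := (Complex.abs_re_le_norm _).trans h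
  have h3 := (abs_le.1 h2).2
  rw [Complex.sub_re] at h3
  have h4 : (1 - ‖z‖)⁻¹ ≤ 4 := by
    rw [inv_le_comm₀ (by linarith) (by norm_num)]; linarith
  have h5 : ‖z‖^2 * (1 - ‖z‖)⁻¹ / 2 ≤ ‖z‖^2 * 4 / 2 := by gcongr
  linarith

lemma exp_diff (s : ℂ) (hs : 0 < s.re) (u v : ℝ) (huv : u ≤ v) :
    ‖cexp (-(s * v)) - cexp (-(s * u))‖ ≤ ‖s‖ / s.re * (Real.exp (-(s.re * u)) - Real.exp (-(s.re * v))) := by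
  have d : ∀ x : ℝ, HasDerivAt (fun x : ℝ => cexp (-(s * x)) - cexp (-(s * u))) (cexp (-(s * x)) * (-(s * 1))) x := by
    intro x
    have h1 : HasDerivAt (fun x : ℝ => (x:ℂ)) 1 x := Complex.ofRealCLM.hasDerivAt
    exact (((h1.const_mul s).neg).cexp).sub_const _
  have d2 : ∀ x : ℝ, HasDerivAt (fun x : ℝ => ‖s‖ / s.re * (Real.exp (-(s.re * u)) - Real.exp (-(s.re * x)))) (‖s‖ * Real.exp (-(s.re * x))) x := by
    intro x
    have h1 := ((((hasDerivAt_id x).const_mul s.re).neg.exp).const_sub (Real.exp (-(s.re * u)))).const_mul (‖s‖ / s.re)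
    refine h1.congr_deriv ?_
    simp only [id]; field_simp; rfl
  refine image_norm_le_of_norm_deriv_right_le_deriv_boundary (a := u) (b := v) (f := fun x : ℝ => cexp (-(s * x)) - cexp (-(s * u)))
    (fun x _ => (d x).continuousAt.continuousWithinAt) (fun x _ => (d x).hasDerivWithinAt) (by simp) d2 ?_ ⟨huv, le_rfl⟩
  intro x _
  rw [norm_mul, Complex.norm_exp]
  simp
  exact (mul_comm _ _).le

lemma abel_bound (ρ : ℂ) (hρ : ‖ρ‖ = 1) (hρ1 : ρ ≠ 1) (x : ℕ → ℂ) (n : ℕ) :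
    ‖∑ k ∈ Finset.range n, ρ^k * x k‖ ≤ 2 / ‖ρ - 1‖ * (‖x n‖ + ∑ k ∈ Finset.range n, ‖x k - x (k+1)‖) := by
  set G : ℕ → ℂ := fun k => (ρ^k - 1) / (ρ - 1) with hG
  have hne : ρ - 1 ≠ 0 := sub_ne_zero.2 hρ1
  have hGb : ∀ k, ‖G k‖ ≤ 2 / ‖ρ - 1‖ := by
    intro k
    simp only [hG, norm_div]
    gcongr
    refine (norm_sub_le _ _).trans ?_
    simp [hρ]; norm_num
  have hGs : ∀ k, G (k+1) = G k + ρ^k := by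
    intro k; simp only [hG]; field_simp; ring
  have key : ∀ n, ∑ k ∈ Finset.range n, ρ^k * x k = G n * x n + ∑ k ∈ Finset.range n, G (k+1) * (x k - x (k+1)) := by
    intro n
    induction n with
    | zero => simp [hG]
    | succ n ih => rw [Finset.sum_range_succ, ih, Finset.sum_range_succ, hGs n]; ring
  rw [key, mul_add, Finset.mul_sum]
  refine (norm_add_le _ _).trans (add_le_add ?_ ((norm_sum_le _ _).trans (Finset.sum_le_sum fun k _ => ?_)))
  · rw [norm_mul]; gcongr; exact hGb n
  · rw [norm_mul]; gcongr; exact hGb (k+1)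

lemma pr_cpow (k : ℕ) (s : ℂ) : (pr k:ℂ)^(-s) = cexp (-(s * (Real.log (pr k) : ℝ))) := by
  have : (pr k:ℂ) ≠ 0 := by exact_mod_cast (pr_prime k).ne_zero
  rw [Complex.cpow_def_of_ne_zero this, Complex.natCast_log]; congr 1; ring

lemma pr_cpow_norm (k : ℕ) (s : ℂ) : ‖(pr k:ℂ)^(-s)‖ = (pr k:ℝ)^(-s.re) := by
  rw [Complex.norm_natCast_cpow_of_pos (pr_prime k).pos]; simp

lemma pr_norm_le (k : ℕ) (s : ℂ) (hs : 1/2 ≤ s.re) : ‖(pr k:ℂ)^(-s)‖ ≤ 3/4 := by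
  rw [pr_cpow_norm]
  have h2 : (2:ℝ) ≤ pr k := by exact_mod_cast (pr_prime k).two_le
  calc (pr k:ℝ)^(-s.re) ≤ (2:ℝ)^(-s.re) := Real.rpow_le_rpow_of_nonpos (by norm_num) h2 (by linarith)
    _ ≤ (2:ℝ)^(-(1/2):ℝ) := Real.rpow_le_rpow_of_exponent_le (by norm_num) (by linarith)
    _ ≤ 3/4 := by
      rw [Real.rpow_neg (by norm_num), ← Real.sqrt_eq_rpow, inv_le_comm₀ (by positivity) (by norm_num)]
      apply Real.le_sqrt_of_sq_le; norm_num

lemma unif_bound (ρ : ℂ) (hρ : ‖ρ‖ = 1) (hρ1 : ρ ≠ 1) (σ₁ R : ℝ) (h1 : 1/2 < σ₁) :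
    ∃ B : ℝ, 0 < B ∧ ∀ n : ℕ, ∀ s : ℂ, σ₁ ≤ s.re → ‖s‖ ≤ R → ‖∏ k ∈ Finset.range n, (1 - ρ^k * (pr k:ℂ)^(-s))⁻¹‖ ≤ B := by
  have hsum : Summable (fun k : ℕ => (pr k:ℝ)^(-2*σ₁)) :=
    (Real.summable_nat_rpow.2 (by linarith : -2*σ₁ < -1)).comp_injective (i := pr) (fun _ _ h => pr_inj h)
  refine ⟨Real.exp (2 / ‖ρ - 1‖ * (1 + 2 * R) + 2 * ∑' k, (pr k:ℝ)^(-2*σ₁)), Real.exp_pos _, fun n s hs hR => ?_⟩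
  have hs0 : 0 < s.re := by linarith
  have hR0 : 0 ≤ R := (norm_nonneg _).trans hR
  have nz : ∀ k, ‖ρ^k * (pr k:ℂ)^(-s)‖ = (pr k:ℝ)^(-s.re) := by
    intro k; rw [norm_mul, norm_pow, hρ, one_pow, one_mul, pr_cpow_norm]
  rw [norm_prod]
  calc _ ≤ ∏ k ∈ Finset.range n, Real.exp ((ρ^k * (pr k:ℂ)^(-s)).re + 2 * ‖ρ^k * (pr k:ℂ)^(-s)‖^2) := by
        refine Finset.prod_le_prod (fun _ _ => norm_nonneg _) fun k _ => inv_bound _ ?_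
        rw [nz, ← pr_cpow_norm]; exact pr_norm_le k s (by linarith)
    _ = Real.exp ((∑ k ∈ Finset.range n, ρ^k * (pr k:ℂ)^(-s)).re + 2 * ∑ k ∈ Finset.range n, ‖ρ^k * (pr k:ℂ)^(-s)‖^2) := by
        rw [← Real.exp_sum, Finset.sum_add_distrib, Complex.re_sum, Finset.mul_sum]
    _ ≤ _ := by
        apply Real.exp_le_exp.2
        refine add_le_add ?_ (mul_le_mul_of_nonneg_left ?_ (by norm_num))
        · refine (Complex.re_le_norm _).trans ((abel_bound ρ hρ hρ1 _ n).trans ?_)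
          refine mul_le_mul_of_nonneg_left (add_le_add ?_ ?_) (by positivity)
          · exact (pr_norm_le n s (by linarith)).trans (by norm_num)
          · have st : ∀ k, ‖(pr k:ℂ)^(-s) - (pr (k+1):ℂ)^(-s)‖ ≤ ‖s‖ / s.re * (Real.exp (-(s.re * Real.log (pr k))) - Real.exp (-(s.re * Real.log (pr (k+1))))) := by
              intro k
              rw [pr_cpow, pr_cpow, norm_sub_rev]
              refine exp_diff s hs0 _ _ (Real.log_le_log (by exact_mod_cast (pr_prime k).pos) ?_)
              exact_mod_cast (pr_mono (Nat.lt_succ_self k)).le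
            refine (Finset.sum_le_sum fun k _ => st k).trans ?_
            rw [← Finset.mul_sum, Finset.sum_range_sub']
            have a1 : ‖s‖ / s.re ≤ 2 * R := by
              rw [div_le_iff₀ hs0]; nlinarith
            have a2 : Real.exp (-(s.re * Real.log (pr 0))) ≤ 1 := by
              apply Real.exp_le_one_iff.2
              have : 0 ≤ Real.log (pr 0) := Real.log_nonneg (by exact_mod_cast (pr_prime 0).one_le)
              nlinarith [mul_nonneg hs0.le this]
            have a3 := Real.exp_pos (-(s.re * Real.log (pr n)))
            have a4 : 0 ≤ ‖s‖ / s.re := by positivity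
            nlinarith
        · refine le_trans (Finset.sum_le_sum fun k _ => ?_) (hsum.sum_le_tsum _ (fun k _ => by positivity))
          have : (1:ℝ) ≤ pr k := by exact_mod_cast (pr_prime k).one_le
          rw [nz, ← Real.rpow_natCast, ← Real.rpow_mul (by linarith)]
          exact Real.rpow_le_rpow_of_exponent_le this (by push_cast; linarith)


lemma circ_bound (g : ℂ → ℂ) (x : ℂ) (r : ℝ) (hr : 0 < r) (hg : DifferentiableOn ℂ g (Metric.closedBall x r)) (z : ℂ) (hz : z ∈ Metric.ball x (r/2)) :
    ‖g z‖ ≤ ∫ θ in (0:ℝ)..(2 * Real.pi), Real.pi⁻¹ * ‖g (circleMap x r θ)‖ := by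
  have hd : DiffContOnCl ℂ g (Metric.ball x r) := by
    apply DifferentiableOn.diffContOnCl
    rwa [closure_ball _ hr.ne']
  have hz' : z ∈ Metric.ball x r := Metric.ball_subset_ball (by linarith) hz
  have h := hd.two_pi_i_inv_smul_circleIntegral_sub_inv_smul hz'
  have hc : Continuous fun θ => g (circleMap x r θ) := by
    rw [← continuousOn_univ]
    exact hg.continuousOn.comp (continuous_circleMap x r).continuousOn (fun θ _ => circleMap_mem_closedBall x hr.le θ)
  rw [← h, norm_smul]
  have n1 : ‖(2 * Real.pi * I : ℂ)⁻¹‖ = (2 * Real.pi)⁻¹ := by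
    simp [abs_of_pos Real.pi_pos]
  rw [n1, intervalIntegral.integral_const_mul]
  have n2 : ‖∮ w in C(x, r), (w - z)⁻¹ • g w‖ ≤ ∫ θ in (0:ℝ)..(2 * Real.pi), 2 * ‖g (circleMap x r θ)‖ := by
    rw [circleIntegral]
    refine intervalIntegral.norm_integral_le_of_norm_le (by positivity) (Eventually.of_forall fun θ _ => ?_) ((hc.norm.const_mul 2).intervalIntegrable _ _)
    rw [norm_smul, norm_smul, ← mul_assoc]
    gcongr
    rw [deriv_circleMap, norm_mul, norm_I, mul_one, norm_circleMap_zero, abs_of_pos hr, norm_inv]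
    have : r / 2 ≤ ‖circleMap x r θ - z‖ := by
      have h1 : ‖circleMap x r θ - x‖ = r := by simp [abs_of_pos hr]
      have h2 : ‖z - x‖ < r/2 := by rwa [← dist_eq_norm, ← Metric.mem_ball]
      have h3 := norm_sub_norm_le (circleMap x r θ - x) (z - x)
      rw [sub_sub_sub_cancel_right] at h3
      linarith
    rw [← div_eq_mul_inv, div_le_iff₀ (by linarith)]
    linarith
  rw [intervalIntegral.integral_const_mul] at n2
  calc _ ≤ (2 * Real.pi)⁻¹ * (2 * ∫ θ in (0:ℝ)..(2 * Real.pi), ‖g (circleMap x r θ)‖) := by gcongr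
    _ = _ := by have := Real.pi_pos; field_simp

def SupP (U K : Set ℂ) : Prop := ∃ (ν : Measure ℂ) (K' : Set ℂ), IsFiniteMeasure ν ∧ IsCompact K' ∧ K' ⊆ U ∧ ν K'ᶜ = 0 ∧
  ∀ f : ℂ → ℂ, Measurable f → DifferentiableOn ℂ f U → ∀ z ∈ K, ENNReal.ofReal (‖f z‖^2) ≤ ∫⁻ w, ENNReal.ofReal (‖f w‖^2) ∂ν

lemma sup_meas (U : Set ℂ) (hU : IsOpen U) (K : Set ℂ) (hK : IsCompact K) (hKU : K ⊆ U) : SupP U K := by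
  refine hK.induction_on (p := SupP U) ?_ ?_ ?_ ?_
  · exact ⟨0, ∅, inferInstance, isCompact_empty, by simp, by simp, by simp⟩
  · rintro s t hst ⟨ν, K', a, b, c, d, e⟩
    exact ⟨ν, K', a, b, c, d, fun f hf hf' z hz => e f hf hf' z (hst hz)⟩
  · rintro s t ⟨ν, K', a, b, c, d, e⟩ ⟨ν2, K2', a2, b2, c2, d2, e2⟩
    refine ⟨ν + ν2, K' ∪ K2', inferInstance, b.union b2, Set.union_subset c c2, ?_, ?_⟩
    · rw [Measure.add_apply, Set.compl_union, measure_mono_null Set.inter_subset_left d, measure_mono_null Set.inter_subset_right d2, add_zero]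
    · intro f hf hf' z hz
      rw [lintegral_add_measure]
      rcases hz with hz | hz
      · exact (e f hf hf' z hz).trans le_self_add
      · exact (e2 f hf hf' z hz).trans le_add_self
  · intro x hx
    obtain ⟨r, hr, hrU⟩ := Metric.nhds_basis_closedBall.mem_iff.1 (hU.mem_nhds (hKU hx))
    refine ⟨Metric.ball x (r/2), mem_nhdsWithin_of_mem_nhds (Metric.ball_mem_nhds x (by positivity)), ?_⟩
    refine ⟨ENNReal.ofReal (Real.pi⁻¹) • Measure.map (circleMap x r) (volume.restrict (Set.Ioc 0 (2 * Real.pi))), Metric.closedBall x r, ?_, isCompact_closedBall x r, hrU, ?_, ?_⟩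
    · have : IsFiniteMeasure (Measure.map (circleMap x r) (volume.restrict (Set.Ioc 0 (2 * Real.pi)))) := inferInstance
      exact Measure.smul_finite _ ENNReal.ofReal_ne_top
    · rw [Measure.smul_apply, Measure.map_apply (continuous_circleMap x r).measurable Metric.isClosed_closedBall.measurableSet.compl]
      have : circleMap x r ⁻¹' (Metric.closedBall x r)ᶜ = ∅ := by
        ext θ; simp only [Set.mem_preimage, Set.mem_compl_iff, Set.mem_empty_iff_false, iff_false, not_not]
        exact circleMap_mem_closedBall x hr.le θ
      rw [this]; simp
    · intro f hf hf' z hz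
      have h := circ_bound (fun w => f w ^ 2) x r hr ((hf'.mono hrU).pow 2) z hz
      have hc : Continuous fun θ => f (circleMap x r θ) := by
        rw [← continuousOn_univ]
        exact (hf'.mono hrU).continuousOn.comp (continuous_circleMap x r).continuousOn (fun θ _ => circleMap_mem_closedBall x hr.le θ)
      simp_rw [norm_pow] at h
      refine (ENNReal.ofReal_le_ofReal h).trans ?_
      have hm : Measurable fun w => ENNReal.ofReal (‖f w‖^2) := by fun_prop
      rw [lintegral_smul_measure, lintegral_map hm (continuous_circleMap x r).measurable,
        intervalIntegral.integral_of_le (by positivity), ofReal_integral_eq_lintegral_ofReal]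
      · have : ∀ θ, ENNReal.ofReal (Real.pi⁻¹ * ‖f (circleMap x r θ)‖^2) = ENNReal.ofReal (Real.pi⁻¹) * ENNReal.ofReal (‖f (circleMap x r θ)‖^2) := 
          fun θ => ENNReal.ofReal_mul (by positivity)
        simp_rw [this]
        rw [lintegral_const_mul' _ _ ENNReal.ofReal_ne_top]
        exact le_rfl
      · exact (((hc.norm.pow 2).const_mul _).integrableOn_Icc).mono_set Set.Ioc_subset_Icc_self
      · exact Eventually.of_forall fun θ => by positivity



noncomputable def HH (n : ℕ) (c : ℤ) (s : ℂ) (t : ℝ) : ℂ :=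
  riemannZeta (s + ((c * t : ℝ):ℂ) * I) * RQ n (s + ((c * t : ℝ):ℂ) * I) - 1

lemma zeta_meas : Measurable riemannZeta :=
  measurable_of_continuousOn_compl_singleton 1 fun _ hs => (differentiableAt_riemannZeta hs).continuousAt.continuousWithinAt

lemma RQ_diff (n : ℕ) : Differentiable ℂ (RQ n) := by
  unfold RQ
  refine Differentiable.fun_finsetProd fun k _ => (differentiable_const _).sub ?_
  exact differentiable_neg.const_cpow (Or.inl (by exact_mod_cast (pr_prime k).ne_zero))

lemma HH_meas_gen {α : Type*} [MeasurableSpace α] (n : ℕ) (c : ℤ) (u : α → ℂ) (v : α → ℝ) (hu : Measurable u) (hv : Measurable v) :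
    Measurable fun x => HH n c (u x) (v x) := by
  unfold HH
  have h : Measurable fun x : α => u x + ((c * v x : ℝ):ℂ) * I := by fun_prop
  have h1 : Measurable fun x : α => riemannZeta (u x + ((c * v x : ℝ):ℂ) * I) := zeta_meas.comp h
  have h2 : Measurable fun x : α => RQ n (u x + ((c * v x : ℝ):ℂ) * I) := (RQ_diff n).continuous.measurable.comp h
  exact (h1.mul h2).sub measurable_const

lemma HH_meas_s (n : ℕ) (c : ℤ) (t : ℝ) : Measurable (fun s => HH n c s t) :=
  HH_meas_gen n c (fun s => s) (fun _ => t) measurable_id measurable_const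

lemma HH_meas_swap (n : ℕ) (c : ℤ) : Measurable fun x : ℝ × ℂ => HH n c x.2 x.1 :=
  HH_meas_gen n c (fun x : ℝ × ℂ => x.2) (fun x : ℝ × ℂ => x.1) measurable_snd measurable_fst

lemma strip_open : IsOpen strip := by
  have h1 : IsOpen {s : ℂ | 1/2 < s.re} := isOpen_lt continuous_const continuous_re
  have h2 : IsOpen {s : ℂ | s.re < 1} := isOpen_lt continuous_re continuous_const
  exact h1.inter h2

lemma HH_diff (n : ℕ) (c : ℤ) (t : ℝ) : DifferentiableOn ℂ (fun s => HH n c s t) strip := by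
  intro s hs
  apply DifferentiableAt.differentiableWithinAt
  have h : DifferentiableAt ℂ (fun s : ℂ => s + ((c * t : ℝ):ℂ) * I) s := by fun_prop
  have hne : s + ((c * t : ℝ):ℂ) * I ≠ 1 := by
    intro h; have := congrArg re h; simp at this; linarith [hs.2]
  exact ((DifferentiableAt.comp s (differentiableAt_riemannZeta hne) h).mul (DifferentiableAt.comp s (RQ_diff n _) h)).sub_const 1

lemma HH_cont_t (n : ℕ) (c : ℤ) (s : ℂ) (hs : s.re < 1) : Continuous (fun t => HH n c s t) := by
  have h : Continuous (fun t : ℝ => s + ((c * t : ℝ):ℂ) * I) := by fun_prop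
  refine (Continuous.mul ?_ ((RQ_diff n).continuous.comp h)).sub continuous_const
  rw [continuous_iff_continuousAt]
  intro t
  have hne : s + ((c * t : ℝ):ℂ) * I ≠ 1 := by
    intro h; have := congrArg re h; simp at this; linarith
  exact ContinuousAt.comp (f := fun t : ℝ => s + ((c * t : ℝ):ℂ) * I) (differentiableAt_riemannZeta hne).continuousAt h.continuousAt

lemma strip_bounds (K : Set ℂ) (hK : IsCompact K) (hKD : K ⊆ strip) :
    ∃ σ₁ σ₂ Y : ℝ, 1/2 < σ₁ ∧ σ₂ < 1 ∧ ∀ s ∈ K, σ₁ ≤ s.re ∧ s.re ≤ σ₂ ∧ |s.im| ≤ Y := by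
  rcases K.eq_empty_or_nonempty with rfl | hne
  · exact ⟨1, 0, 0, by norm_num, by norm_num, by simp⟩
  obtain ⟨s1, m1, h1⟩ := hK.exists_isMinOn hne continuous_re.continuousOn
  obtain ⟨s2, m2, h2⟩ := hK.exists_isMaxOn hne continuous_re.continuousOn
  obtain ⟨s3, m3, h3⟩ := hK.exists_isMaxOn hne (continuous_im.abs).continuousOn
  exact ⟨s1.re, s2.re, |s3.im|, (hKD m1).1, (hKD m2).2, fun s hs => ⟨h1 hs, h2 hs, h3 hs⟩⟩

lemma fub (n L : ℕ) (θ : ℕ → ℂ) (c : ℤ) (ν : Measure ℂ) [IsFiniteMeasure ν] (K' : Set ℂ) (hK' : K' ⊆ strip) (hν : ν K'ᶜ = 0) (T : ℝ) (hT : 0 ≤ T) (A : ℝ) (hA : 0 ≤ A)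
    (h : ∀ s ∈ K', ∫ t in (0:ℝ)..T, ‖SS n L θ t‖^2 * ‖HH n c s t‖^2 ≤ A) :
    ∫⁻ t in Set.Icc 0 T, ENNReal.ofReal (‖SS n L θ t‖^2) * ∫⁻ s, ENNReal.ofReal (‖HH n c s t‖^2) ∂ν ≤ ENNReal.ofReal (A * (ν Set.univ).toReal) := by
  have m1 : Measurable fun x : ℝ × ℂ => ENNReal.ofReal (‖SS n L θ x.1‖^2) * ENNReal.ofReal (‖HH n c x.2 x.1‖^2) := by
    have a1 : Measurable fun x : ℝ × ℂ => SS n L θ x.1 := (SS_cont n L θ).measurable.comp measurable_fst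
    have a2 : Measurable fun x : ℝ × ℂ => HH n c x.2 x.1 := HH_meas_swap n c
    fun_prop
  have e1 : ∀ t, ENNReal.ofReal (‖SS n L θ t‖^2) * ∫⁻ s, ENNReal.ofReal (‖HH n c s t‖^2) ∂ν = ∫⁻ s, ENNReal.ofReal (‖SS n L θ t‖^2) * ENNReal.ofReal (‖HH n c s t‖^2) ∂ν :=
    fun t => (lintegral_const_mul' _ _ ENNReal.ofReal_ne_top).symm
  simp_rw [e1]
  rw [lintegral_lintegral_swap m1.aemeasurable]
  calc _ ≤ ∫⁻ s, ENNReal.ofReal A ∂ν := by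
        refine lintegral_mono_ae ?_
        have : ∀ᵐ s ∂ν, s ∈ K' := hν
        filter_upwards [this] with s hs
        have e2 : ∀ t, ENNReal.ofReal (‖SS n L θ t‖^2) * ENNReal.ofReal (‖HH n c s t‖^2) = ENNReal.ofReal (‖SS n L θ t‖^2 * ‖HH n c s t‖^2) :=
          fun t => (ENNReal.ofReal_mul (by positivity)).symm
        simp_rw [e2]
        have hc : Continuous fun t => ‖SS n L θ t‖^2 * ‖HH n c s t‖^2 :=
          ((SS_cont n L θ).norm.pow 2).mul ((HH_cont_t n c s (hK' hs).2).norm.pow 2)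
        rw [← ofReal_integral_eq_lintegral_ofReal hc.integrableOn_Icc (Eventually.of_forall fun t => by positivity),
          integral_Icc_eq_integral_Ioc, ← intervalIntegral.integral_of_le hT]
        exact ENNReal.ofReal_le_ofReal (h s hs)
    _ = _ := by
        rw [lintegral_const, ENNReal.ofReal_mul hA, ENNReal.ofReal_toReal (measure_ne_top _ _)]

lemma good_measure (K : Set ℂ) (hK : IsCompact K) (hKD : K ⊆ strip) (a b : ℤ) (ha : a ≠ 0) (hb : b ≠ 0) (η : ℝ) (hη : 0 < η) :
    ∃ n₀ : ℕ, ∀ n ≥ n₀, ∀ θ : ℕ → ℂ, (∀ k, ‖θ k‖ = 1) → ∀ δ : ℝ, 0 < δ → ∃ c : ℝ, 0 < c ∧ ∀ᶠ T : ℝ in atTop,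
      ENNReal.ofReal (c * T) ≤ volume {t : ℝ | t ∈ Set.Icc 0 T ∧ (∀ k : Fin n, ‖θ k * PP k t - 1‖ < δ) ∧ ∀ s ∈ K, ‖HH n a s t‖ ≤ η ∧ ‖HH n b s t‖ ≤ η} := by
  obtain ⟨ν, K', hfin, hK'c, hK's, hν, hsup⟩ := sup_meas strip strip_open K hK hKD
  obtain ⟨σ₁, σ₂, Y, h1, h2, hbd⟩ := strip_bounds K' hK'c hK's
  set V := (ν Set.univ).toReal with hV
  have hV0 : 0 ≤ V := ENNReal.toReal_nonneg
  set κ := η^2 / (8 * (V + 1)) with hκ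
  have hκ0 : 0 < κ := by positivity
  obtain ⟨na, hna⟩ := tail_ms σ₁ σ₂ Y h1 h2 a ha κ hκ0
  obtain ⟨nb, hnb⟩ := tail_ms σ₁ σ₂ Y h1 h2 b hb κ hκ0
  refine ⟨max na nb, fun n hn θ hθ δ hδ => ?_⟩
  obtain ⟨L, hL1, hL2⟩ : ∃ L : ℕ, 1 ≤ L ∧ 24 * n / δ^2 ≤ L := by
    obtain ⟨L, hL⟩ := exists_nat_ge (24 * n / δ^2)
    exact ⟨L + 1, by omega, hL.trans (by push_cast; linarith)⟩
  have hL0 : (0:ℝ) < L := by exact_mod_cast hL1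
  set P := (L:ℝ)^n with hP
  have hP0 : 0 < P := by positivity
  refine ⟨P / (8 * P^2), by positivity, ?_⟩
  filter_upwards [SS_mean n L hL1 θ hθ, eventually_all.2 (fun k : Fin n => SS_X n L hL1 θ hθ k),
    hna n (le_trans (le_max_left _ _) hn) L hL1 θ hθ, hnb n (le_trans (le_max_right _ _) hn) L hL1 θ hθ, eventually_ge_atTop 0] with T q1 q2 q3 q4 hT
  have fa := fub n L θ a ν K' hK's hν T hT (κ * P * T) (by positivity) (fun s hs => q3 s (hbd s hs).1 (hbd s hs).2.1 (hbd s hs).2.2)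
  have fb := fub n L θ b ν K' hK's hν T hT (κ * P * T) (by positivity) (fun s hs => q4 s (hbd s hs).1 (hbd s hs).2.1 (hbd s hs).2.2)
  set φ : ℝ → ℝ≥0∞ := fun t => ENNReal.ofReal (‖SS n L θ t‖^2) with hφ
  set hh : ℤ → ℝ → ℝ≥0∞ := fun c t => ∫⁻ s, ENNReal.ofReal (‖HH n c s t‖^2) ∂ν with hhh
  have mh : ∀ c, Measurable (hh c) := by
    intro c
    have : Measurable fun x : ℝ × ℂ => ENNReal.ofReal (‖HH n c x.2 x.1‖^2) := by
      have a2 : Measurable fun x : ℝ × ℂ => HH n c x.2 x.1 := HH_meas_swap n c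
      fun_prop
    exact this.lintegral_prod_right'
  have mφ : Measurable φ := ((SS_cont n L θ).norm.pow 2).measurable.ennreal_ofReal
  have cX : ∀ k : Fin n, Continuous fun t => ‖θ k * PP k t - 1‖ := fun k => ((continuous_const.mul (PP_cont k)).sub continuous_const).norm
  set G : Set ℝ := Set.Icc 0 T ∩ ({t | ∀ k : Fin n, ‖θ k * PP k t - 1‖ < δ} ∩ ({t | hh a t ≤ ENNReal.ofReal (η^2)} ∩ {t | hh b t ≤ ENNReal.ofReal (η^2)})) with hG
  have mG : MeasurableSet G := by
    refine measurableSet_Icc.inter (MeasurableSet.inter ?_ ((measurableSet_le (mh a) measurable_const).inter (measurableSet_le (mh b) measurable_const)))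
    rw [Set.ofPred_forall]
    exact MeasurableSet.iInter fun k => measurableSet_lt (cX k).measurable measurable_const
  have hsub : G ⊆ {t : ℝ | t ∈ Set.Icc 0 T ∧ (∀ k : Fin n, ‖θ k * PP k t - 1‖ < δ) ∧ ∀ s ∈ K, ‖HH n a s t‖ ≤ η ∧ ‖HH n b s t‖ ≤ η} := by
    rintro t ⟨g1, g2, g3, g4⟩
    have key : ∀ c, hh c t ≤ ENNReal.ofReal (η^2) → ∀ s ∈ K, ‖HH n c s t‖ ≤ η := by
      intro c hc s hs
      have := (hsup (fun s => HH n c s t) (HH_meas_s n c t) (HH_diff n c t) s hs).trans hc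
      rw [ENNReal.ofReal_le_ofReal_iff (by positivity)] at this
      exact le_of_sq_le_sq this hη.le
    exact ⟨g1, g2, fun s hs => ⟨key a g3 s hs, key b g4 s hs⟩⟩
  refine le_trans ?_ (measure_mono hsub)
  have pw : ∀ t ∈ Set.Icc 0 T, φ t ≤ G.indicator (fun _ => ENNReal.ofReal (P^2)) t +
      ((∑ k : Fin n, ENNReal.ofReal (‖SS n L θ t‖^2 * ‖θ k * PP k t - 1‖^2 / δ^2)) + (ENNReal.ofReal (η^2)⁻¹ * (φ t * hh a t) + ENNReal.ofReal (η^2)⁻¹ * (φ t * hh b t))) := by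
    intro t ht
    by_cases hg : t ∈ G
    · rw [Set.indicator_of_mem hg]
      exact le_trans (ENNReal.ofReal_le_ofReal (SS_le n L θ hθ t)) le_self_add
    · refine le_trans ?_ le_add_self
      have hbad : ∀ c, ENNReal.ofReal (η^2) < hh c t → φ t ≤ ENNReal.ofReal (η^2)⁻¹ * (φ t * hh c t) := by
        intro c hc
        rw [mul_left_comm]
        refine le_mul_of_one_le_right' ?_
        rw [ENNReal.ofReal_inv_of_pos (by positivity), mul_comm, ← div_eq_mul_inv,
          ENNReal.le_div_iff_mul_le (Or.inl (by simpa using hη.ne')) (Or.inl ENNReal.ofReal_ne_top), one_mul]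
        exact hc.le
      have : (∃ k : Fin n, δ ≤ ‖θ k * PP k t - 1‖) ∨ ENNReal.ofReal (η^2) < hh a t ∨ ENNReal.ofReal (η^2) < hh b t := by
        by_contra hcon
        push Not at hcon
        exact hg ⟨ht, hcon.1, hcon.2.1, hcon.2.2⟩
      rcases this with ⟨k, hk⟩ | h | h
      · refine le_trans ?_ le_self_add
        refine le_trans ?_ (Finset.single_le_sum (f := fun k : Fin n => ENNReal.ofReal (‖SS n L θ t‖^2 * ‖θ k * PP k t - 1‖^2 / δ^2)) (fun _ _ => by positivity) (Finset.mem_univ k))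
        refine ENNReal.ofReal_le_ofReal ?_
        rw [mul_div_assoc]
        refine le_mul_of_one_le_right (by positivity) ?_
        rw [one_le_div (by positivity)]
        gcongr
      · exact (hbad a h).trans (le_self_add.trans le_add_self)
      · exact (hbad b h).trans (le_add_self.trans le_add_self)
  have lower : ENNReal.ofReal (P / 2 * T) ≤ ∫⁻ t in Set.Icc 0 T, φ t := by
    have hc : Continuous fun t => ‖SS n L θ t‖^2 := (SS_cont n L θ).norm.pow 2
    rw [hφ, ← ofReal_integral_eq_lintegral_ofReal hc.integrableOn_Icc (Eventually.of_forall fun t => by positivity),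
          integral_Icc_eq_integral_Ioc, ← intervalIntegral.integral_of_le hT]
    exact ENNReal.ofReal_le_ofReal q1
  have i1 : ∫⁻ t in Set.Icc 0 T, G.indicator (fun _ => ENNReal.ofReal (P^2)) t ≤ ENNReal.ofReal (P^2) * volume G := by
    rw [lintegral_indicator_const mG]
    exact mul_le_mul_right (Measure.restrict_apply_le _ _) _
  have i2 : ∀ k : Fin n, ∫⁻ t in Set.Icc 0 T, ENNReal.ofReal (‖SS n L θ t‖^2 * ‖θ k * PP k t - 1‖^2 / δ^2) ≤ ENNReal.ofReal (3 / L * P * T / δ^2) := by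
    intro k
    have hc : Continuous fun t => ‖SS n L θ t‖^2 * ‖θ k * PP k t - 1‖^2 / δ^2 := (((SS_cont n L θ).norm.pow 2).mul ((cX k).pow 2)).div_const _
    rw [← ofReal_integral_eq_lintegral_ofReal hc.integrableOn_Icc (Eventually.of_forall fun t => by positivity),
          integral_Icc_eq_integral_Ioc, ← intervalIntegral.integral_of_le hT, intervalIntegral.integral_div]
    refine ENNReal.ofReal_le_ofReal ?_
    gcongr
    exact q2 k
  have i3 : ∀ c, (∫⁻ t in Set.Icc 0 T, φ t * hh c t ≤ ENNReal.ofReal (κ * P * T * V)) → ∫⁻ t in Set.Icc 0 T, ENNReal.ofReal (η^2)⁻¹ * (φ t * hh c t) ≤ ENNReal.ofReal (P * T / 8) := by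
    intro c hc
    rw [lintegral_const_mul' _ _ ENNReal.ofReal_ne_top]
    refine (mul_le_mul_right hc _).trans ?_
    rw [← ENNReal.ofReal_mul (by positivity)]
    refine ENNReal.ofReal_le_ofReal ?_
    have : (η^2)⁻¹ * (κ * P * T * V) = P * T / 8 * (V / (V+1)) := by
      rw [hκ]; field_simp
    rw [this]
    refine mul_le_of_le_one_right (by positivity) ?_
    rw [div_le_one (by positivity)]; linarith
  have mX : ∀ k : Fin n, Measurable fun t => ENNReal.ofReal (‖SS n L θ t‖^2 * ‖θ k * PP k t - 1‖^2 / δ^2) := fun k =>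
    ((((SS_cont n L θ).norm.pow 2).mul ((cX k).pow 2)).div_const (δ^2)).measurable.ennreal_ofReal
  have upper : ∫⁻ t in Set.Icc 0 T, φ t ≤ ENNReal.ofReal (P^2) * volume G + (n * ENNReal.ofReal (3 / L * P * T / δ^2) + (ENNReal.ofReal (P * T / 8) + ENNReal.ofReal (P * T / 8))) := by
    have mm : Measurable fun t => ENNReal.ofReal (η^2)⁻¹ * (φ t * hh a t) := (mφ.mul (mh a)).const_mul _
    refine (setLIntegral_mono' measurableSet_Icc pw).trans ?_
    rw [lintegral_add_left (measurable_const.indicator mG), lintegral_add_left (Finset.measurable_fun_sum _ fun k _ => mX k),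
      lintegral_add_left mm, lintegral_finsetSum _ (fun k _ => mX k)]
    refine add_le_add i1 (add_le_add ?_ (add_le_add (i3 a fa) (i3 b fb)))
    refine (Finset.sum_le_sum fun k _ => i2 k).trans ?_
    simp
  have fin : volume G ≠ ∞ := ne_top_of_le_ne_top (by simp : volume (Set.Icc 0 T) ≠ ∞) (measure_mono Set.inter_subset_left)
  have tot := lower.trans upper
  rw [← ENNReal.ofReal_toReal fin] at tot ⊢
  set v := (volume G).toReal
  have hv : 0 ≤ v := ENNReal.toReal_nonneg
  rw [← ENNReal.ofReal_natCast, ← ENNReal.ofReal_mul (by positivity), ← ENNReal.ofReal_mul (by positivity), ← ENNReal.ofReal_add (by positivity) (by positivity),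
    ← ENNReal.ofReal_add (by positivity) (by positivity), ← ENNReal.ofReal_add (by positivity) (by positivity), ENNReal.ofReal_le_ofReal_iff (by positivity)] at tot
  refine ENNReal.ofReal_le_ofReal ?_
  have x1 : n * (3 / L * P * T / δ^2) ≤ P * T / 8 := by
    rw [div_le_iff₀ (by positivity)] at hL2
    have : n * (3 / L * P * T / δ^2) = P * T / 8 * (24 * n / (L * δ^2)) := by field_simp; ring
    rw [this]
    refine mul_le_of_le_one_right (by positivity) ?_
    rw [div_le_one (by positivity)]; exact hL2
  rw [div_mul_eq_mul_div, div_le_iff₀ (by positivity)]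
  nlinarith


lemma RQ_approx (n : ℕ) (c : ℤ) (w : ℕ → ℂ) (hw : ∀ k, ‖w k‖ = 1) (K : Set ℂ) (hK : IsCompact K) (hKD : K ⊆ strip) (η : ℝ) (hη : 0 < η) :
    ∃ δ : ℝ, 0 < δ ∧ ∀ t : ℝ, (∀ k : Fin n, ‖PP k t - w k‖ < δ) → ∀ s ∈ K,
      RQ n (s + ((c * t : ℝ):ℂ) * I) ≠ 0 ∧
      ‖(RQ n (s + ((c * t : ℝ):ℂ) * I))⁻¹ - ∏ k ∈ Finset.range n, (1 - w k ^ c * (pr k : ℂ) ^ (-s))⁻¹‖ ≤ η := by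
  have nz : ∀ (z : ℂ) (k : ℕ) (s : ℂ), ‖z‖ = 1 → s ∈ K → 1 - z ^ c * (pr k : ℂ) ^ (-s) ≠ 0 := by
    intro z k s hz hs h
    have h1 : ‖z ^ c * (pr k : ℂ) ^ (-s)‖ ≤ 3/4 := by
      rw [norm_mul, norm_zpow, hz, one_zpow, one_mul]
      exact pr_norm_le k s (hKD hs).1.le
    rw [← sub_eq_zero.1 h] at h1
    norm_num at h1
  set F : (Fin n → ℂ) → ℂ → ℂ := fun x s => ∏ k : Fin n, (1 - x k ^ c * (pr k : ℂ) ^ (-s))⁻¹ with hF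
  set x0 : Fin n → ℂ := fun k => w k with hx0
  have key : ∀ᶠ x in nhds x0, ∀ s ∈ K, ‖F x s - F x0 s‖ < η := by
    refine hK.eventually_forall_of_forall_eventually fun s hs => ?_
    have c1 : ContinuousAt (fun z : (Fin n → ℂ) × ℂ => F z.1 z.2) (x0, s) := by
      rw [hF]
      refine tendsto_finsetProd _ fun k _ => ?_
      refine Tendsto.inv₀ ?_ (nz (w k) k s (hw k) hs)
      refine tendsto_const_nhds.sub (Tendsto.mul ?_ ?_)
      · refine ContinuousAt.zpow₀ (by fun_prop) c (Or.inl ?_)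
        intro h; have := hw k; simp only [hx0] at h; rw [h] at this; simp at this
      · have : Continuous fun s : ℂ => (pr k : ℂ) ^ (-s) :=
          continuous_neg.const_cpow (Or.inl (by exact_mod_cast (pr_prime k).ne_zero))
        exact (this.comp continuous_snd).continuousAt
    have c2 : ContinuousAt (fun z : (Fin n → ℂ) × ℂ => F x0 z.2) (x0, s) := by
      have : ContinuousAt (fun z : (Fin n → ℂ) × ℂ => ((x0, z.2) : (Fin n → ℂ) × ℂ)) (x0, s) := by fun_prop
      exact ContinuousAt.comp (f := fun z : (Fin n → ℂ) × ℂ => ((x0, z.2) : (Fin n → ℂ) × ℂ)) (x := (x0, s)) c1 this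
    have c3 := (c1.sub c2).norm
    have : ‖F x0 s - F x0 s‖ < η := by simpa using hη
    exact c3.eventually_lt_const this
  obtain ⟨δ, hδ, hd⟩ := Metric.eventually_nhds_iff.1 key
  refine ⟨δ, hδ, fun t ht s hs => ?_⟩
  have e1 : ∀ k : ℕ, (1 - (pr k : ℂ) ^ (-(s + ((c * t : ℝ):ℂ) * I))) = 1 - PP k t ^ c * (pr k : ℂ) ^ (-s) := by
    intro k
    rw [cpow_split' (pr k) (pr_prime k).one_le s (c * t), mul_comm, PP, ← Complex.exp_int_mul]
    congr 3
    push_cast; ring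
  have e2 : RQ n (s + ((c * t : ℝ):ℂ) * I) = ∏ k ∈ Finset.range n, (1 - PP k t ^ c * (pr k : ℂ) ^ (-s)) := by
    unfold RQ
    exact Finset.prod_congr rfl fun k _ => e1 k
  refine ⟨?_, ?_⟩
  · rw [e2]
    exact Finset.prod_ne_zero_iff.2 fun k _ => nz _ k s (PP_norm k t) hs
  · have := hd (y := fun k : Fin n => PP k t) (by
      rw [dist_pi_lt_iff hδ]; intro k; rw [dist_eq_norm]; exact ht k) s hs
    rw [e2, ← Finset.prod_inv_distrib, Finset.prod_range, Finset.prod_range]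
    exact this.le

lemma root_exists (a b : ℤ) (hab : IsCoprime a b) (habne : |a - b| ≠ 1) (hne : a ≠ b) :
    ∃ ω : ℂ, ‖ω‖ = 1 ∧ ω ^ a = ω ^ b ∧ ω ^ a ≠ 1 := by
  have hm : (a - b).natAbs ≠ 0 := by simpa [sub_eq_zero] using hne
  have hp := Complex.isPrimitiveRoot_exp _ hm
  set ω := cexp (2 * Real.pi * I / ((a-b).natAbs : ℕ)) with hω
  have hω0 : ω ≠ 0 := Complex.exp_ne_zero _
  have hd : (((a-b).natAbs : ℕ):ℤ) ∣ a - b := Int.natAbs_dvd.2 dvd_rfl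
  have h1 : ω ^ (a - b) = 1 := (hp.zpow_eq_one_iff_dvd _).2 hd
  refine ⟨ω, hp.norm'_eq_one hm, ?_, ?_⟩
  · rw [zpow_sub₀ hω0, div_eq_one_iff_eq (zpow_ne_zero _ hω0)] at h1
    exact h1
  · intro h
    have h2 := (hp.zpow_eq_one_iff_dvd _).1 h
    have h3 : (((a-b).natAbs : ℕ):ℤ) ∣ b := by
      have := dvd_sub h2 hd; simpa using this
    have h4 := hab.isUnit_of_dvd' h2 h3
    rw [Int.isUnit_iff] at h4
    rw [Int.abs_eq_natAbs] at habne
    omega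

lemma core (a b : ℤ) (ha : a ≠ 0) (hb : b ≠ 0)
    (hab : IsCoprime a b) (habne : |a - b| ≠ 1) (hne : a ≠ b)
    (K : Set ℂ) (hK : IsCompact K) (hKD : K ⊆ strip) (ε : ℝ) (hε : 0 < ε) :
    ∃ c : ℝ, 0 < c ∧ ∀ᶠ T : ℝ in atTop,
      ENNReal.ofReal (c * T) ≤ volume {t : ℝ | t ∈ Set.Icc 0 T ∧ ∀ s ∈ K,
        ‖riemannZeta (s + ((b * t : ℝ):ℂ) * I) - riemannZeta (s + ((a * t : ℝ):ℂ) * I)‖ ≤ ε} := by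
  obtain ⟨ω, hω, hωab, hω1⟩ := root_exists a b hab habne hne
  have hω0 : ω ≠ 0 := by rintro rfl; simp at hω
  obtain ⟨σ₁, σ₂, Y, h1, h2, hbd⟩ := strip_bounds K hK hKD
  obtain ⟨R, hR⟩ := hK.isBounded.exists_norm_le
  obtain ⟨B, hB, hBb⟩ := unif_bound (ω ^ a) (by rw [norm_zpow, hω, one_zpow]) hω1 σ₁ R h1
  set η := min 1 (ε / (4 + 2 * B)) with hη
  have hη0 : 0 < η := by positivity
  have hη1 : η ≤ 1 := min_le_left _ _
  have hη2 : η * (4 + 2 * B) ≤ ε := by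
    rw [← le_div_iff₀ (by positivity)]; exact min_le_right _ _
  obtain ⟨n, hn⟩ := good_measure K hK hKD a b ha hb η hη0
  have hw : ∀ k : ℕ, ‖ω ^ k‖ = 1 := fun k => by rw [norm_pow, hω, one_pow]
  obtain ⟨δa, hδa, da⟩ := RQ_approx n a (fun k => ω ^ k) hw K hK hKD η hη0
  obtain ⟨δb, hδb, db⟩ := RQ_approx n b (fun k => ω ^ k) hw K hK hKD η hη0
  obtain ⟨c, hc, hT⟩ := hn n le_rfl (fun k => (ω ^ k)⁻¹) (fun k => by rw [norm_inv, hw, inv_one]) (min δa δb) (lt_min hδa hδb)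
  refine ⟨c, hc, ?_⟩
  filter_upwards [hT] with T hT
  refine hT.trans (measure_mono ?_)
  rintro t ⟨t1, t2, t3⟩
  refine ⟨t1, fun s hs => ?_⟩
  have t2' : ∀ k : Fin n, ‖PP k t - ω ^ (k:ℕ)‖ < min δa δb := by
    intro k
    have hk0 : ω ^ (k:ℕ) ≠ 0 := pow_ne_zero _ hω0
    have : PP k t - ω ^ (k:ℕ) = ω ^ (k:ℕ) * ((ω ^ (k:ℕ))⁻¹ * PP k t - 1) := by field_simp
    rw [this, norm_mul, hw, one_mul]
    exact t2 k
  obtain ⟨a0, a1⟩ := da t (fun k => (t2' k).trans_le (min_le_left _ _)) s hs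
  obtain ⟨b0, b1⟩ := db t (fun k => (t2' k).trans_le (min_le_right _ _)) s hs
  obtain ⟨a2, b2⟩ := t3 s hs
  have ea : ∀ k : ℕ, (ω ^ k) ^ a = (ω ^ a) ^ k := fun k => by
    rw [← zpow_natCast, ← zpow_natCast, zpow_comm]
  have eb : ∀ k : ℕ, (ω ^ k) ^ b = (ω ^ a) ^ k := fun k => by
    rw [hωab, ← zpow_natCast, ← zpow_natCast, zpow_comm]
  simp only [ea] at a1
  simp only [eb] at b1
  have z1 := hBb n s (hbd s hs).1 (hR s hs)
  set Z := ∏ k ∈ Finset.range n, (1 - (ω ^ a) ^ k * (pr k:ℂ)^(-s))⁻¹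
  have za : riemannZeta (s + ((a * t : ℝ):ℂ) * I) = (1 + HH n a s t) * (RQ n (s + ((a * t : ℝ):ℂ) * I))⁻¹ := by
    unfold HH; field_simp; ring
  have zb : riemannZeta (s + ((b * t : ℝ):ℂ) * I) = (1 + HH n b s t) * (RQ n (s + ((b * t : ℝ):ℂ) * I))⁻¹ := by
    unfold HH; field_simp; ring
  rw [za, zb]
  set qa := (RQ n (s + ((a * t : ℝ):ℂ) * I))⁻¹
  set qb := (RQ n (s + ((b * t : ℝ):ℂ) * I))⁻¹
  have nq : ∀ q : ℂ, ‖q - Z‖ ≤ η → ‖q‖ ≤ B + 1 := by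
    intro q hq
    calc ‖q‖ = ‖(q - Z) + Z‖ := by ring_nf
      _ ≤ _ := norm_add_le _ _
      _ ≤ _ := by linarith
  have e : (1 + HH n b s t) * qb - (1 + HH n a s t) * qa = (HH n b s t * qb - HH n a s t * qa) + ((qb - Z) - (qa - Z)) := by ring
  rw [e]
  have m1 : ‖HH n b s t * qb‖ ≤ η * (B + 1) := by
    rw [norm_mul]; exact mul_le_mul b2 (nq _ b1) (norm_nonneg _) hη0.le
  have m2 : ‖HH n a s t * qa‖ ≤ η * (B + 1) := by
    rw [norm_mul]; exact mul_le_mul a2 (nq _ a1) (norm_nonneg _) hη0.le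
  calc _ ≤ _ := norm_add_le _ _
    _ ≤ _ := add_le_add (norm_sub_le _ _) (norm_sub_le _ _)
    _ ≤ ε := by linarith

lemma dens_pos (S : Set ℝ) (c : ℝ) (hc : 0 < c)
    (h : ∀ᶠ T : ℝ in atTop, ENNReal.ofReal (c * T) ≤ volume (S ∩ Set.Icc 0 T)) : 0 < lowerDens S := by
  refine lt_of_lt_of_le hc ?_
  have fin : ∀ T : ℝ, volume (S ∩ Set.Icc 0 T) ≤ ENNReal.ofReal T := fun T =>
    (measure_mono Set.inter_subset_right).trans (by simp)
  unfold lowerDens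
  refine le_liminf_of_le ?_ ?_
  · refine IsBoundedUnder.isCoboundedUnder_ge ⟨1, ?_⟩
    rw [eventually_map]
    filter_upwards [eventually_gt_atTop 0] with T hT
    rw [div_le_one hT]
    exact ENNReal.toReal_le_of_le_ofReal hT.le (fin T)
  · filter_upwards [h, eventually_gt_atTop 0] with T h1 hT
    rw [le_div_iff₀ hT]
    exact (ENNReal.ofReal_le_iff_le_toReal (ne_top_of_le_ne_top ENNReal.ofReal_ne_top (fin T))).1 h1

lemma main_pos (a b : ℤ) (ha : a ≠ 0) (hb : 0 < b)
    (hab : IsCoprime a b) (habne : |a - b| ≠ 1)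
    (K : Set ℂ) (hK : IsCompact K) (hKD : K ⊆ strip) (ε : ℝ) (hε : 0 < ε) :
    0 < lowerDens {τ : ℝ |
      supNorm K (fun s => riemannZeta (s + τ * Complex.I)
        - riemannZeta (s + (((a : ℝ) / (b : ℝ)) * τ : ℝ) * Complex.I)) < ENNReal.ofReal ε} := by
  have hbR : (0:ℝ) < b := by exact_mod_cast hb
  by_cases hne : a = b
  · subst hne
    refine dens_pos _ 1 one_pos (Eventually.of_forall fun T => ?_)
    have : {τ : ℝ |
      supNorm K (fun s => riemannZeta (s + τ * Complex.I)
        - riemannZeta (s + (((a : ℝ) / (a : ℝ)) * τ : ℝ) * Complex.I)) < ENNReal.ofReal ε} = Set.univ := by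
      ext τ
      simp [supNorm, div_self hbR.ne', hε]
    rw [this]; simp
  · obtain ⟨c, hc, h⟩ := core a b ha hb.ne' hab habne hne K hK hKD (ε/2) (by positivity)
    refine dens_pos _ c hc ?_
    have ht : Tendsto (fun T : ℝ => T / b) atTop atTop := tendsto_id.atTop_div_const hbR
    filter_upwards [ht.eventually h] with T hT
    have hsub : ((b:ℝ)⁻¹ * ·) ⁻¹' {t : ℝ | t ∈ Set.Icc 0 (T / b) ∧ ∀ s ∈ K,
        ‖riemannZeta (s + ((b * t : ℝ):ℂ) * I) - riemannZeta (s + ((a * t : ℝ):ℂ) * I)‖ ≤ ε/2} ⊆ {τ : ℝ |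
      supNorm K (fun s => riemannZeta (s + τ * Complex.I)
        - riemannZeta (s + (((a : ℝ) / (b : ℝ)) * τ : ℝ) * Complex.I)) < ENNReal.ofReal ε} ∩ Set.Icc 0 T := by
      rintro τ ⟨⟨u1, u2⟩, u3⟩
      have u1' : 0 ≤ (b:ℝ)⁻¹ * τ := u1
      have u2' : (b:ℝ)⁻¹ * τ ≤ T / b := u2
      refine ⟨?_, ?_, ?_⟩
      · show supNorm K _ < _
        refine lt_of_le_of_lt (b := ENNReal.ofReal (ε/2)) ?_ ((ENNReal.ofReal_lt_ofReal_iff hε).2 (by linarith))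
        refine iSup₂_le fun s hs => ?_
        have h3 := u3 s hs
        have x1 : (b:ℝ) * ((b:ℝ)⁻¹ * τ) = τ := by field_simp
        have x2 : (a:ℝ) * ((b:ℝ)⁻¹ * τ) = (a:ℝ) / b * τ := by field_simp
        simp only [x1, x2] at h3
        rw [← enorm_eq_nnnorm, ← ofReal_norm_eq_enorm]
        exact ENNReal.ofReal_le_ofReal h3
      · exact (mul_nonneg_iff_of_pos_left (by positivity)).1 u1'
      · rw [div_eq_inv_mul] at u2'
        exact le_of_mul_le_mul_left u2' (by positivity)
    refine le_trans ?_ (measure_mono hsub)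
    rw [Real.volume_preimage_mul_left (by positivity), inv_inv, abs_of_pos hbR]
    refine le_trans (le_of_eq ?_) (mul_le_mul_right hT _)
    rw [← ENNReal.ofReal_mul hbR.le]
    congr 1; field_simp

theorem self_approx_zeta_rational (a b : ℤ) (ha : a ≠ 0) (hb : b ≠ 0)
    (hab : IsCoprime a b) (habne : |a - b| ≠ 1)
    (K : Set ℂ) (hK : IsCompact K) (hKD : K ⊆ strip) (ε : ℝ) (hε : 0 < ε) :
    0 < lowerDens {τ : ℝ |
      supNorm K (fun s => riemannZeta (s + τ * Complex.I)
        - riemannZeta (s + (((a : ℝ) / (b : ℝ)) * τ : ℝ) * Complex.I)) < ENNReal.ofReal ε} := by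
  rcases lt_or_gt_of_ne hb with h | h
  · have := main_pos (-a) (-b) (neg_ne_zero.2 ha) (by omega) hab.neg_neg
      (by rw [show -a - -b = -(a - b) by ring, abs_neg]; exact habne) K hK hKD ε hε
    simp only [Int.cast_neg, neg_div_neg_eq] at this
    exact this
  · exact main_pos a b ha h hab habne K hK hKD ε hε
end

section
/- Let a, b be coprime integers with |a − b| ≥ 2, and let c = a or c = b. Let p_m denote the m-th prime and define ω(p_m) := exp(2πi m/(a−b)). Then for every real z ≥ 2 and every s ∈ ℂ with σ := Re(s) > 1/2, the finite twisted Euler product ζ_z(s, ω^c) := ∏_{p ≤ z, p prime} (1 − ω(p)^c p^{−s})^{−1} satisfies |ζ_z(s, ω^c)| ≤ exp( 7(1 − z^{1−2σ})/(2σ − 1) + |a−b|·( z^{−σ} + 2|s|·(1 − z^{−σ}) ) ). -/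
open Complex Finset
open scoped Real

/-- `ω(p_m) := exp(2πi m / (a - b))` where `p_m` is the `m`-th prime
(`p_1 = 2`, i.e. the prime `p` has 1-based index `Nat.count Nat.Prime p + 1`). -/
noncomputable def omegaP (a b : ℤ) (p : ℕ) : ℂ :=
  Complex.exp (2 * Real.pi * Complex.I * ((Nat.count Nat.Prime p : ℂ) + 1)
    / ((a : ℂ) - (b : ℂ)))

/-- The finite set of primes `p ≤ z`. -/
noncomputable def primesUpTo (z : ℝ) : Finset ℕ := (Finset.Iic ⌊z⌋₊).filter Nat.Prime

/-- The finite twisted Euler product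
`ζ_z(s, ω^c) := ∏_{p ≤ z prime} (1 - ω(p)^c p^{-s})⁻¹`. -/
noncomputable def zetaZ (a b : ℤ) (c : ℤ) (z : ℝ) (s : ℂ) : ℂ :=
  ∏ p ∈ primesUpTo z, (1 - (omegaP a b p) ^ c * (p : ℂ) ^ (-s))⁻¹


lemma geom_bd (r : ℂ) (q : ℕ) (hq : 0 < q) (hr : r ≠ 1) (h1 : r ^ q = 1) (hn : ‖r‖ = 1) (k : ℕ) :
    ‖∑ i ∈ range k, r ^ i‖ ≤ q := by
  have e : ∑ i ∈ range k, r ^ i = ∑ i ∈ range (k % q), r ^ i := by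
    rw [geom_sum_eq hr, geom_sum_eq hr, pow_eq_pow_mod k h1]
  rw [e]
  refine (norm_sum_le _ _).trans ?_
  simp only [norm_pow, hn, one_pow, sum_const, card_range, nsmul_eq_mul, mul_one]
  exact_mod_cast (Nat.mod_lt k hq).le

lemma count_sum (r : ℂ) (k : ℕ) :
    ∑ n ∈ range k, (if n.Prime then r ^ (Nat.count Nat.Prime n + 1) else 0)
      = r * ∑ i ∈ range (Nat.count Nat.Prime k), r ^ i := by
  induction k with
  | zero => simp
  | succ k ih =>
    rw [sum_range_succ, ih, Nat.count_succ]
    split_ifs with h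
    · rw [sum_range_succ]; ring
    · simp

lemma diff_bd (s : ℂ) (hσ : 0 < s.re) (x y : ℝ) (hx : 0 < x) (hxy : x ≤ y) :
    ‖(y : ℂ) ^ (-s) - (x : ℂ) ^ (-s)‖ ≤ ‖s‖ / s.re * (x ^ (-s.re) - y ^ (-s.re)) := by
  have hs : -s ≠ 0 := by
    intro h
    have : s = 0 := by simpa using h
    simp [this] at hσ
  have hd : ∀ t : ℝ, 0 < t → HasDerivAt (fun u : ℝ => (u : ℂ) ^ (-s) - (x : ℂ) ^ (-s))
      (-s * (t : ℂ) ^ (-s - 1)) t := by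
    intro t ht
    exact (hasDerivAt_ofReal_cpow_const ht.ne' hs).sub_const _
  have hB : ∀ t : ℝ, 0 < t → HasDerivAt (fun u : ℝ => ‖s‖ / s.re * (x ^ (-s.re) - u ^ (-s.re)))
      (‖s‖ * t ^ (-s.re - 1)) t := by
    intro t ht
    have := ((Real.hasDerivAt_rpow_const (p := -s.re) (Or.inl ht.ne')).const_sub
      (x ^ (-s.re))).const_mul (‖s‖ / s.re)
    have e : ‖s‖ / s.re * -(-s.re * t ^ (-s.re - 1)) = ‖s‖ * t ^ (-s.re - 1) := by
      have := hσ.ne'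
      field_simp
    rw [e] at this
    exact this
  have key := image_norm_le_of_norm_deriv_right_le_deriv_boundary' (a := x) (b := y)
    (f := fun u : ℝ => (u : ℂ) ^ (-s) - (x : ℂ) ^ (-s))
    (f' := fun t => -s * (t : ℂ) ^ (-s - 1))
    (B := fun u : ℝ => ‖s‖ / s.re * (x ^ (-s.re) - u ^ (-s.re)))
    (B' := fun t => ‖s‖ * t ^ (-s.re - 1))
    (fun t ht => (hd t (hx.trans_le ht.1)).continuousAt.continuousWithinAt)
    (fun t ht => (hd t (hx.trans_le ht.1)).hasDerivWithinAt)
    (by simp)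
    (fun t ht => (hB t (hx.trans_le ht.1)).continuousAt.continuousWithinAt)
    (fun t ht => (hB t (hx.trans_le ht.1)).hasDerivWithinAt)
    (fun t ht => by
      rw [norm_mul, norm_neg, norm_cpow_eq_rpow_re_of_pos (hx.trans_le ht.1)]
      simp)
  exact key ⟨hxy, le_rfl⟩

lemma abel_bd (f : ℕ → ℂ) (Q : ℝ) (h0 : f 0 = 0) (s : ℂ) (hσ : 0 < s.re)
    (hA : ∀ k, ‖∑ n ∈ range k, f n‖ ≤ Q) (N : ℕ) :
    ‖∑ n ∈ range (N + 2), f n * (n : ℂ) ^ (-s) - (∑ n ∈ range (N + 2), f n) * ((N + 1 : ℕ) : ℂ) ^ (-s)‖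
      ≤ Q * (‖s‖ / s.re * (1 - ((N + 1 : ℕ) : ℝ) ^ (-s.re))) := by
  induction N with
  | zero => simp [sum_range_succ, h0]
  | succ N ih =>
    rw [sum_range_succ _ (N + 2), sum_range_succ (fun n => f n) (N + 2)]
    set S := ∑ n ∈ range (N + 2), f n * (n : ℂ) ^ (-s)
    set A := ∑ n ∈ range (N + 2), f n with hAd
    have e : S + f (N + 2) * ((N + 2 : ℕ) : ℂ) ^ (-s) - (A + f (N + 2)) * ((N + 1 + 1 : ℕ) : ℂ) ^ (-s)
      = (S - A * ((N + 1 : ℕ) : ℂ) ^ (-s)) -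
        A * (((N + 2 : ℕ) : ℂ) ^ (-s) - ((N + 1 : ℕ) : ℂ) ^ (-s)) := by ring
    rw [e]
    have d := diff_bd s hσ ((N + 1 : ℕ) : ℝ) ((N + 2 : ℕ) : ℝ) (by positivity)
      (by push_cast; linarith)
    simp only [ofReal_natCast] at d
    have hQ : 0 ≤ Q := (norm_nonneg _).trans (hA 0)
    calc _ ≤ _ := norm_sub_le _ _
      _ ≤ Q * (‖s‖ / s.re * (1 - ((N + 1 : ℕ) : ℝ) ^ (-s.re))) + Q * (‖s‖ / s.re *
          (((N + 1 : ℕ) : ℝ) ^ (-s.re) - ((N + 2 : ℕ) : ℝ) ^ (-s.re))) := by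
        rw [norm_mul]
        exact add_le_add ih (mul_le_mul (hA _) d (norm_nonneg _) hQ)
      _ = _ := by ring

lemma step_bd (α : ℝ) (hα : 0 < α) (x : ℝ) (hx : 0 < x) :
    (x + 1) ^ (-α - 1) ≤ (x ^ (-α) - (x + 1) ^ (-α)) / α := by
  have hx1 : 0 < x + 1 := by linarith
  have h1 : x ^ (-α) = (x + 1) ^ (-α) * (x / (x + 1)) ^ (-α) := by
    rw [← Real.mul_rpow hx1.le (by positivity)]
    congr 1
    field_simp
  have h2 : 1 + α / (x + 1) ≤ (x / (x + 1)) ^ (-α) := by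
    rw [Real.rpow_def_of_pos (by positivity)]
    have := Real.add_one_le_exp (Real.log (x / (x + 1)) * -α)
    have l := Real.log_le_sub_one_of_pos (show 0 < x / (x + 1) by positivity)
    have e : x / (x + 1) - 1 = - (1 / (x + 1)) := by field_simp; ring
    rw [e] at l
    have := mul_le_mul_of_nonneg_right l hα.le
    have e2 : α / (x + 1) = 1 / (x + 1) * α := by ring
    linarith
  rw [le_div_iff₀ hα, h1, Real.rpow_sub_one hx1.ne']
  have := mul_le_mul_of_nonneg_left h2 (Real.rpow_nonneg hx1.le (-α))
  have e : (x + 1) ^ (-α) / (x + 1) * α = (x + 1) ^ (-α) * (α / (x + 1)) := by ring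
  linarith

lemma sq_bd (α : ℝ) (hα : 0 < α) (N : ℕ) :
    ∑ n ∈ range (N + 2), (if n.Prime then (n : ℝ) ^ (-α - 1) else 0)
      ≤ (1 - ((N + 1 : ℕ) : ℝ) ^ (-α)) / α := by
  induction N with
  | zero => simp [sum_range_succ, Nat.not_prime_zero, Nat.not_prime_one]
  | succ N ih =>
    rw [sum_range_succ]
    have h := step_bd α hα ((N + 1 : ℕ) : ℝ) (by positivity)
    have h' : (if (N + 2).Prime then ((N + 2 : ℕ) : ℝ) ^ (-α - 1) else 0)
        ≤ (((N + 1 : ℕ) : ℝ) ^ (-α) - (((N + 1 : ℕ) : ℝ) + 1) ^ (-α)) / α := by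
      refine le_trans ?_ h
      have e : ((N + 2 : ℕ) : ℝ) = ((N + 1 : ℕ) : ℝ) + 1 := by push_cast; ring
      rw [e]
      split_ifs
      · exact le_rfl
      · positivity
    have e : ((N + 1 + 1 : ℕ) : ℝ) = ((N + 1 : ℕ) : ℝ) + 1 := by push_cast; ring
    refine (add_le_add ih h').trans (le_of_eq ?_)
    rw [e]
    ring

lemma factor_bd (w : ℂ) (hw : ‖w‖ ≤ 3 / 4) : ‖(1 - w)⁻¹‖ ≤ Real.exp (w.re + 2 * ‖w‖ ^ 2) := by
  have hne : 1 - w ≠ 0 := by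
    intro h
    have : w = 1 := by linear_combination -h
    norm_num [this] at hw
  have h := Complex.norm_log_one_add_sub_self_le (z := -w) (by rw [norm_neg]; linarith)
  have h2 := (Complex.abs_re_le_norm _).trans h
  have h3 := (abs_le.1 h2).1
  simp only [sub_re, neg_re, norm_neg, log_re, ← sub_eq_add_neg] at h3
  have h4 : (1 - ‖w‖)⁻¹ ≤ 4 := by
    rw [inv_le_comm₀ (by linarith) (by norm_num)]; linarith
  have h5 := mul_le_mul_of_nonneg_left h4 (sq_nonneg ‖w‖)
  rw [norm_inv, ← Real.exp_log (norm_pos_iff.2 hne), ← Real.exp_neg, Real.exp_le_exp]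
  linarith

theorem zetaZ_bound (a b : ℤ) (hab : IsCoprime a b) (h2 : 2 ≤ |a - b|)
    (c : ℤ) (hc : c = a ∨ c = b) (z : ℝ) (hz : 2 ≤ z) (s : ℂ) (hσ : 1/2 < s.re) :
    ‖zetaZ a b c z s‖ ≤
      Real.exp (7 * (1 - z ^ (1 - 2 * s.re)) / (2 * s.re - 1)
        + |(a : ℝ) - (b : ℝ)| * (z ^ (-s.re) + 2 * ‖s‖ * (1 - z ^ (-s.re)))) := by
  have hne : a - b ≠ 0 := by intro h; simp [h] at h2
  have hneC : (a : ℂ) - b ≠ 0 := by exact_mod_cast hne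
  set r : ℂ := Complex.exp (2 * Real.pi * Complex.I * (c / ((a : ℂ) - b))) with hr
  have hrn : ‖r‖ = 1 := by
    have : r = Complex.exp (((2 * Real.pi * (c / ((a : ℝ) - b)) : ℝ) : ℂ) * I) := by
      rw [hr]; congr 1; push_cast; ring
    rw [this, norm_exp_ofReal_mul_I]
  have hom : ∀ p : ℕ, omegaP a b p ^ c = r ^ (Nat.count Nat.Prime p + 1) := by
    intro p
    rw [omegaP, hr, ← Complex.exp_int_mul, ← Complex.exp_nat_mul]
    congr 1; push_cast; ring
  have hr1 : r ≠ 1 := by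
    intro h
    rw [hr, Complex.exp_eq_one_iff] at h
    obtain ⟨n, hn⟩ := h
    have h3 : (c : ℂ) / ((a : ℂ) - b) = n := by
      have : (2 * Real.pi * Complex.I : ℂ) ≠ 0 := Complex.two_pi_I_ne_zero
      apply mul_left_cancel₀ this
      rw [hn]; ring
    rw [div_eq_iff hneC] at h3
    have h4 : c = n * (a - b) := by exact_mod_cast h3
    have hdc : (a - b) ∣ c := ⟨n, by rw [h4]; ring⟩
    have hda : (a - b) ∣ a := by
      rcases hc with rfl | rfl
      · exact hdc
      · have := dvd_add hdc (dvd_refl (a - c)); simpa using this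
    have hdb : (a - b) ∣ b := by
      have := dvd_sub hda (dvd_refl (a - b)); simpa using this
    have hu := Int.isUnit_iff_abs_eq.1 (hab.isUnit_of_dvd' hda hdb)
    omega
  have hrq : r ^ (a - b).natAbs = 1 := by
    have hz1 : r ^ (a - b) = 1 := by
      rw [hr, ← Complex.exp_int_mul, Complex.exp_eq_one_iff]
      refine ⟨c, ?_⟩
      push_cast
      field_simp
    rcases Int.natAbs_eq (a - b) with h | h
    · rw [h, zpow_natCast] at hz1; exact hz1
    · rw [h, zpow_neg, zpow_natCast, inv_eq_one] at hz1; exact hz1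
  set Q : ℝ := |(a : ℝ) - b| with hQ
  have hQq : (((a - b).natAbs : ℕ) : ℝ) = Q := by
    rw [Nat.cast_natAbs]; push_cast; rfl
  have hQ0 : 0 ≤ Q := abs_nonneg _
  set f : ℕ → ℂ := fun n => if n.Prime then r ^ (Nat.count Nat.Prime n + 1) else 0 with hf
  have hA : ∀ k, ‖∑ n ∈ range k, f n‖ ≤ Q := by
    intro k
    rw [hf, count_sum, norm_mul, hrn, one_mul, ← hQq]
    exact geom_bd r _ (Int.natAbs_pos.2 hne) hr1 hrq hrn _
  obtain ⟨N, hN⟩ : ∃ N, ⌊z⌋₊ = N + 1 := by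
    have : 2 ≤ ⌊z⌋₊ := Nat.le_floor (by exact_mod_cast hz)
    exact ⟨⌊z⌋₊ - 1, by omega⟩
  have hNz : ((N + 1 : ℕ) : ℝ) ≤ z := by rw [← hN]; exact Nat.floor_le (by linarith)
  have hN1 : (0 : ℝ) < ((N + 1 : ℕ) : ℝ) := by positivity
  have hset : primesUpTo z = (range (N + 2)).filter Nat.Prime := by
    ext p; simp [primesUpTo, hN]; omega
  have hσ0 : 0 < s.re := by linarith
  have hpn : ∀ p : ℕ, p.Prime → ‖(p : ℂ) ^ (-s)‖ = (p : ℝ) ^ (-s.re) := by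
    intro p hp
    rw [norm_natCast_cpow_of_pos hp.pos]; simp
  have hfac : ∀ p : ℕ, p.Prime → ‖(1 - (omegaP a b p) ^ c * (p : ℂ) ^ (-s))⁻¹‖ ≤
      Real.exp ((f p * (p : ℂ) ^ (-s)).re + 2 * (p : ℝ) ^ (-(2 * s.re - 1) - 1)) := by
    intro p hp
    have hfp : f p = r ^ (Nat.count Nat.Prime p + 1) := by simp [hf, hp]
    rw [hom, ← hfp]
    have hp0 : (0 : ℝ) < p := by exact_mod_cast hp.pos
    have hnorm : ‖f p * (p : ℂ) ^ (-s)‖ = (p : ℝ) ^ (-s.re) := by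
      rw [norm_mul, hpn p hp, hfp, norm_pow, hrn, one_pow, one_mul]
    have hsq : ((p : ℝ) ^ (-s.re)) ^ 2 = (p : ℝ) ^ (-(2 * s.re - 1) - 1) := by
      rw [← Real.rpow_natCast, ← Real.rpow_mul hp0.le]; congr 1; push_cast; ring
    have hsm : ((p : ℝ) ^ (-s.re)) ^ 2 ≤ 1 / 2 := by
      rw [hsq]
      have hp2 : (2 : ℝ) ≤ p := by exact_mod_cast hp.two_le
      calc (p : ℝ) ^ (-(2 * s.re - 1) - 1) ≤ (p : ℝ) ^ (-1 : ℝ) :=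
            Real.rpow_le_rpow_of_exponent_le (by linarith) (by linarith)
        _ = (p : ℝ)⁻¹ := Real.rpow_neg_one _
        _ ≤ 1 / 2 := by rw [one_div]; exact inv_anti₀ (by norm_num) hp2
    have := factor_bd (f p * (p : ℂ) ^ (-s)) (by rw [hnorm]; nlinarith)
    rwa [hnorm, hsq] at this
  have hprod : ‖zetaZ a b c z s‖ ≤ Real.exp ((∑ n ∈ range (N + 2), f n * (n : ℂ) ^ (-s)).re +
      2 * ∑ n ∈ range (N + 2), (if n.Prime then (n : ℝ) ^ (-(2 * s.re - 1) - 1) else 0)) := by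
    rw [zetaZ, norm_prod, hset]
    refine (prod_le_prod (fun _ _ => norm_nonneg _)
      (fun p hp => hfac p (mem_filter.1 hp).2)).trans (le_of_eq ?_)
    rw [← Real.exp_sum, sum_add_distrib, ← mul_sum, sum_filter, sum_filter, re_sum]
    congr 2
    apply sum_congr rfl
    intro n _
    split_ifs with h
    · rfl
    · simp [hf, h]
  refine hprod.trans (Real.exp_le_exp.2 ?_)
  have hab' := abel_bd f Q (by simp [hf, Nat.not_prime_zero]) s hσ0 hA N
  have hsq := sq_bd (2 * s.re - 1) (by linarith) N
  set M : ℝ := ((N + 1 : ℕ) : ℝ) with hM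
  have hM1 : 1 ≤ M := by rw [hM]; push_cast; linarith [(Nat.cast_nonneg N : (0:ℝ) ≤ N)]
  have hz0 : 0 < z := by linarith
  have hx1 : z ^ (-s.re) ≤ M ^ (-s.re) := Real.rpow_le_rpow_of_nonpos hN1 hNz (by linarith)
  have hx2 : z ^ (-(2 * s.re - 1)) ≤ M ^ (-(2 * s.re - 1)) :=
    Real.rpow_le_rpow_of_nonpos hN1 hNz (by linarith)
  have hx3 : M ^ (-s.re) ≤ 1 := Real.rpow_le_one_of_one_le_of_nonpos hM1 (by linarith)
  have hx4 : M ^ (-(2 * s.re - 1)) ≤ 1 := Real.rpow_le_one_of_one_le_of_nonpos hM1 (by linarith)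
  have hss : s.re ≤ ‖s‖ := Complex.re_le_norm s
  have hS : ‖∑ n ∈ range (N + 2), f n * (n : ℂ) ^ (-s)‖ ≤
      Q * (M ^ (-s.re) + ‖s‖ / s.re * (1 - M ^ (-s.re))) := by
    have t := norm_add_le (∑ n ∈ range (N + 2), f n * (n : ℂ) ^ (-s) -
      (∑ n ∈ range (N + 2), f n) * ((N + 1 : ℕ) : ℂ) ^ (-s))
      ((∑ n ∈ range (N + 2), f n) * ((N + 1 : ℕ) : ℂ) ^ (-s))
    rw [sub_add_cancel, norm_mul, norm_natCast_cpow_of_pos (Nat.succ_pos N), neg_re, ← hM] at t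
    have := mul_le_mul_of_nonneg_right (hA (N + 2)) (Real.rpow_nonneg hN1.le (-s.re))
    linarith
  have hcoef : ‖s‖ / s.re ≤ 2 * ‖s‖ := by
    rw [div_le_iff₀ hσ0]; nlinarith [norm_nonneg s]
  have hmain1 : M ^ (-s.re) + ‖s‖ / s.re * (1 - M ^ (-s.re)) ≤
      z ^ (-s.re) + 2 * ‖s‖ * (1 - z ^ (-s.re)) := by
    have := mul_le_mul_of_nonneg_right hcoef (sub_nonneg.2 hx3)
    nlinarith
  have hmain1' := mul_le_mul_of_nonneg_left hmain1 hQ0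
  have hre := Complex.re_le_norm (∑ n ∈ range (N + 2), f n * (n : ℂ) ^ (-s))
  have hmain2 : 2 * ((1 - M ^ (-(2 * s.re - 1))) / (2 * s.re - 1)) ≤
      7 * (1 - z ^ (1 - 2 * s.re)) / (2 * s.re - 1) := by
    rw [← mul_div_assoc]
    have e : 1 - 2 * s.re = -(2 * s.re - 1) := by ring
    rw [e]
    apply div_le_div_of_nonneg_right _ (by linarith)
    linarith
  linarith
end

section
/- Let q be a nonzero integer and let p_m denote the m-th prime. Then for every real z ≥ 2 and every δ > 0, the set of positive real numbers τ satisfying max_{m : p_m ≤ z} ‖ τ·(log p_m)/(2π) − m/q ‖ < δ has positive lower density; that is, liminf_{T→∞} (1/T)·μ{τ ∈ [0,T] : max_{m : p_m ≤ z} ‖ τ·(log p_m)/(2π) − m/q ‖ < δ} > 0. -/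
open MeasureTheory Filter

/-- Distance from a real number to the nearest integer. -/
noncomputable def distNearestInt (x : ℝ) : ℝ := |x - round x|

theorem kpd_mean_exp (w : ℝ) (hw : w ≠ 0) :
    Tendsto (fun T : ℝ => (∫ t in (0:ℝ)..T, Complex.exp ((w * Complex.I) * t)) / (T : ℂ)) atTop
      (nhds 0) := by
  have hc : (w * Complex.I : ℂ) ≠ 0 := by simp [hw]
  have h1 : Tendsto (fun T : ℝ => (2 / |w|) / T) atTop (nhds 0) :=
    tendsto_const_nhds.div_atTop tendsto_id
  refine squeeze_zero_norm' ?_ h1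
  filter_upwards [eventually_gt_atTop 0] with T hT
  rw [integral_exp_mul_complex hc, norm_div, norm_div]
  have e : ‖(T : ℂ)‖ = T := by simp [abs_of_pos hT]
  rw [e]
  have e2 : ‖(w * Complex.I : ℂ)‖ = |w| := by simp
  rw [e2]
  gcongr
  refine (norm_sub_le _ _).trans ?_
  have h : ∀ x : ℝ, ‖Complex.exp (w * Complex.I * x)‖ = 1 := by
    intro x
    have : (w * Complex.I * x : ℂ) = ((w * x : ℝ) : ℂ) * Complex.I := by push_cast; ring
    rw [this, Complex.norm_exp_ofReal_mul_I]
  rw [h, h]; norm_num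

theorem kpd_expand (θ : ℝ) (k : ℕ) :
    (((2 + 2 * Real.cos θ) ^ k : ℝ) : ℂ) =
      ∑ j ∈ Finset.range (2 * k + 1), ((2 * k).choose j : ℂ) *
        Complex.exp (((j : ℂ) - k) * θ * Complex.I) := by
  have h1 : ((2 + 2 * Real.cos θ : ℝ) : ℂ) =
      Complex.exp (-(θ * Complex.I)) * (Complex.exp (θ * Complex.I) + 1) ^ 2 := by
    have h2 : Complex.exp (-(θ * Complex.I)) * Complex.exp (θ * Complex.I) = 1 := by
      rw [← Complex.exp_add]; simp
    have h3 : 2 * Complex.cos θ = Complex.exp (θ * Complex.I) + Complex.exp (-(θ * Complex.I)) := by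
      rw [Complex.two_cos]; ring_nf
    push_cast
    rw [h3]
    linear_combination (-Complex.exp (θ * Complex.I) - 2) * h2
  rw [Complex.ofReal_pow, h1, mul_pow, ← pow_mul, add_pow, Finset.mul_sum]
  refine Finset.sum_congr rfl fun j hj => ?_
  have : (((j : ℂ) - k) * θ * Complex.I) = k * (-(θ * Complex.I)) + j * (θ * Complex.I) := by ring
  rw [this, Complex.exp_add, Complex.exp_nat_mul, Complex.exp_nat_mul]
  ring

theorem kpd_mean {ι : Type} [Fintype ι] [DecidableEq ι] (l a : ι → ℝ)
    (hl : ∀ u v : ι → ℕ, ∑ i, (u i : ℝ) * l i = ∑ i, (v i : ℝ) * l i → u = v) (K : ι → ℕ) :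
    Tendsto (fun T : ℝ => (∫ t in (0:ℝ)..T, ∏ i, (2 + 2 * Real.cos (t * l i - a i)) ^ (K i)) / T)
      atTop (nhds (∏ i, ((K i).centralBinom : ℝ))) := by
  set c : (ι → ℕ) → ℂ := fun p => ∏ i, (((2 * K i).choose (p i) : ℂ) *
    Complex.exp (-((((p i : ℂ) - K i) * a i) * Complex.I))) with hcdef
  set w : (ι → ℕ) → ℝ := fun p => ∑ i, ((p i : ℝ) - K i) * l i with hwdef
  set P := Fintype.piFinset (fun i => Finset.range (2 * K i + 1)) with hP
  have hexp : ∀ t : ℝ, ((∏ i, (2 + 2 * Real.cos (t * l i - a i)) ^ (K i) : ℝ) : ℂ) =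
      ∑ p ∈ P, c p * Complex.exp ((w p * Complex.I) * t) := by
    intro t
    rw [Complex.ofReal_prod]
    simp_rw [kpd_expand]
    rw [Finset.prod_univ_sum]
    refine Finset.sum_congr rfl fun p hp => ?_
    have e1 : (w p * Complex.I) * (t : ℂ) = ∑ i, (((p i : ℂ) - K i) * l i * t) * Complex.I := by
      simp only [hwdef]; push_cast
      rw [Finset.sum_mul, Finset.sum_mul]
      exact Finset.sum_congr rfl fun i _ => by ring
    rw [e1, Complex.exp_sum, ← Finset.prod_mul_distrib]
    refine Finset.prod_congr rfl fun i _ => ?_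
    rw [mul_assoc (((2 * K i).choose (p i) : ℕ) : ℂ), ← Complex.exp_add]
    congr 2
    push_cast; ring
  have hKP : K ∈ P := by
    simp only [hP, Fintype.mem_piFinset, Finset.mem_range]; intro i; omega
  have hlim : ∀ p ∈ P, Tendsto (fun T : ℝ => c p *
      ((∫ t in (0:ℝ)..T, Complex.exp ((w p * Complex.I) * t)) / (T : ℂ))) atTop
      (nhds (if p = K then c p else 0)) := by
    intro p hp
    split_ifs with h
    · have hw0 : w p = 0 := by simp [hwdef, h]
      refine Tendsto.congr' ?_ tendsto_const_nhds
      filter_upwards [eventually_gt_atTop 0] with T hT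
      have : (T : ℂ) ≠ 0 := by exact_mod_cast hT.ne'
      simp [hw0, this]
    · have hw0 : w p ≠ 0 := by
        intro h0
        apply h
        apply hl
        simp only [hwdef, sub_mul, Finset.sum_sub_distrib] at h0
        linarith
      simpa using (kpd_mean_exp (w p) hw0).const_mul (c p)
  have hsum := tendsto_finsetSum P hlim
  rw [Finset.sum_ite_eq' , if_pos hKP] at hsum
  have hcK : c K = ((∏ i, ((K i).centralBinom : ℝ) : ℝ) : ℂ) := by
    simp [hcdef, Nat.centralBinom]
  rw [hcK] at hsum
  have hre := (Complex.continuous_re.tendsto _).comp hsum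
  rw [Complex.ofReal_re] at hre
  refine hre.congr fun T => ?_
  simp only [Function.comp]
  have : (∑ p ∈ P, c p * ((∫ t in (0:ℝ)..T, Complex.exp ((w p * Complex.I) * t)) / (T : ℂ))) =
     (((∫ t in (0:ℝ)..T, ∏ i, (2 + 2 * Real.cos (t * l i - a i)) ^ (K i)) / T : ℝ) : ℂ) := by
    rw [Complex.ofReal_div, ← intervalIntegral.integral_ofReal]
    simp_rw [hexp]
    rw [intervalIntegral.integral_finsetSum]
    · rw [Finset.sum_div]
      refine Finset.sum_congr rfl fun p _ => ?_
      rw [intervalIntegral.integral_const_mul]; ring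
    · intro p _
      apply Continuous.intervalIntegrable
      fun_prop
  rw [this, Complex.ofReal_re]

theorem kpd_choose (N : ℕ) (B : ℝ) (hB0 : 0 ≤ B) (hB : B < 4) :
    ∃ k : ℕ, (N : ℝ) * B ^ k < k.centralBinom := by
  have h := (tendsto_self_mul_const_pow_of_lt_one (r := B / 4) (by positivity) (by linarith)).const_mul
    ((N : ℝ) * 2)
  rw [mul_zero] at h
  obtain ⟨k, hk, hk1⟩ := ((h.eventually (gt_mem_nhds one_pos)).and (eventually_gt_atTop 0)).exists
  refine ⟨k, ?_⟩
  have h4 : (4 : ℝ) ^ k ≤ 2 * k * k.centralBinom := by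
    exact_mod_cast Nat.four_pow_le_two_mul_self_mul_centralBinom k hk1
  have hkr : (0 : ℝ) < k := by exact_mod_cast hk1
  have h5 : (N : ℝ) * B ^ k * (2 * k) < 4 ^ k := by
    rw [div_pow] at hk
    have : (N : ℝ) * B ^ k * (2 * k) = (N * 2 * (k * (B ^ k / 4 ^ k))) * 4 ^ k := by
      field_simp
    rw [this]
    have := pow_pos (four_pos (α := ℝ)) k
    nlinarith
  by_contra hcon
  push Not at hcon
  nlinarith

theorem kpd_dist (x δ : ℝ) (hδ : δ ≤ 1 / 2) (h0 : 0 < δ) (h : δ ≤ distNearestInt x) :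
    Real.cos (2 * Real.pi * x) ≤ Real.cos (2 * Real.pi * δ) := by
  have h1 : Real.cos (2 * Real.pi * x) = Real.cos (2 * Real.pi * distNearestInt x) := by
    have e : 2 * Real.pi * distNearestInt x = |2 * Real.pi * x - round x * (2 * Real.pi)| := by
      have : 2 * Real.pi * x - round x * (2 * Real.pi) = 2 * Real.pi * (x - round x) := by ring
      rw [this, abs_mul, abs_of_pos Real.two_pi_pos]; rfl
    rw [e, Real.cos_abs, Real.cos_sub_int_mul_two_pi]
  rw [h1]
  have h2 : distNearestInt x ≤ 1 / 2 := abs_sub_round x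
  have hp := Real.pi_pos
  apply Real.cos_le_cos_of_nonneg_of_le_pi
  · positivity
  · nlinarith
  · nlinarith

theorem kpd_indep {ι : Type} [Fintype ι] [DecidableEq ι] (p : ι → ℕ) (hp : ∀ i, (p i).Prime)
    (hinj : Function.Injective p) (u v : ι → ℕ)
    (h : ∑ i, (u i : ℝ) * Real.log (p i) = ∑ i, (v i : ℝ) * Real.log (p i)) : u = v := by
  have key : ∀ u : ι → ℕ, ∑ i, (u i : ℝ) * Real.log (p i) = Real.log ((∏ i, p i ^ u i : ℕ) : ℝ) := by
    intro u
    push_cast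
    rw [Real.log_prod]
    · simp [Real.log_pow]
    · intro i _
      have := (hp i).pos
      positivity
  have hpos : ∀ u : ι → ℕ, 0 < ∏ i, p i ^ u i := fun u =>
    Finset.prod_pos fun i _ => pow_pos (hp i).pos _
  rw [key, key] at h
  have h2 := Real.log_injOn_pos (Set.mem_Ioi.2 (by exact_mod_cast hpos u))
    (Set.mem_Ioi.2 (by exact_mod_cast hpos v)) h
  have h3 : ∏ i, p i ^ u i = ∏ i, p i ^ v i := by exact_mod_cast h2
  have hf : ∀ (u : ι → ℕ) (j : ι), (∏ i, p i ^ u i).factorization (p j) = u j := by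
    intro u j
    rw [Nat.factorization_prod (fun i _ => (pow_pos (hp i).pos _).ne')]
    simp only [Nat.factorization_pow, Finsupp.coe_finsetSum, Finset.sum_apply, Finsupp.smul_apply,
      (hp _).factorization, Finsupp.single_apply, hinj.eq_iff]
    simp
  funext j
  rw [← hf u j, h3, hf v j]

theorem kpd_main {ι : Type} [Fintype ι] [DecidableEq ι] (l a : ι → ℝ)
    (hl : ∀ u v : ι → ℕ, ∑ i, (u i : ℝ) * l i = ∑ i, (v i : ℝ) * l i → u = v)
    (S : Set ℝ) (hS : MeasurableSet S) (B : ℝ) (hB0 : 0 ≤ B) (hB : B < 4)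
    (hSB : ∀ t, t ∉ S → ∃ i, 2 + 2 * Real.cos (t * l i - a i) ≤ B) : 0 < lowerDens S := by
  obtain ⟨k, hk⟩ := kpd_choose (Fintype.card ι) B hB0 hB
  set C : ℝ := (k.centralBinom : ℝ) with hC
  have hCpos : 0 < C := by rw [hC]; exact_mod_cast Nat.centralBinom_pos k
  set F : (ι → ℕ) → ℝ → ℝ := fun K t => ∏ i, (2 + 2 * Real.cos (t * l i - a i)) ^ (K i) with hF
  have hFc : ∀ K, Continuous (F K) := by intro K; simp only [hF]; fun_prop
  have hg0 : ∀ t i, 0 ≤ 2 + 2 * Real.cos (t * l i - a i) := fun t i => by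
    linarith [Real.neg_one_le_cos (t * l i - a i)]
  have hg4 : ∀ t i, 2 + 2 * Real.cos (t * l i - a i) ≤ 4 := fun t i => by
    linarith [Real.cos_le_one (t * l i - a i)]
  have hF0 : ∀ K t, 0 ≤ F K t := fun K t => Finset.prod_nonneg fun i _ => pow_nonneg (hg0 t i) _
  set K1 : ι → ℕ := fun _ => k with hK1
  set K2 : ι → ι → ℕ := fun j => Function.update K1 j 0 with hK2
  have hsplit : ∀ j t, F K1 t = (2 + 2 * Real.cos (t * l j - a j)) ^ k * F (K2 j) t := by
    intro j t
    simp only [hF]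
    rw [← Finset.mul_prod_erase _ _ (Finset.mem_univ j), ← Finset.mul_prod_erase _ (fun i =>
      (2 + 2 * Real.cos (t * l i - a i)) ^ (K2 j i)) (Finset.mem_univ j)]
    have : ∏ i ∈ Finset.univ.erase j, (2 + 2 * Real.cos (t * l i - a i)) ^ (K2 j i) =
        ∏ i ∈ Finset.univ.erase j, (2 + 2 * Real.cos (t * l i - a i)) ^ (K1 i) := by
      refine Finset.prod_congr rfl fun i hi => ?_
      simp [hK2, Function.update_of_ne (Finset.ne_of_mem_erase hi)]
    rw [this]
    simp [hK2, hK1]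
  have hm1 : (∏ i, ((K1 i).centralBinom : ℝ)) = C ^ Fintype.card ι := by
    simp [hK1, hC]
  have hm2 : ∀ j, C * (∏ i, ((K2 j i).centralBinom : ℝ)) = C ^ Fintype.card ι := by
    intro j
    rw [← hm1, ← Finset.mul_prod_erase _ _ (Finset.mem_univ j), ← Finset.mul_prod_erase _ (fun i =>
      ((K1 i).centralBinom : ℝ)) (Finset.mem_univ j)]
    have : ∏ i ∈ Finset.univ.erase j, ((K2 j i).centralBinom : ℝ) =
        ∏ i ∈ Finset.univ.erase j, ((K1 i).centralBinom : ℝ) := by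
      refine Finset.prod_congr rfl fun i hi => ?_
      simp [hK2, Function.update_of_ne (Finset.ne_of_mem_erase hi)]
    rw [this]
    simp [hK2, hK1, hC]
  set U : ℝ → ℝ := fun t => F K1 t - ∑ j, B ^ k * F (K2 j) t with hU
  have hUc : Continuous U := by
    simp only [hU]
    exact (hFc _).sub (continuous_finsetSum _ fun j _ => continuous_const.mul (hFc _))
  set D : ℝ := 4 ^ (k * Fintype.card ι) with hD
  have hDpos : 0 < D := by positivity
  have hUle : ∀ t, U t ≤ S.indicator (fun _ => D) t := by
    intro t
    have hnn : ∀ j, 0 ≤ B ^ k * F (K2 j) t := fun j => mul_nonneg (pow_nonneg hB0 _) (hF0 _ _)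
    by_cases ht : t ∈ S
    · rw [Set.indicator_of_mem ht]
      have h1 : F K1 t ≤ D := by
        calc F K1 t ≤ ∏ i : ι, (4 : ℝ) ^ k :=
              Finset.prod_le_prod (fun i _ => pow_nonneg (hg0 t i) _)
                fun i _ => pow_le_pow_left₀ (hg0 t i) (hg4 t i) _
          _ = D := by simp [hD, pow_mul]
      have := Finset.sum_nonneg (s := Finset.univ) fun j _ => hnn j
      simp only [hU]; linarith
    · rw [Set.indicator_of_notMem ht]
      obtain ⟨j, hj⟩ := hSB t ht
      have h1 : F K1 t ≤ B ^ k * F (K2 j) t := by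
        rw [hsplit j]
        exact mul_le_mul_of_nonneg_right (pow_le_pow_left₀ (hg0 t j) hj _) (hF0 _ _)
      have := Finset.single_le_sum (s := Finset.univ) (fun j _ => hnn j) (Finset.mem_univ j)
      simp only [hU]; linarith
  set L : ℝ := C ^ Fintype.card ι - ∑ j, B ^ k * (∏ i, ((K2 j i).centralBinom : ℝ)) with hL
  have hLpos : 0 < L := by
    have : C * L = C ^ Fintype.card ι * (C - Fintype.card ι * B ^ k) := by
      rw [hL, mul_sub, Finset.mul_sum]
      have : ∀ j, C * (B ^ k * (∏ i, ((K2 j i).centralBinom : ℝ))) = B ^ k * C ^ Fintype.card ι := by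
        intro j; rw [← hm2 j]; ring
      simp only [this, Finset.sum_const, Finset.card_univ, nsmul_eq_mul]
      ring
    have h2 : 0 < C * L := by rw [this]; exact mul_pos (pow_pos hCpos _) (by linarith)
    exact pos_of_mul_pos_right h2 hCpos.le
  have hUlim : Tendsto (fun T : ℝ => (∫ t in (0:ℝ)..T, U t) / T) atTop (nhds L) := by
    have h1 := kpd_mean l a hl K1
    rw [hm1] at h1
    have h2 := tendsto_finsetSum Finset.univ fun j _ => (kpd_mean l a hl (K2 j)).const_mul (B ^ k)
    refine (h1.sub h2).congr fun T => ?_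
    simp only [hU]
    have hi : ∀ j, IntervalIntegrable (fun t => B ^ k * F (K2 j) t) volume 0 T :=
      fun j => (continuous_const.mul (hFc _)).intervalIntegrable _ _
    have hi2 : IntervalIntegrable (fun t => ∑ j, B ^ k * F (K2 j) t) volume 0 T :=
      (continuous_finsetSum _ fun j _ => continuous_const.mul (hFc _)).intervalIntegrable _ _
    rw [intervalIntegral.integral_sub ((hFc _).intervalIntegrable _ _) hi2,
      intervalIntegral.integral_finsetSum (fun j _ => hi j), sub_div, Finset.sum_div]
    congr 1
    refine Finset.sum_congr rfl fun j _ => ?_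
    rw [intervalIntegral.integral_const_mul, mul_div_assoc]
  have hbd : ∀ T : ℝ, 0 < T → (∫ t in (0:ℝ)..T, U t) ≤ D * (volume (S ∩ Set.Icc 0 T)).toReal := by
    intro T hT
    rw [intervalIntegral.integral_of_le hT.le, ← integral_Icc_eq_integral_Ioc]
    have hi : IntegrableOn (S.indicator fun _ => D) (Set.Icc 0 T) volume :=
      (integrable_const D).indicator hS
    calc ∫ t in Set.Icc 0 T, U t ≤ ∫ t in Set.Icc 0 T, S.indicator (fun _ => D) t :=
          integral_mono (hUc.integrableOn_Icc) hi hUle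
      _ = D * (volume (S ∩ Set.Icc 0 T)).toReal := by
          rw [integral_indicator hS, Measure.restrict_restrict hS, setIntegral_const, smul_eq_mul, mul_comm]
          rfl
  have hfin : L / 2 / D ≤ lowerDens S := by
    unfold lowerDens
    refine le_liminf_of_le ?_ ?_
    · refine IsBoundedUnder.isCoboundedUnder_ge ⟨1, ?_⟩
      rw [eventually_map]
      filter_upwards [eventually_gt_atTop 0] with T hT
      rw [div_le_one hT]
      have := measureReal_mono (μ := volume) (Set.inter_subset_right : S ∩ Set.Icc 0 T ⊆ _) (by simp)
      simpa [Measure.real, hT.le] using this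
    · filter_upwards [eventually_gt_atTop 0, hUlim.eventually (lt_mem_nhds (half_lt_self hLpos))]
        with T hT hT2
      rw [div_le_div_iff₀ hDpos hT]
      rw [lt_div_iff₀ hT] at hT2
      linarith [hbd T hT]
  exact lt_of_lt_of_le (by positivity) hfin

theorem kronecker_positive_density (q : ℤ) (hq : q ≠ 0) (z : ℝ) (hz : 2 ≤ z)
    (δ : ℝ) (hδ : 0 < δ) :
    0 < lowerDens {τ : ℝ | ∀ n : ℕ, (Nat.nth Nat.Prime n : ℝ) ≤ z →
      distNearestInt (τ * Real.log (Nat.nth Nat.Prime n) / (2 * Real.pi)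
        - ((n : ℝ) + 1) / (q : ℝ)) < δ} := by
  classical
  have hinj := Nat.nth_injective Nat.infinite_setOfPred_prime
  have hfin : Set.Finite {n : ℕ | (Nat.nth Nat.Prime n : ℝ) ≤ z} := by
    refine (Set.finite_Iic ⌊z⌋₊).subset fun n hn => ?_
    have h1 : n ≤ Nat.nth Nat.Prime n := (Nat.nth_strictMono Nat.infinite_setOfPred_prime).le_apply
    exact h1.trans (Nat.le_floor hn)
  haveI : Fintype {n : ℕ // (Nat.nth Nat.Prime n : ℝ) ≤ z} := hfin.fintype
  set d := min δ (1 / 2) with hd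
  have hd0 : 0 < d := by positivity
  have hd1 : d ≤ 1 / 2 := min_le_right _ _
  have hp := Real.pi_pos
  refine kpd_main (ι := {n : ℕ // (Nat.nth Nat.Prime n : ℝ) ≤ z})
    (fun i => Real.log (Nat.nth Nat.Prime i)) (fun i => 2 * Real.pi * (((i : ℕ) + 1) / (q : ℝ)))
    (fun u v h => kpd_indep (fun i : {n : ℕ // (Nat.nth Nat.Prime n : ℝ) ≤ z} => Nat.nth Nat.Prime i)
      (fun i => Nat.nth_mem_of_infinite Nat.infinite_setOfPred_prime _)
      (hinj.comp Subtype.val_injective) u v h) _ ?_ (2 + 2 * Real.cos (2 * Real.pi * d)) ?_ ?_ ?_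
  · have hm : Measurable distNearestInt := by
      have : distNearestInt = fun x : ℝ => min (Int.fract x) (1 - Int.fract x) := by
        funext x; exact abs_sub_round_eq_min x
      rw [this]; fun_prop
    simp only [Set.ofPred_forall]
    refine MeasurableSet.iInter fun n => MeasurableSet.iInter fun _ => ?_
    exact measurableSet_lt (hm.comp (by fun_prop)) measurable_const
  · linarith [Real.neg_one_le_cos (2 * Real.pi * d)]
  · have : Real.cos (2 * Real.pi * d) < Real.cos 0 :=
      Real.cos_lt_cos_of_nonneg_of_le_pi le_rfl (by nlinarith) (by positivity)
    rw [Real.cos_zero] at this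
    linarith
  · intro t ht
    simp only [Set.mem_ofPred_eq] at ht
    push Not at ht
    obtain ⟨n, hn, h⟩ := ht
    refine ⟨⟨n, hn⟩, ?_⟩
    have := kpd_dist _ d hd1 hd0 ((min_le_left _ _).trans h)
    have e : 2 * Real.pi * (t * Real.log (Nat.nth Nat.Prime n) / (2 * Real.pi)
        - ((n : ℝ) + 1) / (q : ℝ)) = t * Real.log (Nat.nth Nat.Prime n)
        - 2 * Real.pi * (((n : ℝ) + 1) / (q : ℝ)) := by
      field_simp
    rw [e] at this
    linarith
end
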